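/- Assume Δ>0, hypotheses (H2)–(H3), and let P_0 be a discrete distribution with finite support as described. Let λ∈(0,1/9), let ρ_n=Θ(n^{-λ}), and let α_n := γρ_n|ln ρ_n| with γ>0 fixed. Then lim_{n→∞} I(X*;Y|Φ)/m_n = min_{1≤k≤K+1} { I_{P_out}(E[X²·1{|X|≥v_k}], E[X²]) + ℙ(|X|≥v_k)/γ }, where X∼P_0 and the term k=K+1 reads I_{P_out}(0,E[X²]). -/

import Mathlib

open MeasureTheory ProbabilityTheory Real

noncomputable section

namespace GLM

/-- Standard Gaussian measure on ℝ. -/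
def stdG : Measure ℝ := gaussianReal 0 1

/-- `n` i.i.d. copies of a measure on ℝ. -/
def iid (n : ℕ) (μ : Measure ℝ) : Measure (Fin n → ℝ) := Measure.pi fun _ => μ

/-- The sparse prior `(1-ρ)δ₀ + ρ P₀`. -/
def sparsePrior (ρ : ℝ) (P0 : Measure ℝ) : Measure ℝ :=
  ENNReal.ofReal (1 - ρ) • Measure.dirac 0 + ENNReal.ofReal ρ • P0

/-- Second moment of a real measure. -/
def secondMoment (P : Measure ℝ) : ℝ := ∫ x, x ^ 2 ∂P

/-- The transition density `P_out(y|x)`. -/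
def Pout (Δ : ℝ) {kA : ℕ} (PA : Measure (Fin kA → ℝ)) (φ : ℝ → (Fin kA → ℝ) → ℝ)
    (y x : ℝ) : ℝ :=
  (Real.sqrt (2 * π * Δ))⁻¹ * ∫ a, Real.exp (-(y - φ x a) ^ 2 / (2 * Δ)) ∂PA

/-- Scalar channel mutual information `I_{P_out}(q, ρ')`. -/
def IPout (Δ : ℝ) {kA : ℕ} (PA : Measure (Fin kA → ℝ)) (φ : ℝ → (Fin kA → ℝ) → ℝ)
    (q ρ' : ℝ) : ℝ :=
  (∫ v, ∫ a, ∫ z,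
      Real.log (Pout Δ PA φ (φ (Real.sqrt ρ' * v) a + Real.sqrt Δ * z) (Real.sqrt ρ' * v))
      ∂stdG ∂PA ∂stdG)
  - ∫ v, ∫ w, ∫ a, ∫ z,
      Real.log (∫ w', Pout Δ PA φ
        (φ (Real.sqrt q * v + Real.sqrt (ρ' - q) * w) a + Real.sqrt Δ * z)
        (Real.sqrt q * v + Real.sqrt (ρ' - q) * w') ∂stdG) ∂stdG ∂PA ∂stdG ∂stdG

/-- `ψ_P(r)` for the scalar additive Gaussian channel with prior `P`. -/
def psiP (P : Measure ℝ) (r : ℝ) : ℝ :=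
  ∫ xs, ∫ z, Real.log (∫ x, Real.exp (r * xs * x + Real.sqrt r * z * x - r * x ^ 2 / 2) ∂P)
    ∂stdG ∂P

/-- `I_{P_{0,n}}(r)`. -/
def IP0 (ρ : ℝ) (P0 : Measure ℝ) (r : ℝ) : ℝ :=
  r * ρ * secondMoment P0 / 2 - psiP (sparsePrior ρ P0) r

/-- Replica symmetric potential. -/
def iRS (Δ : ℝ) {kA : ℕ} (PA : Measure (Fin kA → ℝ)) (φ : ℝ → (Fin kA → ℝ) → ℝ)
    (P0 : Measure ℝ) (α ρ q r : ℝ) : ℝ :=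
  (1 / α) * IP0 ρ P0 (α / ρ * r) + IPout Δ PA φ q (secondMoment P0)
    - r * (secondMoment P0 - q) / 2

/-- density of the observations given signal and matrix. -/
def pCond (Δ : ℝ) {kA : ℕ} (PA : Measure (Fin kA → ℝ)) (φ : ℝ → (Fin kA → ℝ) → ℝ)
    (n m : ℕ) (kn : ℝ) (Φ : Fin m → Fin n → ℝ) (x : Fin n → ℝ) (y : Fin m → ℝ) : ℝ :=
  ∏ μ, Pout Δ PA φ (y μ) ((∑ i, Φ μ i * x i) / Real.sqrt kn)

/-- marginal density of the observations given the matrix. -/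
def pMarg (Δ : ℝ) {kA : ℕ} (PA : Measure (Fin kA → ℝ)) (φ : ℝ → (Fin kA → ℝ) → ℝ)
    (n m : ℕ) (P : Measure ℝ) (kn : ℝ) (Φ : Fin m → Fin n → ℝ) (y : Fin m → ℝ) : ℝ :=
  ∫ x, pCond Δ PA φ n m kn Φ x y ∂(iid n P)

/-- The observations `Y`. -/
def Yobs (Δ : ℝ) {kA : ℕ} (φ : ℝ → (Fin kA → ℝ) → ℝ) (n m : ℕ) (kn : ℝ)
    (Φ : Fin m → Fin n → ℝ) (x : Fin n → ℝ) (a : Fin m → Fin kA → ℝ) (z : Fin m → ℝ) :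
    Fin m → ℝ :=
  fun μ => φ ((∑ i, Φ μ i * x i) / Real.sqrt kn) (a μ) + Real.sqrt Δ * z μ

/-- The conditional mutual information `I(X*;Y|Φ)`. -/
def MI (Δ : ℝ) {kA : ℕ} (PA : Measure (Fin kA → ℝ)) (φ : ℝ → (Fin kA → ℝ) → ℝ)
    (P0 : Measure ℝ) (ρ : ℝ) (n m : ℕ) : ℝ :=
  ∫ x, ∫ Φ, ∫ a, ∫ z,
    Real.log (pCond Δ PA φ n m (n * ρ) Φ x (Yobs Δ φ n m (n * ρ) Φ x a z)
      / pMarg Δ PA φ n m (sparsePrior ρ P0) (n * ρ) Φ (Yobs Δ φ n m (n * ρ) Φ x a z))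
    ∂(iid m stdG) ∂(Measure.pi fun _ : Fin m => PA) ∂(Measure.pi fun _ : Fin m => iid n stdG)
    ∂(iid n (sparsePrior ρ P0))

/-- The truncated second moment `E[X^2 * 1(|X| >= v)]`. -/
def truncSMge (P : Measure ℝ) (v : ℝ) : ℝ := ∫ x, if v ≤ |x| then x ^ 2 else 0 ∂P

/-- The tail probability `P(|X| >= v)`. -/
def tailProb (P : Measure ℝ) (v : ℝ) : ℝ := (P {x | v ≤ |x|}).toReal

/-!
Write `n ρ` for the expected number of nonzero coordinates; there are `m ≈ γ n ρ |log ρ|`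
observations.

*Lower bound.* Split the marginal likelihood at the true signal, with support `T`, according to the
set `A ⊆ T` of coordinates that a competing signal shares with it. The part belonging to `A` has
prior weight at most `ρ ^ |A|`, and its remaining factor, compared with the likelihood of the data
once the coordinates in `T \ A` are hidden, is a density ratio of mean at most one. Log-densities
concentrate by Chernoff's bound with a small exponent, and a union bound over the `2 ^ |T|` sets `A`
costs only `|T| ≈ n ρ = o(m)`. Hence `-E log p(Y)` is at least `m` times the minimum over `A` of an
entropy plus a price `|log ρ|` per revealed coordinate. The expected log-density is supermodular in
`A` and increases with the revealed energy, so the optimal `A` is an upper set for `|X|`, that is, a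
level set `{|X| ≥ v k}`, and its empirical energy and size concentrate.

*Upper bound.* For each `k`, reveal the coordinates with `|X i| ≥ v k`, whose entropy is about
`n ρ P(|X| ≥ v k) |log ρ| ≈ m P(|X| ≥ v k) / γ`. By Gibbs' inequality the contribution of the other
coordinates may be replaced by Gaussian noise of the same variance.
-/

open scoped ENNReal

instance : IsProbabilityMeasure stdG := by unfold stdG; infer_instance

instance (n : ℕ) (μ : Measure ℝ) [IsProbabilityMeasure μ] : IsProbabilityMeasure (iid n μ) := by
  unfold iid; infer_instance

lemma integral_prod_map_fst {Ω Ω' E : Type*} [MeasurableSpace Ω] [MeasurableSpace Ω']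
    [MeasurableSpace E] {P : Measure Ω} {N : Measure E} [SFinite P] [SFinite N] {g : Ω → Ω'}
    (hg : Measurable g) {F : Ω' × E → ℝ} (hF : Measurable F) :
    ∫ p, F (g p.1, p.2) ∂(P.prod N) = ∫ p, F p ∂((P.map g).prod N) := by
  have := Measure.map_prod_map P N hg measurable_id
  rw [Measure.map_id] at this
  rw [this, integral_map (hg.prodMap measurable_id).aemeasurable hF.aestronglyMeasurable]
  rfl

section Resampling

variable {ι : Type*} [DecidableEq ι] {X : ι → Type*} [∀ i, MeasurableSpace (X i)]

lemma measurable_piecewise_prod (S : Finset ι) :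
    Measurable fun p : (∀ i, X i) × (∀ i, X i) => S.piecewise p.1 p.2 := by
  refine measurable_pi_lambda _ fun i => ?_
  by_cases hi : i ∈ S
  · simp only [Finset.piecewise_eq_of_mem _ _ _ hi]; fun_prop
  · simp only [Finset.piecewise_eq_of_notMem _ _ _ hi]; fun_prop

variable [Fintype ι]

lemma measurePreserving_piecewise_pi (μ : ∀ i, Measure (X i)) [∀ i, IsProbabilityMeasure (μ i)]
    (S : Finset ι) : MeasurePreserving (fun p : (∀ i, X i) × (∀ i, X i) => S.piecewise p.1 p.2)
      ((Measure.pi μ).prod (Measure.pi μ)) (Measure.pi μ) := by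
  refine ⟨measurable_piecewise_prod S, (Measure.pi_eq fun s hs => ?_).symm⟩
  rw [Measure.map_apply (measurable_piecewise_prod S) (MeasurableSet.univ_pi hs)]
  have preimage_eq : (fun p : (∀ i, X i) × (∀ i, X i) => S.piecewise p.1 p.2) ⁻¹' Set.univ.pi s
      = (Set.univ.pi fun i => if i ∈ S then s i else Set.univ) ×ˢ
        (Set.univ.pi fun i => if i ∈ S then Set.univ else s i) := by
    ext p
    simp only [Set.mem_preimage, Set.mem_univ_pi, Set.mem_prod, ← forall_and]
    refine forall_congr' fun i => ?_
    by_cases hi : i ∈ S <;> simp [hi]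
  rw [preimage_eq, Measure.prod_prod, Measure.pi_pi, Measure.pi_pi, ← Finset.prod_mul_distrib]
  refine Finset.prod_congr rfl fun i _ => ?_
  by_cases hi : i ∈ S <;> simp [hi]

lemma lintegral_pi_eq_lintegral_piecewise (μ : ∀ i, Measure (X i))
    [∀ i, IsProbabilityMeasure (μ i)] (S : Finset ι) {f : (∀ i, X i) → ℝ≥0∞} (hf : Measurable f) :
    ∫⁻ r, f r ∂(Measure.pi μ)
      = ∫⁻ r, ∫⁻ r', f (S.piecewise r r') ∂(Measure.pi μ) ∂(Measure.pi μ) := by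
  rw [← (measurePreserving_piecewise_pi μ S).lintegral_comp hf]
  exact lintegral_prod _ (hf.comp (measurable_piecewise_prod S)).aemeasurable

end Resampling

section ProductDensity

variable {α : Type*} [MeasurableSpace α] {m : ℕ}

lemma lintegral_fin_prod_eq_prod {μ : Fin m → Measure α} [∀ i, SigmaFinite (μ i)]
    {f : Fin m → α → ℝ≥0∞} (hf : ∀ i, Measurable (f i)) :
    ∫⁻ ω, ∏ i, f i (ω i) ∂(Measure.pi μ) = ∏ i, ∫⁻ a, f i a ∂(μ i) := by
  induction m with
  | zero => simp
  | succ m ih =>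
    have hprod : Measurable fun ω : Fin m → α => ∏ i, f i.succ (ω i) :=
      Finset.measurable_prod _ fun i _ => (hf i.succ).comp (measurable_pi_apply i)
    rw [Fin.prod_univ_succ, ← ih fun i => hf i.succ,
      ← lintegral_prod_mul (hf 0).aemeasurable hprod.aemeasurable,
      ← ((measurePreserving_piFinSuccAbove μ 0).symm).lintegral_comp_emb
        (MeasurableEquiv.measurableEmbedding _)]
    simp only [MeasurableEquiv.piFinSuccAbove_symm_apply, Fin.insertNthEquiv, Fin.prod_univ_succ,
      Fin.insertNth_zero, Equiv.coe_fn_mk, Fin.cons_succ, Fin.zero_succAbove, cast_eq,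
      Fin.cons_zero]

lemma pi_withDensity_eq_withDensity_prod {μ : Fin m → Measure α} [∀ i, SigmaFinite (μ i)]
    {d : Fin m → α → ℝ≥0∞} (hd : ∀ i, Measurable (d i))
    [∀ i, SigmaFinite ((μ i).withDensity (d i))] :
    (Measure.pi fun i => (μ i).withDensity (d i))
      = (Measure.pi μ).withDensity fun ω => ∏ i, d i (ω i) := by
  refine Measure.pi_eq fun s hs => ?_
  have indicator_prod (ω : Fin m → α) : (Set.univ.pi s).indicator (fun ω => ∏ i, d i (ω i)) ω
      = ∏ i, (s i).indicator (d i) (ω i) := by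
    by_cases hω : ω ∈ Set.univ.pi s
    · rw [Set.indicator_of_mem hω]
      exact Finset.prod_congr rfl fun i _ => (Set.indicator_of_mem (hω i trivial) (d i)).symm
    · rw [Set.indicator_of_notMem hω]
      obtain ⟨i, hi⟩ : ∃ i, ω i ∉ s i := by simpa using hω
      exact (Finset.prod_eq_zero (Finset.mem_univ i) (Set.indicator_of_notMem hi (d i))).symm
  rw [withDensity_apply _ (MeasurableSet.univ_pi hs),
    ← lintegral_indicator (MeasurableSet.univ_pi hs)]
  simp only [indicator_prod]
  rw [lintegral_fin_prod_eq_prod fun i => (hd i).indicator (hs i)]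
  exact Finset.prod_congr rfl fun i _ => by
    rw [lintegral_indicator (hs i), withDensity_apply _ (hs i)]

end ProductDensity

section GaussianForms

/-- The centred Gaussian law of variance `q`, as the law of `√q w` with `w` standard Gaussian. -/
def gauss (q : ℝ) : Measure ℝ := stdG.map fun w => √q * w

instance (q : ℝ) : IsProbabilityMeasure (gauss q) :=
  Measure.isProbabilityMeasure_map (by fun_prop)

lemma gauss_eq_gaussianReal (q : ℝ) : gauss q = gaussianReal 0 q.toNNReal := by
  rw [gauss, stdG, gaussianReal_map_const_mul]
  congr 1
  · simp
  · ext
    rcases le_total 0 q with hq | hq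
    · simp [sq_sqrt hq, hq]
    · simp [sqrt_eq_zero_of_nonpos hq, hq]

lemma gauss_conv_gauss {q τ : ℝ} (hq : 0 ≤ q) (hτ : 0 ≤ τ) : gauss q ∗ gauss τ = gauss (q + τ) := by
  simp only [gauss_eq_gaussianReal, gaussianReal_conv_gaussianReal, add_zero]
  rw [Real.toNNReal_add hq hτ]

variable {n : ℕ}

/-- The part of the linear form with coefficients `c` carried by the coordinates in `S`. -/
def linOn (S : Finset (Fin n)) (c r : Fin n → ℝ) : ℝ := ∑ i ∈ S, c i * r i

@[fun_prop]
lemma measurable_linOn (S : Finset (Fin n)) {Ω : Type*} [MeasurableSpace Ω] {c r : Ω → Fin n → ℝ}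
    (hc : Measurable c) (hr : Measurable r) : Measurable fun ω => linOn S (c ω) (r ω) := by
  unfold linOn; fun_prop

lemma linOn_add_linOn_of_disjoint {S T : Finset (Fin n)} (hST : Disjoint S T) (c r : Fin n → ℝ) :
    linOn S c r + linOn T c r = linOn (S ∪ T) c r :=
  (Finset.sum_union hST).symm

lemma linOn_add_linOn_compl (S : Finset (Fin n)) (c r : Fin n → ℝ) :
    linOn S c r + linOn Sᶜ c r = linOn Finset.univ c r :=
  Finset.sum_add_sum_compl S _

lemma linOn_piecewise_of_subset {S T : Finset (Fin n)} (hST : S ⊆ T) (c r r' : Fin n → ℝ) :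
    linOn S c (T.piecewise r r') = linOn S c r :=
  Finset.sum_congr rfl fun i hi => by rw [Finset.piecewise_eq_of_mem _ _ _ (hST hi)]

lemma linOn_piecewise_of_disjoint {S T : Finset (Fin n)} (hST : Disjoint S T)
    (c r r' : Fin n → ℝ) : linOn S c (T.piecewise r r') = linOn S c r' :=
  Finset.sum_congr rfl fun i hi => by
    rw [Finset.piecewise_eq_of_notMem _ _ _ (Finset.disjoint_left.1 hST hi)]

lemma linOn_piecewise_of_support_subset {S : Finset (Fin n)} {c : Fin n → ℝ}
    (hc : ∀ i ∉ S, c i = 0) (r r' : Fin n → ℝ) :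
    linOn Finset.univ c (S.piecewise r r') = linOn Finset.univ c r :=
  Finset.sum_congr rfl fun i _ => by
    by_cases hi : i ∈ S <;> simp [hi, hc]

lemma iIndepFun_coeff_mul_iid_stdG (c : Fin n → ℝ) :
    iIndepFun (fun i r => c i * r i) (iid n stdG) :=
  iIndepFun_pi (X := fun i x => c i * x) fun _ => by fun_prop

lemma map_coeff_mul_iid_stdG (c : Fin n → ℝ) (i : Fin n) :
    (iid n stdG).map (fun r => c i * r i) = gaussianReal 0 (c i ^ 2).toNNReal := by
  have eval_law : (iid n stdG).map (fun r : Fin n → ℝ => r i) = stdG :=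
    (measurePreserving_eval (fun _ : Fin n => stdG) i).map_eq
  change (iid n stdG).map ((fun x => c i * x) ∘ fun r => r i) = _
  rw [← Measure.map_map (by fun_prop) (by fun_prop), eval_law, stdG, gaussianReal_map_const_mul,
    mul_zero, mul_one]
  congr 1
  exact NNReal.eq (Real.coe_toNNReal _ (sq_nonneg _)).symm

lemma map_linOn (S : Finset (Fin n)) (c : Fin n → ℝ) :
    (iid n stdG).map (linOn S c) = gauss (∑ i ∈ S, c i ^ 2) := by
  induction S using Finset.induction_on with
  | empty =>
    have : linOn ∅ c = fun _ => 0 := by ext; simp [linOn]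
    rw [this, Measure.map_const]
    simp [gauss]
  | insert j S hj ih =>
    have indep : IndepFun (linOn S c) (fun r => c j * r j) (iid n stdG) := by
      have := (iIndepFun_coeff_mul_iid_stdG c).indepFun_finsetSum_of_notMem (by fun_prop) hj
      convert this using 1
      ext r
      simp [linOn]
    rw [gauss_eq_gaussianReal] at ih
    have law := gaussianReal_add_gaussianReal_of_indepFun indep ih (map_coeff_mul_iid_stdG c j)
    have sum_eq : linOn (insert j S) c = linOn S c + fun r => c j * r j := by
      ext r
      simp [linOn, Finset.sum_insert hj, add_comm]
    rw [sum_eq, law, gauss_eq_gaussianReal, Finset.sum_insert hj, add_comm (c j ^ 2),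
      Real.toNNReal_add (Finset.sum_nonneg fun i _ => sq_nonneg _) (sq_nonneg _), add_zero]

lemma map_linOn_prodMk_linOn_of_disjoint {S T : Finset (Fin n)} (hST : Disjoint S T)
    (c : Fin n → ℝ) : (iid n stdG).map (fun r => (linOn S c r, linOn T c r))
      = (gauss (∑ i ∈ S, c i ^ 2)).prod (gauss (∑ i ∈ T, c i ^ 2)) := by
  have sum_coe (A : Finset (Fin n)) :
      linOn A c = (fun x : A → ℝ => ∑ i, x i) ∘ fun r i => c i * r i :=
    funext fun r => (Finset.sum_coe_sort A fun i => c i * r i).symm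
  have indep : IndepFun (linOn S c) (linOn T c) (iid n stdG) := by
    rw [sum_coe S, sum_coe T]
    exact ((iIndepFun_coeff_mul_iid_stdG c).indepFun_finset S T hST fun i => by fun_prop).comp
      (by fun_prop) (by fun_prop)
  rw [(indepFun_iff_map_prod_eq_prod_map_map (by fun_prop) (by fun_prop)).1 indep, map_linOn,
    map_linOn]

end GaussianForms

section ExponentialMoments

lemma exp_le_one_add_add_sq {t : ℝ} (ht : t ≤ 1) : exp t ≤ 1 + t + t ^ 2 := by
  rcases le_total (-1) t with h | h
  · have := (abs_le.1 (abs_exp_sub_one_sub_id_le (abs_le.2 ⟨h, ht⟩))).2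
    linarith
  · have : exp t ≤ 1 := exp_le_one_iff.2 (by linarith)
    nlinarith

variable {Ω : Type*} [MeasurableSpace Ω] {P : Measure Ω} [IsProbabilityMeasure P]

lemma lintegral_exp_mul_le_of_integral_eq_zero {X G : Ω → ℝ} {M s : ℝ} (hX : Integrable X P)
    (hmean : ∫ ω, X ω ∂P = 0) (hM : ∀ ω, X ω ≤ M) (hG : ∀ ω, |X ω| ≤ G ω)
    (hG2 : Integrable (fun ω => G ω ^ 2) P) (hs : 0 ≤ s) (hsM : s * M ≤ 1) :
    ∫⁻ ω, ENNReal.ofReal (exp (s * X ω)) ∂P ≤ ENNReal.ofReal (exp (s ^ 2 * ∫ ω, G ω ^ 2 ∂P)) := by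
  have pointwise (ω : Ω) : exp (s * X ω) ≤ 1 + s * X ω + s ^ 2 * G ω ^ 2 := by
    have h_exp := exp_le_one_add_add_sq ((mul_le_mul_of_nonneg_left (hM ω) hs).trans hsM)
    have h_sq : X ω ^ 2 ≤ G ω ^ 2 := sq_le_sq' (neg_le_of_abs_le (hG ω)) (le_of_abs_le (hG ω))
    nlinarith [mul_le_mul_of_nonneg_left h_sq (sq_nonneg s)]
  have int_lin : Integrable (fun ω => 1 + s * X ω) P := (integrable_const _).add (hX.const_mul _)
  have int_quad : Integrable (fun ω => 1 + s * X ω + s ^ 2 * G ω ^ 2) P :=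
    int_lin.add (hG2.const_mul _)
  calc ∫⁻ ω, ENNReal.ofReal (exp (s * X ω)) ∂P
      ≤ ∫⁻ ω, ENNReal.ofReal (1 + s * X ω + s ^ 2 * G ω ^ 2) ∂P :=
        lintegral_mono fun ω => ENNReal.ofReal_le_ofReal (pointwise ω)
    _ = ENNReal.ofReal (∫ ω, (1 + s * X ω + s ^ 2 * G ω ^ 2) ∂P) :=
        (ofReal_integral_eq_lintegral_ofReal int_quad
          (.of_forall fun ω => (exp_pos _).le.trans (pointwise ω))).symm
    _ = ENNReal.ofReal (1 + s ^ 2 * ∫ ω, G ω ^ 2 ∂P) := by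
        rw [integral_add int_lin (hG2.const_mul _),
          integral_add (integrable_const _) (hX.const_mul _), integral_const_mul,
          integral_const_mul, hmean]
        simp
    _ ≤ ENNReal.ofReal (exp (s ^ 2 * ∫ ω, G ω ^ 2 ∂P)) :=
        ENNReal.ofReal_le_ofReal (by linarith [add_one_le_exp (s ^ 2 * ∫ ω, G ω ^ 2 ∂P)])

lemma integral_le_log_of_lintegral_exp_le {X : Ω → ℝ} (hX : Integrable X P) {N : ℝ} (hN : 0 < N)
    (h : ∫⁻ ω, ENNReal.ofReal (exp (X ω)) ∂P ≤ ENNReal.ofReal N) : ∫ ω, X ω ∂P ≤ log N := by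
  have int_exp : Integrable (fun ω => exp (X ω)) P := by
    refine ⟨continuous_exp.comp_aestronglyMeasurable hX.1, ?_⟩
    rw [hasFiniteIntegral_iff_ofReal (.of_forall fun ω => (exp_pos _).le)]
    exact h.trans_lt ENNReal.ofReal_lt_top
  rw [← ofReal_integral_eq_lintegral_ofReal int_exp (.of_forall fun ω => (exp_pos _).le),
    ENNReal.ofReal_le_ofReal_iff hN.le] at h
  have jensen : exp (∫ ω, X ω ∂P) ≤ ∫ ω, exp (X ω) ∂P :=
    convexOn_exp.map_integral_le continuousOn_exp isClosed_univ (by simp) hX int_exp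
  exact (le_log_iff_exp_le hN).2 (jensen.trans h)

end ExponentialMoments

/-- A scalar channel with real input: the output `out s e` at input `s`, driven by the noise `e`,
has a positive Lebesgue density `dens · s`. The bound `dens ≤ exp logSup` together with the
square-integrable `envelope`, which controls `log dens` at the outputs of the channel uniformly in
both inputs, gives the integrability and the exponential moments of log-likelihoods. -/
structure Channel (E : Type*) [MeasurableSpace E] where
  noise : Measure E
  out : ℝ → E → ℝ
  dens : ℝ → ℝ → ℝ
  logSup : ℝ
  envelope : E → ℝ
  isProbabilityMeasure_noise : IsProbabilityMeasure noise
  measurable_out : Measurable fun p : ℝ × E => out p.1 p.2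
  continuous_out : ∀ e, Continuous fun s => out s e
  continuous_dens : Continuous fun p : ℝ × ℝ => dens p.1 p.2
  dens_pos : ∀ y s, 0 < dens y s
  lintegral_out : ∀ (s : ℝ) {f : ℝ → ℝ≥0∞}, Measurable f →
    ∫⁻ e, f (out s e) ∂noise = ∫⁻ y, f y * ENNReal.ofReal (dens y s)
  dens_le : ∀ y s, dens y s ≤ exp logSup
  exp_neg_envelope_le : ∀ s e x, exp (-envelope e) ≤ dens (out s e) x
  logSup_le_envelope : ∀ e, logSup ≤ envelope e
  memLp_envelope : MemLp envelope 2 noise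

namespace Channel

variable {E : Type*} [MeasurableSpace E] (W : Channel E)

instance : IsProbabilityMeasure W.noise := W.isProbabilityMeasure_noise

section SmoothedDensity

/-- The output density at `y` when the input is `u + √τ w` with `w` standard Gaussian. -/
def smoothDens (y u τ : ℝ) : ℝ := ∫ w, W.dens y (u + √τ * w) ∂stdG

lemma integrable_of_measurable_comp_dens {P : Measure ℝ} [IsProbabilityMeasure P] {g : ℝ → ℝ}
    (hg : Measurable g) (y : ℝ) : Integrable (fun w => W.dens y (g w)) P := by
  refine Integrable.of_bound (C := exp W.logSup)
    (W.continuous_dens.measurable.comp (measurable_const.prodMk hg)).aestronglyMeasurable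
    (.of_forall fun w => ?_)
  rw [norm_of_nonneg (W.dens_pos _ _).le]
  exact W.dens_le _ _

lemma integrable_dens_affine (y u τ : ℝ) : Integrable (fun w => W.dens y (u + √τ * w)) stdG :=
  W.integrable_of_measurable_comp_dens (by fun_prop) y

lemma smoothDens_zero (y u : ℝ) : W.smoothDens y u 0 = W.dens y u := by
  simp [smoothDens]

lemma smoothDens_le (y u τ : ℝ) : W.smoothDens y u τ ≤ exp W.logSup := by
  simpa [smoothDens] using integral_mono (W.integrable_dens_affine y u τ) (integrable_const _)
    fun w => W.dens_le y (u + √τ * w)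

lemma exp_neg_envelope_le_smoothDens (s : ℝ) (e : E) (u τ : ℝ) :
    exp (-W.envelope e) ≤ W.smoothDens (W.out s e) u τ := by
  simpa [smoothDens] using integral_mono (integrable_const _)
    (W.integrable_dens_affine (W.out s e) u τ) fun w => W.exp_neg_envelope_le s e (u + √τ * w)

lemma smoothDens_pos (y u τ : ℝ) : 0 < W.smoothDens y u τ := by
  refine (integral_pos_iff_support_of_nonneg (fun w => (W.dens_pos _ _).le)
    (W.integrable_dens_affine y u τ)).2 ?_
  have : Function.support (fun w => W.dens y (u + √τ * w)) = Set.univ :=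
    Set.eq_univ_of_forall fun w => (W.dens_pos _ _).ne'
  simp [this]

lemma continuous_smoothDens :
    Continuous fun p : ℝ × ℝ × ℝ => W.smoothDens p.1 p.2.1 p.2.2 := by
  unfold smoothDens
  refine continuous_of_dominated (bound := fun _ => exp W.logSup)
    (fun p => (W.integrable_dens_affine _ _ _).aestronglyMeasurable)
    (fun p => .of_forall fun w => ?_) (integrable_const _)
    (.of_forall fun w => W.continuous_dens.comp (continuous_fst.prodMk (by fun_prop)))
  rw [norm_of_nonneg (W.dens_pos _ _).le]
  exact W.dens_le _ _

lemma log_smoothDens_le (y u τ : ℝ) : log (W.smoothDens y u τ) ≤ W.logSup :=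
  (log_le_iff_le_exp (W.smoothDens_pos y u τ)).2 (W.smoothDens_le y u τ)

lemma abs_log_smoothDens_out_le (s : ℝ) (e : E) (u τ : ℝ) :
    |log (W.smoothDens (W.out s e) u τ)| ≤ W.envelope e :=
  abs_le.2 ⟨(le_log_iff_exp_le (W.smoothDens_pos _ _ _)).2
      (W.exp_neg_envelope_le_smoothDens s e u τ),
    (W.log_smoothDens_le _ _ _).trans (W.logSup_le_envelope e)⟩

variable {Ω : Type*} [MeasurableSpace Ω]

lemma measurable_ofReal_dens {f g : Ω → ℝ} (hf : Measurable f) (hg : Measurable g) :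
    Measurable fun ω => ENNReal.ofReal (W.dens (f ω) (g ω)) :=
  (W.continuous_dens.measurable.comp (hf.prodMk hg)).ennreal_ofReal

lemma measurable_smoothDens {f g k : Ω → ℝ} (hf : Measurable f) (hg : Measurable g)
    (hk : Measurable k) : Measurable fun ω => W.smoothDens (f ω) (g ω) (k ω) :=
  W.continuous_smoothDens.measurable.comp (hf.prodMk (hg.prodMk hk))

lemma measurable_out_comp {s : Ω → ℝ} {e : Ω → E} (hs : Measurable s) (he : Measurable e) :
    Measurable fun ω => W.out (s ω) (e ω) :=
  W.measurable_out.comp (hs.prodMk he)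

lemma ofReal_smoothDens (y u τ : ℝ) : ENNReal.ofReal (W.smoothDens y u τ)
    = ∫⁻ t, ENNReal.ofReal (W.dens y (u + t)) ∂(gauss τ) := by
  rw [gauss, lintegral_map (W.measurable_ofReal_dens measurable_const (by fun_prop)) (by fun_prop),
    smoothDens, ofReal_integral_eq_lintegral_ofReal (W.integrable_dens_affine y u τ)
      (.of_forall fun w => (W.dens_pos _ _).le)]

lemma lintegral_smoothDens_gauss (y u : ℝ) {τ δ : ℝ} (hτ : 0 ≤ τ) (hδ : 0 ≤ δ) :
    ∫⁻ t, ENNReal.ofReal (W.smoothDens y (u + t) τ) ∂(gauss δ)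
      = ENNReal.ofReal (W.smoothDens y u (δ + τ)) := by
  simp only [W.ofReal_smoothDens]
  rw [← gauss_conv_gauss hδ hτ,
    Measure.lintegral_conv (W.measurable_ofReal_dens measurable_const (by fun_prop))]
  simp only [add_assoc]

lemma lintegral_ofReal_dens (s : ℝ) : ∫⁻ y, ENNReal.ofReal (W.dens y s) = 1 := by
  simpa using (W.lintegral_out s (f := fun _ => 1) measurable_const).symm

lemma lintegral_ofReal_smoothDens (u τ : ℝ) :
    ∫⁻ y, ENNReal.ofReal (W.smoothDens y u τ) = 1 := by
  simp only [W.ofReal_smoothDens]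
  rw [lintegral_lintegral_swap
    (W.measurable_ofReal_dens measurable_fst (by fun_prop)).aemeasurable]
  simp [W.lintegral_ofReal_dens]

end SmoothedDensity

section ExpectedLogDensity

lemma integrable_envelope : Integrable W.envelope W.noise :=
  W.memLp_envelope.integrable one_le_two

lemma integrable_envelope_snd {Ω : Type*} [MeasurableSpace Ω] {P : Measure Ω}
    [IsProbabilityMeasure P] : Integrable (fun p : Ω × E => W.envelope p.2) (P.prod W.noise) :=
  measurePreserving_snd.integrable_comp_of_integrable W.integrable_envelope

lemma integral_envelope_snd {Ω : Type*} [MeasurableSpace Ω] {P : Measure Ω}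
    [IsProbabilityMeasure P] :
    ∫ p : Ω × E, W.envelope p.2 ∂(P.prod W.noise) = ∫ e, W.envelope e ∂W.noise := by
  simp [integral_fun_snd]

variable {Ω : Type*} [MeasurableSpace Ω]

lemma measurable_log_smoothDens_out {V U τ : Ω → ℝ} {e : Ω → E} (hV : Measurable V)
    (hU : Measurable U) (hτ : Measurable τ) (he : Measurable e) :
    Measurable fun ω => log (W.smoothDens (W.out (V ω) (e ω)) (U ω) (τ ω)) :=
  (W.measurable_smoothDens (W.measurable_out_comp hV he) hU hτ).log

lemma integrable_log_smoothDens_out {P : Measure Ω} [IsProbabilityMeasure P] {V U : Ω → ℝ}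
    (hV : Measurable V) (hU : Measurable U) (τ : ℝ) :
    Integrable (fun p : Ω × E => log (W.smoothDens (W.out (V p.1) p.2) (U p.1) τ))
      (P.prod W.noise) :=
  W.integrable_envelope_snd.mono'
    (W.measurable_log_smoothDens_out (by fun_prop) (by fun_prop) (by fun_prop)
      (by fun_prop)).aestronglyMeasurable
    (.of_forall fun _ => W.abs_log_smoothDens_out_le _ _ _ _)

/-- The expected log-density of the output at input `√q v + √τ w`, for independent standard
Gaussians `v` and `w`, when the density is computed given `v` as if the variance of the unknown part
of the input were `τ'`. -/
def expLog (q τ τ' : ℝ) : ℝ :=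
  ∫ p, log (W.smoothDens (W.out (√q * p.1.1 + √τ * p.1.2) p.2) (√q * p.1.1) τ')
    ∂((stdG.prod stdG).prod W.noise)

lemma abs_expLog_le (q τ τ' : ℝ) : |W.expLog q τ τ'| ≤ ∫ e, W.envelope e ∂W.noise := by
  rw [← W.integral_envelope_snd (P := stdG.prod stdG), ← Real.norm_eq_abs]
  exact norm_integral_le_of_norm_le W.integrable_envelope_snd
    (.of_forall fun p => W.abs_log_smoothDens_out_le _ _ _ _)

lemma continuous_expLog : Continuous fun p : ℝ × ℝ × ℝ => W.expLog p.1 p.2.1 p.2.2 := by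
  unfold expLog
  refine continuous_of_dominated (bound := fun p => W.envelope p.2) (fun q => ?_)
    (fun q => .of_forall fun p => W.abs_log_smoothDens_out_le _ _ _ _) W.integrable_envelope_snd
    (.of_forall fun p => Continuous.log ?_ fun q => (W.smoothDens_pos _ _ _).ne')
  · exact (W.measurable_log_smoothDens_out (by fun_prop) (by fun_prop) (by fun_prop)
      (by fun_prop)).aestronglyMeasurable
  · exact W.continuous_smoothDens.comp (((W.continuous_out p.2).comp (by fun_prop)).prodMk
      (by fun_prop : Continuous fun q : ℝ × ℝ × ℝ => (√q.1 * p.1.1, q.2.2)))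

lemma integral_log_smoothDens_out_eq_expLog {P : Measure Ω} [IsProbabilityMeasure P] {U T : Ω → ℝ}
    (hU : Measurable U) (hT : Measurable T) {q τ : ℝ}
    (hlaw : P.map (fun ω => (U ω, T ω)) = (gauss q).prod (gauss τ)) (τ' : ℝ) :
    ∫ p, log (W.smoothDens (W.out (U p.1 + T p.1) p.2) (U p.1) τ') ∂(P.prod W.noise)
      = W.expLog q τ τ' := by
  let F : (ℝ × ℝ) × E → ℝ := fun p => log (W.smoothDens (W.out (p.1.1 + p.1.2) p.2) p.1.1 τ')
  have hF : Measurable F := W.measurable_log_smoothDens_out (by fun_prop) (by fun_prop)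
    (by fun_prop) (by fun_prop)
  calc ∫ p, F ((U p.1, T p.1), p.2) ∂(P.prod W.noise)
      = ∫ p, F p ∂(((gauss q).prod (gauss τ)).prod W.noise) := by
        rw [integral_prod_map_fst (hU.prodMk hT) hF, hlaw]
    _ = ∫ p, F (Prod.map (fun v => √q * v) (fun w => √τ * w) p.1, p.2)
          ∂((stdG.prod stdG).prod W.noise) := by
        rw [integral_prod_map_fst (by fun_prop) hF, gauss, gauss,
          Measure.map_prod_map _ _ (by fun_prop) (by fun_prop)]

end ExpectedLogDensity

section Rows

variable {n : ℕ}

/-- The law of one row of the sensing matrix together with the channel noise acting on it. -/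
def rowLaw (n : ℕ) : Measure ((Fin n → ℝ) × E) := (iid n stdG).prod W.noise

instance (n : ℕ) : IsProbabilityMeasure (W.rowLaw n) := by unfold rowLaw; infer_instance

/-- The output at the row `r` of the sensing matrix when the signal is `c`. -/
def rowOut (c : Fin n → ℝ) (p : (Fin n → ℝ) × E) : ℝ := W.out (linOn Finset.univ c p.1) p.2

/-- The output density at the signal `c` when only the coordinates in `S` of the row `r` are known,
and the remaining ones contribute a Gaussian of variance `τ` to the input. -/
def rowDens (S : Finset (Fin n)) (c : Fin n → ℝ) (τ y : ℝ) (r : Fin n → ℝ) : ℝ :=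
  W.smoothDens y (linOn S c r) τ

/-- The conditional density of the output at the signal `c` given the coordinates in `S` of the row
`r`. -/
def condDens (S : Finset (Fin n)) (c : Fin n → ℝ) (y : ℝ) (r : Fin n → ℝ) : ℝ :=
  W.rowDens S c (∑ i ∈ Sᶜ, c i ^ 2) y r

lemma rowDens_pos (S : Finset (Fin n)) (c : Fin n → ℝ) (τ y : ℝ) (r : Fin n → ℝ) :
    0 < W.rowDens S c τ y r := W.smoothDens_pos _ _ _

lemma condDens_pos (S : Finset (Fin n)) (c : Fin n → ℝ) (y : ℝ) (r : Fin n → ℝ) :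
    0 < W.condDens S c y r := W.rowDens_pos _ _ _ _ _

@[fun_prop]
lemma measurable_rowOut (c : Fin n → ℝ) : Measurable (W.rowOut c) :=
  W.measurable_out_comp (by fun_prop) (by fun_prop)

lemma measurable_rowDens (S : Finset (Fin n)) (τ : ℝ) {Ω : Type*} [MeasurableSpace Ω] {y : Ω → ℝ}
    {c r : Ω → Fin n → ℝ} (hc : Measurable c) (hy : Measurable y) (hr : Measurable r) :
    Measurable fun ω => W.rowDens S (c ω) τ (y ω) (r ω) :=
  W.measurable_smoothDens hy (by fun_prop) (by fun_prop)

lemma integrable_log_rowDens (S : Finset (Fin n)) (c x : Fin n → ℝ) (τ : ℝ) :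
    Integrable (fun p => log (W.rowDens S c τ (W.rowOut x p) p.1)) (W.rowLaw n) :=
  W.integrable_log_smoothDens_out (by fun_prop) (by fun_prop) τ

lemma integral_log_rowDens (S : Finset (Fin n)) (c : Fin n → ℝ) (τ : ℝ) :
    ∫ p, log (W.rowDens S c τ (W.rowOut c p) p.1) ∂(W.rowLaw n)
      = W.expLog (∑ i ∈ S, c i ^ 2) (∑ i ∈ Sᶜ, c i ^ 2) τ := by
  simp only [rowDens, rowOut, ← linOn_add_linOn_compl S c]
  exact W.integral_log_smoothDens_out_eq_expLog (by fun_prop) (by fun_prop)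
    (map_linOn_prodMk_linOn_of_disjoint disjoint_compl_right c) τ

lemma lintegral_rowDens_piecewise (S T : Finset (Fin n)) (c : Fin n → ℝ) {τ : ℝ} (hτ : 0 ≤ τ)
    (y : ℝ) (r : Fin n → ℝ) :
    ∫⁻ r', ENNReal.ofReal (W.rowDens T c τ y (S.piecewise r r')) ∂(iid n stdG)
      = ENNReal.ofReal (W.rowDens (S ∩ T) c (∑ i ∈ T \ S, c i ^ 2 + τ) y r) := by
  have hsplit (r' : Fin n → ℝ) : linOn T c (S.piecewise r r')
      = linOn (S ∩ T) c r + linOn (T \ S) c r' := by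
    rw [← linOn_piecewise_of_subset Finset.inter_subset_left c r r',
      ← linOn_piecewise_of_disjoint Finset.sdiff_disjoint c r r',
      linOn_add_linOn_of_disjoint (by grind [Finset.disjoint_left]), Finset.inter_comm,
      Finset.union_comm, Finset.sdiff_union_inter]
  have hm : Measurable fun t => ENNReal.ofReal (W.smoothDens y (linOn (S ∩ T) c r + t) τ) :=
    (W.measurable_smoothDens (by fun_prop) (by fun_prop) (by fun_prop)).ennreal_ofReal
  simp only [rowDens, hsplit]
  rw [← W.lintegral_smoothDens_gauss y _ hτ (Finset.sum_nonneg fun i _ => sq_nonneg (c i)),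
    ← map_linOn, lintegral_map hm (by fun_prop)]

lemma lintegral_rowLaw_comp_rowOut (c : Fin n → ℝ) {f : (Fin n → ℝ) → ℝ → ℝ≥0∞}
    (hf : Measurable (Function.uncurry f)) :
    ∫⁻ p, f p.1 (W.rowOut c p) ∂(W.rowLaw n)
      = ∫⁻ r, (∫⁻ y, f r y * ENNReal.ofReal (W.rowDens Finset.univ c 0 y r)) ∂(iid n stdG) := by
  rw [rowLaw, lintegral_prod (fun p => f p.1 (W.rowOut c p)) (hf.comp
    (measurable_fst.prodMk (W.measurable_rowOut c))).aemeasurable]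
  simp only [rowOut, rowDens, W.smoothDens_zero]
  exact lintegral_congr fun r => W.lintegral_out _ hf.of_uncurry_left

lemma lintegral_comp_rowOut_of_forall_piecewise (S : Finset (Fin n)) (c : Fin n → ℝ)
    {f : (Fin n → ℝ) → ℝ → ℝ≥0∞} (hf : Measurable (Function.uncurry f))
    (hS : ∀ r r' y, f (S.piecewise r r') y = f r y) :
    ∫⁻ p, f p.1 (W.rowOut c p) ∂(W.rowLaw n)
      = ∫⁻ r, (∫⁻ y, f r y * ENNReal.ofReal (W.condDens S c y r))
          ∂(iid n stdG) := by
  have hd : Measurable fun p : (Fin n → ℝ) × ℝ =>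
      ENNReal.ofReal (W.rowDens Finset.univ c 0 p.2 p.1) :=
    (W.measurable_rowDens _ _ measurable_const measurable_snd measurable_fst).ennreal_ofReal
  rw [W.lintegral_rowLaw_comp_rowOut c hf, iid, lintegral_pi_eq_lintegral_piecewise _ S
    (Measurable.lintegral_prod_right (hf.mul hd))]
  refine lintegral_congr fun r => ?_
  simp only [hS]
  rw [lintegral_lintegral_swap]
  · refine lintegral_congr fun y => ?_
    have hdy : Measurable fun r' =>
        ENNReal.ofReal (W.rowDens Finset.univ c 0 y (S.piecewise r r')) :=
      hd.comp (((measurable_piecewise_prod S).comp measurable_prodMk_left).prodMk measurable_const)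
    rw [lintegral_const_mul _ hdy]
    have := W.lintegral_rowDens_piecewise S Finset.univ c le_rfl y r
    rw [Finset.inter_univ, ← Finset.compl_eq_univ_sdiff, add_zero] at this
    exact congrArg _ this
  · exact ((hf.of_uncurry_left.comp measurable_snd).mul (hd.comp
      (((measurable_piecewise_prod S).comp (measurable_prodMk_left.comp measurable_fst)).prodMk
        measurable_snd))).aemeasurable

lemma lintegral_div_rowDens (S : Finset (Fin n)) (c : Fin n → ℝ)
    {g : (Fin n → ℝ) → ℝ → ℝ≥0∞} (hg : Measurable (Function.uncurry g))
    (hS : ∀ r r' y, g (S.piecewise r r') y = g r y) :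
    ∫⁻ p, g p.1 (W.rowOut c p)
        / ENNReal.ofReal (W.condDens S c (W.rowOut c p) p.1) ∂(W.rowLaw n)
      = ∫⁻ r, (∫⁻ y, g r y) ∂(iid n stdG) := by
  have hd : Measurable fun p : (Fin n → ℝ) × ℝ =>
      ENNReal.ofReal (W.condDens S c p.2 p.1) :=
    (W.measurable_rowDens _ _ measurable_const measurable_snd measurable_fst).ennreal_ofReal
  rw [W.lintegral_comp_rowOut_of_forall_piecewise S c (f := fun r y => g r y
    / ENNReal.ofReal (W.condDens S c y r)) (hg.div hd) fun r r' y => by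
      simp only [hS, condDens, rowDens, linOn_piecewise_of_subset subset_rfl]]
  exact lintegral_congr fun r => lintegral_congr fun y =>
    ENNReal.div_mul_cancel (by simpa using W.condDens_pos _ _ _ _) ENNReal.ofReal_ne_top

end Rows

variable {n : ℕ}

section ExponentialMoments

/-- An upper bound for the centred log-densities of the channel. -/
def centredSup : ℝ := W.logSup + ∫ e, W.envelope e ∂W.noise

/-- A bound for the second moment of the centred log-densities of the channel. -/
def varBound : ℝ := ∫ e, (W.envelope e + ∫ e', W.envelope e' ∂W.noise) ^ 2 ∂W.noise

lemma integrable_envelope_add_sq :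
    Integrable (fun e => (W.envelope e + ∫ e', W.envelope e' ∂W.noise) ^ 2) W.noise :=
  (W.memLp_envelope.add (memLp_const _)).integrable_sq

lemma lintegral_exp_mul_log_rowDens_sub_le (S : Finset (Fin n)) (c : Fin n → ℝ) (τ : ℝ) {s : ℝ}
    (hs : 0 ≤ s) (hsM : s * W.centredSup ≤ 1) :
    ∫⁻ p, ENNReal.ofReal (exp (s * (log (W.rowDens S c τ (W.rowOut c p) p.1)
        - W.expLog (∑ i ∈ S, c i ^ 2) (∑ i ∈ Sᶜ, c i ^ 2) τ))) ∂(W.rowLaw n)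
      ≤ ENNReal.ofReal (exp (s ^ 2 * W.varBound)) := by
  set ℓ := W.expLog (∑ i ∈ S, c i ^ 2) (∑ i ∈ Sᶜ, c i ^ 2) τ
  have int_log := W.integrable_log_rowDens S c c τ
  have abs_ℓ : |ℓ| ≤ ∫ e, W.envelope e ∂W.noise := W.abs_expLog_le _ _ _
  have int_sq : Integrable (fun p : (Fin n → ℝ) × E =>
      (W.envelope p.2 + ∫ e, W.envelope e ∂W.noise) ^ 2) (W.rowLaw n) :=
    measurePreserving_snd.integrable_comp_of_integrable W.integrable_envelope_add_sq
  have eq_var : ∫ p : (Fin n → ℝ) × E,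
      (W.envelope p.2 + ∫ e, W.envelope e ∂W.noise) ^ 2 ∂(W.rowLaw n) = W.varBound := by
    rw [rowLaw, integral_fun_snd fun e => (W.envelope e + ∫ e', W.envelope e' ∂W.noise) ^ 2]
    simp [varBound]
  rw [← eq_var]
  refine lintegral_exp_mul_le_of_integral_eq_zero (M := W.centredSup)
    (int_log.sub (integrable_const ℓ)) ?_ (fun p => ?_) (fun p => ?_) int_sq hs hsM
  · rw [integral_sub int_log (integrable_const ℓ), W.integral_log_rowDens]
    simp [ℓ]
  · exact sub_le_sub (W.log_smoothDens_le _ _ _) (neg_le_of_abs_le abs_ℓ) |>.trans_eq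
      (sub_neg_eq_add _ _)
  · exact (abs_sub _ _).trans (add_le_add (W.abs_log_smoothDens_out_le _ _ _ _) abs_ℓ)

end ExponentialMoments

section Supermodularity

lemma measurable_condDens (S : Finset (Fin n)) (c : Fin n → ℝ) {Ω : Type*} [MeasurableSpace Ω]
    {y : Ω → ℝ} {r : Ω → Fin n → ℝ} (hy : Measurable y) (hr : Measurable r) :
    Measurable fun ω => W.condDens S c (y ω) (r ω) :=
  W.measurable_rowDens S _ measurable_const hy hr

lemma lintegral_condDens_piecewise (S T : Finset (Fin n)) (c : Fin n → ℝ) (y : ℝ)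
    (r : Fin n → ℝ) :
    ∫⁻ r', ENNReal.ofReal (W.condDens T c y (S.piecewise r r')) ∂(iid n stdG)
      = ENNReal.ofReal (W.condDens (S ∩ T) c y r) := by
  have hdisj : Disjoint (T \ S) Tᶜ := disjoint_compl_right.mono_left Finset.sdiff_subset
  have hunion : (S ∩ T)ᶜ = T \ S ∪ Tᶜ := by
    ext i; simp only [Finset.mem_compl, Finset.mem_inter, Finset.mem_union, Finset.mem_sdiff]; tauto
  unfold condDens
  rw [W.lintegral_rowDens_piecewise S T c (Finset.sum_nonneg fun i _ => sq_nonneg (c i)), hunion,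
    Finset.sum_union hdisj]

lemma condDens_piecewise_of_subset {S T : Finset (Fin n)} (hST : S ⊆ T) (c : Fin n → ℝ) (y : ℝ)
    (r r' : Fin n → ℝ) : W.condDens S c y (T.piecewise r r') = W.condDens S c y r := by
  simp only [condDens, rowDens, linOn_piecewise_of_subset hST]

lemma lintegral_ofReal_condDens (S : Finset (Fin n)) (c r : Fin n → ℝ) :
    ∫⁻ y, ENNReal.ofReal (W.condDens S c y r) = 1 :=
  W.lintegral_ofReal_smoothDens _ _

/-- The integrand is the density for which, given the output, the parts of the row on `S` and on `T`
are conditionally independent given the part on `S ∩ T`. -/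
lemma lintegral_condDens_mul_div (S T : Finset (Fin n)) (c : Fin n → ℝ) :
    ∫⁻ r, (∫⁻ y, ENNReal.ofReal (W.condDens S c y r) * (ENNReal.ofReal (W.condDens T c y r)
      / ENNReal.ofReal (W.condDens (S ∩ T) c y r))) ∂(iid n stdG) = 1 := by
  have meas (A : Finset (Fin n)) : Measurable fun p : (Fin n → ℝ) × ℝ =>
      ENNReal.ofReal (W.condDens A c p.2 p.1) :=
    (W.measurable_condDens A c measurable_snd measurable_fst).ennreal_ofReal
  have meas_left (A : Finset (Fin n)) (y : ℝ) : Measurable fun r : Fin n → ℝ =>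
      ENNReal.ofReal (W.condDens A c y r) := (meas A).comp measurable_prodMk_right
  have average_over_T (y : ℝ) :
      ∫⁻ r, ENNReal.ofReal (W.condDens S c y r) * (ENNReal.ofReal (W.condDens T c y r)
          / ENNReal.ofReal (W.condDens (S ∩ T) c y r)) ∂(iid n stdG)
        = ∫⁻ r, ENNReal.ofReal (W.condDens S c y r) ∂(iid n stdG) := by
    have meas_prod : Measurable fun r => ENNReal.ofReal (W.condDens S c y r)
        * (ENNReal.ofReal (W.condDens T c y r) / ENNReal.ofReal (W.condDens (S ∩ T) c y r)) :=
      (meas_left S y).mul ((meas_left T y).div (meas_left (S ∩ T) y))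
    refine (lintegral_pi_eq_lintegral_piecewise _ S meas_prod).trans (lintegral_congr fun r => ?_)
    have hm : Measurable fun r' => ENNReal.ofReal (W.condDens T c y (S.piecewise r r')) :=
      (meas_left T y).comp ((measurable_piecewise_prod S).comp measurable_prodMk_left)
    simp only [W.condDens_piecewise_of_subset subset_rfl,
      W.condDens_piecewise_of_subset Finset.inter_subset_left, div_eq_mul_inv]
    rw [lintegral_const_mul _ (hm.mul_const _), lintegral_mul_const _ hm, ← iid,
      W.lintegral_condDens_piecewise,
      ENNReal.mul_inv_cancel (by simpa using W.condDens_pos _ _ _ _) ENNReal.ofReal_ne_top, mul_one]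
  rw [lintegral_lintegral_swap ((meas S).mul ((meas T).div (meas (S ∩ T)))).aemeasurable]
  simp only [average_over_T]
  rw [← lintegral_lintegral_swap (meas S).aemeasurable]
  simp [W.lintegral_ofReal_condDens]

/-- The expected log-density of the output at the signal `c` given the coordinates of the row
in `S`. -/
def expLogOn (c : Fin n → ℝ) (S : Finset (Fin n)) : ℝ :=
  W.expLog (∑ i ∈ S, c i ^ 2) (∑ i ∈ Sᶜ, c i ^ 2) (∑ i ∈ Sᶜ, c i ^ 2)

lemma expLogOn_add_expLogOn_le (c : Fin n → ℝ) (S T : Finset (Fin n)) :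
    W.expLogOn c S + W.expLogOn c T ≤ W.expLogOn c (S ∪ T) + W.expLogOn c (S ∩ T) := by
  let D (A : Finset (Fin n)) (p : (Fin n → ℝ) × E) : ℝ := W.condDens A c (W.rowOut c p) p.1
  have D_pos (A p) : 0 < D A p := W.condDens_pos _ _ _ _
  have int_log (A) : Integrable (fun p => log (D A p)) (W.rowLaw n) :=
    W.integrable_log_rowDens A c c _
  have mean_log (A) : ∫ p, log (D A p) ∂(W.rowLaw n) = W.expLogOn c A :=
    W.integral_log_rowDens A c _
  have mean_ratio : ∫⁻ p, ENNReal.ofReal (D S p) * (ENNReal.ofReal (D T p)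
      / ENNReal.ofReal (D (S ∩ T) p)) / ENNReal.ofReal (D (S ∪ T) p) ∂(W.rowLaw n) = 1 := by
    have meas (A : Finset (Fin n)) : Measurable fun p : (Fin n → ℝ) × ℝ =>
        ENNReal.ofReal (W.condDens A c p.2 p.1) :=
      (W.measurable_condDens A c measurable_snd measurable_fst).ennreal_ofReal
    refine (W.lintegral_div_rowDens (S ∪ T) c (g := fun r y => ENNReal.ofReal (W.condDens S c y r)
      * (ENNReal.ofReal (W.condDens T c y r) / ENNReal.ofReal (W.condDens (S ∩ T) c y r)))
      ((meas S).mul ((meas T).div (meas (S ∩ T)))) fun r r' y => ?_).trans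
      (W.lintegral_condDens_mul_div S T c)
    rw [W.condDens_piecewise_of_subset Finset.subset_union_left,
      W.condDens_piecewise_of_subset Finset.subset_union_right,
      W.condDens_piecewise_of_subset Finset.inter_subset_union]
  have jensen := integral_le_log_of_lintegral_exp_le (((int_log S).add (int_log T)).sub
    ((int_log (S ∩ T)).add (int_log (S ∪ T)))) one_pos (by
      rw [ENNReal.ofReal_one, ← mean_ratio]
      refine (lintegral_congr fun p => ?_).le
      simp only [Pi.add_apply, Pi.sub_apply, exp_sub, exp_add, exp_log (D_pos _ _)]
      rw [← ENNReal.ofReal_div_of_pos (D_pos _ _), ← ENNReal.ofReal_mul (D_pos _ _).le,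
        ← ENNReal.ofReal_div_of_pos (D_pos _ _), ← mul_div_assoc, div_div])
  rw [integral_sub' ((int_log S).add (int_log T)) ((int_log _).add (int_log _)),
    integral_add' (int_log _) (int_log _), integral_add' (int_log _) (int_log _), log_one] at jensen
  simp only [mean_log] at jensen
  linarith

lemma expLogOn_mono (c : Fin n → ℝ) {S T : Finset (Fin n)} (hST : S ⊆ T) :
    W.expLogOn c S ≤ W.expLogOn c T := by
  let D (A : Finset (Fin n)) (p : (Fin n → ℝ) × E) : ℝ := W.condDens A c (W.rowOut c p) p.1
  have D_pos (A p) : 0 < D A p := W.condDens_pos _ _ _ _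
  have int_log (A) : Integrable (fun p => log (D A p)) (W.rowLaw n) :=
    W.integrable_log_rowDens A c c _
  have mean_log (A) : ∫ p, log (D A p) ∂(W.rowLaw n) = W.expLogOn c A :=
    W.integral_log_rowDens A c _
  have mean_ratio : ∫⁻ p, ENNReal.ofReal (D S p) / ENNReal.ofReal (D T p) ∂(W.rowLaw n) = 1 := by
    refine (W.lintegral_div_rowDens T c (g := fun r y => ENNReal.ofReal (W.condDens S c y r))
      (W.measurable_condDens S c measurable_snd measurable_fst).ennreal_ofReal
      fun r r' y => ?_).trans (by simp [W.lintegral_ofReal_condDens])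
    rw [W.condDens_piecewise_of_subset hST]
  have gibbs := integral_le_log_of_lintegral_exp_le ((int_log S).sub (int_log T)) one_pos (by
    rw [ENNReal.ofReal_one, ← mean_ratio]
    refine (lintegral_congr fun p => ?_).le
    rw [Pi.sub_apply, exp_sub, exp_log (D_pos _ _), exp_log (D_pos _ _),
      ENNReal.ofReal_div_of_pos (D_pos _ _)])
  rw [integral_sub' (int_log S) (int_log T), log_one, mean_log, mean_log] at gibbs
  linarith

lemma expLog_le_expLog {q δ κ : ℝ} (hq : 0 ≤ q) (hδ : 0 ≤ δ) (hκ : 0 ≤ κ) :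
    W.expLog q (δ + κ) (δ + κ) ≤ W.expLog (q + δ) κ κ := by
  let c : Fin 3 → ℝ := ![√q, √δ, √κ]
  have compl₀ : ({0} : Finset (Fin 3))ᶜ = {1, 2} := by decide
  have compl₀₁ : ({0, 1} : Finset (Fin 3))ᶜ = {2} := by decide
  simpa [expLogOn, compl₀, compl₀₁, c, sq_sqrt, hq, hδ, hκ]
    using W.expLogOn_mono c (S := {0}) (T := {0, 1}) (by decide)

lemma expLogOn_le_expLogOn_of_sum_sq_le {c : Fin n → ℝ} {S T : Finset (Fin n)}
    (h : ∑ i ∈ S, c i ^ 2 ≤ ∑ i ∈ T, c i ^ 2) : W.expLogOn c S ≤ W.expLogOn c T := by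
  have sum_nonneg (A : Finset (Fin n)) : 0 ≤ ∑ i ∈ A, c i ^ 2 :=
    Finset.sum_nonneg fun i _ => sq_nonneg _
  have split : ∑ i ∈ Sᶜ, c i ^ 2
      = (∑ i ∈ T, c i ^ 2 - ∑ i ∈ S, c i ^ 2) + ∑ i ∈ Tᶜ, c i ^ 2 := by
    linarith [Finset.sum_add_sum_compl S (c · ^ 2), Finset.sum_add_sum_compl T (c · ^ 2)]
  have := W.expLog_le_expLog (sum_nonneg S) (sub_nonneg.2 h) (sum_nonneg Tᶜ)
  rwa [← split, add_sub_cancel] at this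

end Supermodularity

variable {m : ℕ}

section Systems

/-- The law of `m` independent rows of the sensing matrix together with the channel noise. -/
def sysLaw (n m : ℕ) : Measure (Fin m → (Fin n → ℝ) × E) := Measure.pi fun _ => W.rowLaw n

instance (n m : ℕ) : IsProbabilityMeasure (W.sysLaw n m) := by unfold sysLaw; infer_instance

/-- The row and its output when the signal is `c`. -/
def rowObs (c : Fin n → ℝ) (p : (Fin n → ℝ) × E) : (Fin n → ℝ) × ℝ := (p.1, W.rowOut c p)

/-- The data available to the observer when the signal is `c`: all rows with their outputs. -/
def sysObs (c : Fin n → ℝ) (ω : Fin m → (Fin n → ℝ) × E) : Fin m → (Fin n → ℝ) × ℝ :=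
  fun μ => W.rowObs c (ω μ)

/-- The likelihood of the data at the signal `c`, as a product of `rowDens`. -/
def sysDens (S : Finset (Fin n)) (c : Fin n → ℝ) (τ : ℝ) (η : Fin m → (Fin n → ℝ) × ℝ) : ℝ :=
  ∏ μ, W.rowDens S c τ (η μ).2 (η μ).1

/-- The marginal likelihood of the data when the signal has law `Q`. -/
def margDens (Q : Measure (Fin n → ℝ)) (η : Fin m → (Fin n → ℝ) × ℝ) : ℝ :=
  ∫ c, W.sysDens Finset.univ c 0 η ∂Q

@[fun_prop]
lemma measurable_rowObs (c : Fin n → ℝ) : Measurable (W.rowObs c) :=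
  measurable_fst.prodMk (W.measurable_rowOut c)

@[fun_prop]
lemma measurable_sysObs (c : Fin n → ℝ) :
    Measurable (W.sysObs c : (Fin m → (Fin n → ℝ) × E) → Fin m → (Fin n → ℝ) × ℝ) :=
  measurable_pi_lambda _ fun μ => (W.measurable_rowObs c).comp (measurable_pi_apply μ)

lemma measurable_sysDens (S : Finset (Fin n)) (τ : ℝ) {Ω : Type*} [MeasurableSpace Ω]
    {c : Ω → Fin n → ℝ} {η : Ω → Fin m → (Fin n → ℝ) × ℝ} (hc : Measurable c)
    (hη : Measurable η) : Measurable fun ω => W.sysDens S (c ω) τ (η ω) :=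
  Finset.measurable_prod _ fun μ _ => W.measurable_rowDens S τ hc
    ((measurable_pi_apply μ).comp hη).snd ((measurable_pi_apply μ).comp hη).fst

lemma measurable_margDens (Q : Measure (Fin n → ℝ)) [SFinite Q] :
    Measurable (W.margDens Q : (Fin m → (Fin n → ℝ) × ℝ) → ℝ) :=
  (StronglyMeasurable.integral_prod_right (f := fun η c => W.sysDens Finset.univ c 0 η)
    (W.measurable_sysDens _ _ measurable_snd measurable_fst).stronglyMeasurable).measurable

lemma sysDens_pos (S : Finset (Fin n)) (c : Fin n → ℝ) (τ : ℝ) (η : Fin m → (Fin n → ℝ) × ℝ) :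
    0 < W.sysDens S c τ η :=
  Finset.prod_pos fun _ _ => W.rowDens_pos _ _ _ _ _

lemma sysDens_le (S : Finset (Fin n)) (c : Fin n → ℝ) (τ : ℝ) (η : Fin m → (Fin n → ℝ) × ℝ) :
    W.sysDens S c τ η ≤ exp (m * W.logSup) := by
  refine (Finset.prod_le_prod (fun _ _ => (W.rowDens_pos _ _ _ _ _).le)
    fun μ _ => W.smoothDens_le _ _ _).trans_eq ?_
  simp [exp_nat_mul]

lemma exp_neg_sum_envelope_le_sysDens (S : Finset (Fin n)) (c c' : Fin n → ℝ) (τ : ℝ)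
    (ω : Fin m → (Fin n → ℝ) × E) :
    exp (-∑ μ, W.envelope (ω μ).2) ≤ W.sysDens S c τ (W.sysObs c' ω) := by
  rw [← Finset.sum_neg_distrib, exp_sum]
  exact Finset.prod_le_prod (fun _ _ => (exp_pos _).le)
    fun μ _ => W.exp_neg_envelope_le_smoothDens _ _ _ _

lemma abs_log_le_sum_envelope {t : ℝ} {ω : Fin m → (Fin n → ℝ) × E}
    (hlow : exp (-∑ μ, W.envelope (ω μ).2) ≤ t) (hhigh : t ≤ exp (m * W.logSup)) :
    |log t| ≤ ∑ μ, W.envelope (ω μ).2 := by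
  have ht : 0 < t := (exp_pos _).trans_le hlow
  refine abs_le.2 ⟨(le_log_iff_exp_le ht).2 hlow, ((log_le_iff_le_exp ht).2 hhigh).trans ?_⟩
  simpa using Finset.sum_le_sum fun (μ : Fin m) (_ : μ ∈ Finset.univ) =>
    W.logSup_le_envelope (ω μ).2

section Marginal

variable (Q : Measure (Fin n → ℝ)) [IsProbabilityMeasure Q]

lemma integrable_sysDens (η : Fin m → (Fin n → ℝ) × ℝ) :
    Integrable (fun c => W.sysDens Finset.univ c 0 η) Q :=
  .of_bound (W.measurable_sysDens _ _ measurable_id measurable_const).aestronglyMeasurable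
    (exp (m * W.logSup)) (.of_forall fun c => by
      rw [norm_of_nonneg (W.sysDens_pos _ _ _ _).le]; exact W.sysDens_le _ _ _ _)

lemma ofReal_margDens (η : Fin m → (Fin n → ℝ) × ℝ) : ENNReal.ofReal (W.margDens Q η)
    = ∫⁻ c, ENNReal.ofReal (W.sysDens Finset.univ c 0 η) ∂Q :=
  ofReal_integral_eq_lintegral_ofReal (W.integrable_sysDens Q η)
    (.of_forall fun _ => (W.sysDens_pos _ _ _ _).le)

lemma margDens_pos (η : Fin m → (Fin n → ℝ) × ℝ) : 0 < W.margDens Q η := by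
  refine (integral_pos_iff_support_of_nonneg (fun c => (W.sysDens_pos _ _ _ _).le)
    (W.integrable_sysDens Q η)).2 ?_
  rw [Function.support_eq_univ fun c => (W.sysDens_pos _ c _ _).ne', measure_univ]
  exact one_pos

lemma margDens_le (η : Fin m → (Fin n → ℝ) × ℝ) : W.margDens Q η ≤ exp (m * W.logSup) := by
  simpa [margDens] using integral_mono (W.integrable_sysDens Q η) (integrable_const _)
    fun c => W.sysDens_le Finset.univ c 0 η

lemma exp_neg_sum_envelope_le_margDens (c : Fin n → ℝ) (ω : Fin m → (Fin n → ℝ) × E) :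
    exp (-∑ μ, W.envelope (ω μ).2) ≤ W.margDens Q (W.sysObs c ω) := by
  simpa [margDens] using integral_mono (integrable_const _)
    (W.integrable_sysDens Q (W.sysObs c ω))
    fun c' => W.exp_neg_sum_envelope_le_sysDens Finset.univ c' c 0 ω

lemma integrable_sum_envelope :
    Integrable (fun ω => ∑ μ, W.envelope (ω μ).2) (W.sysLaw n m) :=
  integrable_finsetSum _ fun _ _ =>
    integrable_comp_eval (μ := fun _ => W.rowLaw n) W.integrable_envelope_snd

lemma integrable_log_margDens (c : Fin n → ℝ) :
    Integrable (fun ω => log (W.margDens Q (W.sysObs c ω))) (W.sysLaw n m) :=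
  W.integrable_sum_envelope.mono'
    ((W.measurable_margDens Q).comp (W.measurable_sysObs c)).log.aestronglyMeasurable
    (.of_forall fun ω => W.abs_log_le_sum_envelope (W.exp_neg_sum_envelope_le_margDens Q c ω)
      (W.margDens_le Q _))

end Marginal

lemma integrable_log_sysDens (S : Finset (Fin n)) (c c' : Fin n → ℝ) (τ : ℝ) :
    Integrable (fun ω => log (W.sysDens S c τ (W.sysObs c' ω))) (W.sysLaw n m) :=
  W.integrable_sum_envelope.mono'
    (W.measurable_sysDens S τ measurable_const
      (W.measurable_sysObs c')).log.aestronglyMeasurable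
    (.of_forall fun ω => W.abs_log_le_sum_envelope
      (W.exp_neg_sum_envelope_le_sysDens S c c' τ ω) (W.sysDens_le _ _ _ _))

lemma integral_log_sysDens (S : Finset (Fin n)) (c : Fin n → ℝ) (τ : ℝ) :
    ∫ ω, log (W.sysDens S c τ (W.sysObs c ω)) ∂(W.sysLaw n m)
      = m * W.expLog (∑ i ∈ S, c i ^ 2) (∑ i ∈ Sᶜ, c i ^ 2) τ := by
  have int_row (μ : Fin m) := integrable_comp_eval (μ := fun _ : Fin m => W.rowLaw n) (i := μ)
    (W.integrable_log_rowDens S c c τ)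
  have mean_row (μ : Fin m) := (integral_comp_eval (μ := fun _ : Fin m => W.rowLaw n) (i := μ)
    (W.integrable_log_rowDens S c c τ).1).trans (W.integral_log_rowDens S c τ)
  simp only [sysDens, log_prod fun _ _ => (W.rowDens_pos _ _ _ _ _).ne']
  exact ((integral_finsetSum _ fun μ _ => int_row μ).trans
    (Finset.sum_congr rfl fun μ _ => mean_row μ)).trans (by simp)

end Systems

section MutualInformation

variable (Q : Measure (Fin n → ℝ))

/-- The expected log-likelihood ratio at the signal `c`. -/
def infoAt (m : ℕ) (c : Fin n → ℝ) : ℝ :=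
  ∫ ω : Fin m → (Fin n → ℝ) × E, log (W.sysDens Finset.univ c 0 (W.sysObs c ω)
    / W.margDens Q (W.sysObs c ω)) ∂(W.sysLaw n m)

/-- The mutual information between a signal of law `Q` and its outputs, given the rows. -/
def mutualInfo (m : ℕ) : ℝ := ∫ c, W.infoAt Q m c ∂Q

lemma measurable_uncurry_sysObs :
    Measurable fun p : (Fin n → ℝ) × (Fin m → (Fin n → ℝ) × E) => W.sysObs p.1 p.2 :=
  measurable_pi_lambda _ fun μ => by
    have row : Measurable fun p : (Fin n → ℝ) × (Fin m → (Fin n → ℝ) × E) => p.2 μ := by fun_prop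
    exact row.fst.prodMk (W.measurable_out_comp (by fun_prop) row.snd)

lemma measurable_infoAt [SFinite Q] (m : ℕ) : Measurable (W.infoAt Q m) :=
  (StronglyMeasurable.integral_prod_right
    ((W.measurable_sysDens _ _ measurable_fst W.measurable_uncurry_sysObs).div
      ((W.measurable_margDens Q).comp
        W.measurable_uncurry_sysObs)).log.stronglyMeasurable).measurable

variable [IsProbabilityMeasure Q]

lemma infoAt_eq (m : ℕ) (c : Fin n → ℝ) : W.infoAt Q m c = m * W.expLog (∑ i, c i ^ 2) 0 0
    - ∫ ω, log (W.margDens Q (W.sysObs c ω)) ∂(W.sysLaw n m) := by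
  simp only [infoAt, log_div (W.sysDens_pos _ _ _ _).ne' (W.margDens_pos Q _).ne']
  rw [integral_sub (W.integrable_log_sysDens _ c c 0) (W.integrable_log_margDens Q c),
    W.integral_log_sysDens]
  simp

lemma integrable_log_sysDens_div_margDens (c : Fin n → ℝ) :
    Integrable (fun ω : Fin m → (Fin n → ℝ) × E => log (W.sysDens Finset.univ c 0 (W.sysObs c ω)
      / W.margDens Q (W.sysObs c ω))) (W.sysLaw n m) := by
  simp only [log_div (W.sysDens_pos _ _ _ _).ne' (W.margDens_pos Q _).ne']
  exact (W.integrable_log_sysDens _ c c 0).sub (W.integrable_log_margDens Q c)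

lemma abs_infoAt_le (m : ℕ) (c : Fin n → ℝ) :
    |W.infoAt Q m c| ≤ 2 * ∫ ω, ∑ μ, W.envelope (ω μ).2 ∂(W.sysLaw n m) := by
  rw [infoAt, ← integral_const_mul]
  refine abs_integral_le_integral_abs.trans (integral_mono_of_nonneg
    (.of_forall fun _ => abs_nonneg _) (W.integrable_sum_envelope.const_mul 2)
    (.of_forall fun ω => ?_))
  dsimp only
  rw [log_div (W.sysDens_pos _ _ _ _).ne' (W.margDens_pos Q _).ne', two_mul]
  exact (abs_sub _ _).trans (add_le_add (W.abs_log_le_sum_envelope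
    (W.exp_neg_sum_envelope_le_sysDens Finset.univ c c 0 ω) (W.sysDens_le _ _ _ _))
    (W.abs_log_le_sum_envelope (W.exp_neg_sum_envelope_le_margDens Q c ω) (W.margDens_le Q _)))

lemma integrable_infoAt (m : ℕ) {P : Measure (Fin n → ℝ)} [IsFiniteMeasure P] :
    Integrable (W.infoAt Q m) P :=
  .of_bound (W.measurable_infoAt Q m).aestronglyMeasurable _ (.of_forall (W.abs_infoAt_le Q m))

lemma mutualInfo_map {X : Type*} [MeasurableSpace X] {P : Measure X} [IsProbabilityMeasure P]
    {σ : X → Fin n → ℝ} (hσ : Measurable σ) (m : ℕ) :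
    W.mutualInfo (P.map σ) m = ∫ x, W.infoAt (P.map σ) m (σ x) ∂P :=
  have := Measure.isProbabilityMeasure_map (μ := P) hσ.aemeasurable
  integral_map hσ.aemeasurable (W.measurable_infoAt _ m).aestronglyMeasurable

end MutualInformation

end Channel

section UnionBound

variable {Ω ι : Type*} [MeasurableSpace Ω] {P : Measure Ω} {F : Finset ι} {R Y : ι → Ω → ℝ≥0∞}
  {s : ℝ}

lemma lintegral_rpow_sum_mul_le (hs : 0 < s) (hR : ∀ A ∈ F, Measurable (R A))
    (hY : ∀ A ∈ F, Measurable (Y A)) (hR1 : ∀ A ∈ F, ∫⁻ ω, R A ω ∂P ≤ 1) {N : ℝ≥0∞}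
    (hYN : ∀ A ∈ F, ∫⁻ ω, Y A ω ^ s ∂P ≤ N) :
    ∫⁻ ω, (∑ A ∈ F, R A ω * Y A ω) ^ (s / (1 + s)) ∂P ≤ F.card * N ^ (1 / (1 + s)) := by
  have hθ : 0 < s / (1 + s) := by positivity
  have hθ1 : s / (1 + s) + 1 / (1 + s) = 1 := by field_simp; ring
  have hθ' : 0 < 1 / (1 + s) := by positivity
  calc ∫⁻ ω, (∑ A ∈ F, R A ω * Y A ω) ^ (s / (1 + s)) ∂P
      ≤ ∫⁻ ω, ∑ A ∈ F, (R A ω * Y A ω) ^ (s / (1 + s)) ∂P :=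
        lintegral_mono fun ω => Finset.le_sum_of_subadditive (· ^ (s / (1 + s)))
          (ENNReal.zero_rpow_of_pos hθ).le
          (fun x y => ENNReal.rpow_add_le_add_rpow x y hθ.le (by linarith)) F _
    _ = ∑ A ∈ F, ∫⁻ ω, R A ω ^ (s / (1 + s)) * (Y A ω ^ s) ^ (1 / (1 + s)) ∂P := by
        rw [lintegral_finsetSum' (f := fun A ω => (R A ω * Y A ω) ^ (s / (1 + s))) _ fun A hA =>
          (((hR A hA).mul (hY A hA)).pow_const _).aemeasurable]
        simp only [ENNReal.mul_rpow_of_nonneg _ _ hθ.le, ← ENNReal.rpow_mul, mul_one_div]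
    _ ≤ ∑ A ∈ F, 1 * N ^ (1 / (1 + s)) :=
        Finset.sum_le_sum fun A hA => (ENNReal.lintegral_mul_norm_pow_le (hR A hA).aemeasurable
          ((hY A hA).pow_const s).aemeasurable hθ.le hθ'.le hθ1).trans
          (mul_le_mul' ((ENNReal.rpow_le_rpow (hR1 A hA) hθ.le).trans_eq (ENNReal.one_rpow _))
            (ENNReal.rpow_le_rpow (hYN A hA) hθ'.le))
    _ = F.card * N ^ (1 / (1 + s)) := by simp

lemma integral_le_of_exp_le_sum_mul [IsProbabilityMeasure P] {L : Ω → ℝ} (hL : Integrable L P)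
    (hF : F.Nonempty) (hs : 0 < s) (hR : ∀ A ∈ F, Measurable (R A))
    (hY : ∀ A ∈ F, Measurable (Y A)) (hR1 : ∀ A ∈ F, ∫⁻ ω, R A ω ∂P ≤ 1) {N : ℝ}
    (hYN : ∀ A ∈ F, ∫⁻ ω, Y A ω ^ s ∂P ≤ ENNReal.ofReal (exp N))
    (h : ∀ ω, ENNReal.ofReal (exp (L ω)) ≤ ∑ A ∈ F, R A ω * Y A ω) :
    ∫ ω, L ω ∂P ≤ (1 + s) / s * log F.card + N / s := by
  have hcard : (0 : ℝ) < F.card := by exact_mod_cast hF.card_pos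
  have exp_mul_rpow (t a : ℝ) :
      ENNReal.ofReal (exp (a * t)) = ENNReal.ofReal (exp t) ^ a := by
    rw [ENNReal.ofReal_rpow_of_pos (exp_pos _), ← exp_mul, mul_comm]
  have moment : ∫⁻ ω, ENNReal.ofReal (exp (s / (1 + s) * L ω)) ∂P
      ≤ ENNReal.ofReal (F.card * exp (1 / (1 + s) * N)) := by
    rw [ENNReal.ofReal_mul hcard.le, ENNReal.ofReal_natCast, exp_mul_rpow]
    simp only [exp_mul_rpow]
    exact (lintegral_mono fun ω => ENNReal.rpow_le_rpow (h ω) (by positivity)).trans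
      (lintegral_rpow_sum_mul_le hs hR hY hR1 hYN)
  have jensen := integral_le_log_of_lintegral_exp_le (hL.const_mul _) (by positivity) moment
  rw [integral_const_mul, log_mul hcard.ne' (exp_pos _).ne', log_exp] at jensen
  calc ∫ ω, L ω ∂P = (1 + s) / s * (s / (1 + s) * ∫ ω, L ω ∂P) := by field_simp
    _ ≤ (1 + s) / s * (log F.card + 1 / (1 + s) * N) := by gcongr
    _ = (1 + s) / s * log F.card + N / s := by field_simp

end UnionBound

section SupportEvents

variable {n : ℕ}

/-- The vectors whose support meets `T` exactly in `A`. -/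
def supportEvent (T A : Finset (Fin n)) : Set (Fin n → ℝ) := {x | T.filter (x · ≠ 0) = A}

lemma measurableSet_supportEvent (T A : Finset (Fin n)) : MeasurableSet (supportEvent T A) := by
  have : supportEvent T A = ⋂ i, {x : Fin n → ℝ | (i ∈ T ∧ x i ≠ 0) ↔ i ∈ A} := by
    ext x; simp [supportEvent, Finset.ext_iff]
  rw [this]
  refine MeasurableSet.iInter fun i => MeasurableSet.iff ?_ (.const _)
  exact (MeasurableSet.const _).inter
    (measurableSet_eq_fun (measurable_pi_apply i) measurable_const).compl

lemma measure_supportEvent_le {P : Measure ℝ} [IsProbabilityMeasure P] {p : ℝ≥0∞}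
    (hp : P {0}ᶜ ≤ p) (T A : Finset (Fin n)) : iid n P (supportEvent T A) ≤ p ^ A.card := by
  have subset_pi : supportEvent T A ⊆ Set.univ.pi fun i => if i ∈ A then {0}ᶜ else Set.univ := by
    rintro x rfl i -
    by_cases hi : i ∈ T.filter (x · ≠ 0)
    · simpa [hi] using (Finset.mem_filter.1 hi).2
    · simp [hi]
  calc iid n P (supportEvent T A)
      ≤ ∏ i, P (if i ∈ A then {0}ᶜ else Set.univ) :=
        (measure_mono subset_pi).trans_eq (Measure.pi_pi _ _)
    _ = ∏ i, if i ∈ A then P {0}ᶜ else 1 := by simp only [apply_ite P, measure_univ]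
    _ ≤ p ^ A.card := by simpa using pow_le_pow_left' hp A.card

lemma lintegral_eq_sum_supportEvent (Q : Measure (Fin n → ℝ)) (T : Finset (Fin n))
    (f : (Fin n → ℝ) → ℝ≥0∞) :
    ∫⁻ x, f x ∂Q = ∑ A ∈ T.powerset, ∫⁻ x in supportEvent T A, f x ∂Q := by
  rw [← lintegral_biUnion_finset _ fun A _ => measurableSet_supportEvent T A]
  · rw [← setLIntegral_univ]
    congr 2
    refine (Set.eq_univ_of_forall fun x => ?_).symm
    simp only [Set.mem_iUnion]
    exact ⟨_, Finset.mem_powerset.2 (Finset.filter_subset (x · ≠ 0) T), rfl⟩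
  · exact fun A _ A' _ hne => Set.disjoint_left.2 fun x hx hx' => hne (hx.symm.trans hx')

end SupportEvents

namespace Channel

variable {E : Type*} [MeasurableSpace E] (W : Channel E) {n m : ℕ}

section LowerBound

lemma lintegral_sysDens_div (S : Finset (Fin n)) (c : Fin n → ℝ) {d : Fin n → ℝ}
    (hd : ∀ i ∉ S, d i = 0) :
    ∫⁻ ω, ENNReal.ofReal (W.sysDens Finset.univ d 0 (W.sysObs c ω)
      / W.sysDens S c (∑ i ∈ Sᶜ, c i ^ 2) (W.sysObs c ω)) ∂(W.sysLaw n m) = 1 := by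
  let f (p : (Fin n → ℝ) × E) : ℝ≥0∞ :=
    ENNReal.ofReal (W.rowDens Finset.univ d 0 (W.rowOut c p) p.1)
      / ENNReal.ofReal (W.condDens S c (W.rowOut c p) p.1)
  have meas_f : Measurable f :=
    (W.measurable_rowDens _ _ measurable_const (W.measurable_rowOut c)
      measurable_fst).ennreal_ofReal.div
      (W.measurable_condDens S c (W.measurable_rowOut c) measurable_fst).ennreal_ofReal
  have row_integral : ∫⁻ p, f p ∂(W.rowLaw n) = 1 := by
    refine (W.lintegral_div_rowDens S c (g := fun r y =>
      ENNReal.ofReal (W.rowDens Finset.univ d 0 y r)) (W.measurable_rowDens _ _ measurable_const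
        measurable_snd measurable_fst).ennreal_ofReal fun r r' y => ?_).trans ?_
    · rw [rowDens, rowDens, linOn_piecewise_of_support_subset hd]
    · simp [rowDens, W.lintegral_ofReal_smoothDens]
  have eq_prod (ω : Fin m → (Fin n → ℝ) × E) :
      ENNReal.ofReal (W.sysDens Finset.univ d 0 (W.sysObs c ω)
        / W.sysDens S c (∑ i ∈ Sᶜ, c i ^ 2) (W.sysObs c ω)) = ∏ μ, f (ω μ) := by
    rw [sysDens, sysDens, ← Finset.prod_div_distrib, ENNReal.ofReal_prod_of_nonneg fun μ _ =>
      (div_pos (W.rowDens_pos _ _ _ _ _) (W.rowDens_pos _ _ _ _ _)).le]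
    exact Finset.prod_congr rfl fun μ _ => ENNReal.ofReal_div_of_pos (W.rowDens_pos _ _ _ _ _)
  simp only [eq_prod, sysLaw, lintegral_fin_prod_eq_prod fun _ => meas_f, row_integral,
    Finset.prod_const_one]

lemma lintegral_exp_mul_log_sysDens_sub_le (S : Finset (Fin n)) (c : Fin n → ℝ) (τ : ℝ) {s : ℝ}
    (hs : 0 ≤ s) (hsM : s * W.centredSup ≤ 1) :
    ∫⁻ ω, ENNReal.ofReal (exp (s * (log (W.sysDens S c τ (W.sysObs c ω))
        - m * W.expLog (∑ i ∈ S, c i ^ 2) (∑ i ∈ Sᶜ, c i ^ 2) τ))) ∂(W.sysLaw n m)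
      ≤ ENNReal.ofReal (exp (m * (s ^ 2 * W.varBound))) := by
  let f (p : (Fin n → ℝ) × E) : ℝ≥0∞ :=
    ENNReal.ofReal (exp (s * (log (W.rowDens S c τ (W.rowOut c p) p.1)
      - W.expLog (∑ i ∈ S, c i ^ 2) (∑ i ∈ Sᶜ, c i ^ 2) τ)))
  have meas_f : Measurable f :=
    (((W.measurable_rowDens S τ measurable_const (W.measurable_rowOut c)
      measurable_fst).log.sub_const _).const_mul s).exp.ennreal_ofReal
  have eq_prod (ω : Fin m → (Fin n → ℝ) × E) :
      ENNReal.ofReal (exp (s * (log (W.sysDens S c τ (W.sysObs c ω))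
        - m * W.expLog (∑ i ∈ S, c i ^ 2) (∑ i ∈ Sᶜ, c i ^ 2) τ))) = ∏ μ, f (ω μ) := by
    rw [← ENNReal.ofReal_prod_of_nonneg fun μ _ => (exp_pos _).le, ← exp_sum, sysDens,
      log_prod fun μ _ => (W.rowDens_pos _ _ _ _ _).ne', ← Finset.mul_sum,
      Finset.sum_sub_distrib]
    simp [sysObs, rowObs]
  simp only [eq_prod, sysLaw, lintegral_fin_prod_eq_prod fun _ => meas_f]
  rw [Finset.prod_const, Finset.card_univ, Fintype.card_fin, exp_nat_mul,
    ENNReal.ofReal_pow (exp_pos _).le]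
  exact pow_le_pow_left' (W.lintegral_exp_mul_log_rowDens_sub_le S c τ hs hsM) m

/-- The contribution to the marginal likelihood of the signals whose support meets `T` in `A`,
relative to the likelihood at `c` of the data with the coordinates in `T \ A` of the rows hidden. -/
def supportRatio (Q : Measure (Fin n → ℝ)) (T A : Finset (Fin n)) (c : Fin n → ℝ)
    (η : Fin m → (Fin n → ℝ) × ℝ) : ℝ≥0∞ :=
  ∫⁻ d in supportEvent T A, ENNReal.ofReal (W.sysDens Finset.univ d 0 η
    / W.sysDens (T \ A)ᶜ c (∑ i ∈ T \ A, c i ^ 2) η) ∂Q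

lemma ofReal_margDens_eq_sum (Q : Measure (Fin n → ℝ)) [IsProbabilityMeasure Q]
    (T : Finset (Fin n)) (c : Fin n → ℝ) (η : Fin m → (Fin n → ℝ) × ℝ) :
    ENNReal.ofReal (W.margDens Q η) = ∑ A ∈ T.powerset, W.supportRatio Q T A c η
      * ENNReal.ofReal (W.sysDens (T \ A)ᶜ c (∑ i ∈ T \ A, c i ^ 2) η) := by
  rw [W.ofReal_margDens, lintegral_eq_sum_supportEvent Q T]
  refine Finset.sum_congr rfl fun A _ => ?_
  rw [supportRatio, ← lintegral_mul_const' _ _ ENNReal.ofReal_ne_top]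
  refine lintegral_congr fun d => ?_
  rw [← ENNReal.ofReal_mul (div_pos (W.sysDens_pos _ _ _ _) (W.sysDens_pos _ _ _ _)).le,
    div_mul_cancel₀ _ (W.sysDens_pos _ _ _ _).ne']

variable (Q : Measure (Fin n → ℝ)) [SFinite Q]

lemma measurable_supportRatio_uncurry (T A : Finset (Fin n)) (c : Fin n → ℝ) :
    Measurable fun p : (Fin m → (Fin n → ℝ) × E) × (Fin n → ℝ) =>
      ENNReal.ofReal (W.sysDens Finset.univ p.2 0 (W.sysObs c p.1)
        / W.sysDens (T \ A)ᶜ c (∑ i ∈ T \ A, c i ^ 2) (W.sysObs c p.1)) := by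
  have hobs : Measurable fun p : (Fin m → (Fin n → ℝ) × E) × (Fin n → ℝ) => W.sysObs c p.1 :=
    (W.measurable_sysObs c).comp measurable_fst
  exact ((W.measurable_sysDens _ _ measurable_snd hobs).div
    (W.measurable_sysDens _ _ measurable_const hobs)).ennreal_ofReal

lemma measurable_supportRatio (T A : Finset (Fin n)) (c : Fin n → ℝ) :
    Measurable fun ω : Fin m → (Fin n → ℝ) × E => W.supportRatio Q T A c (W.sysObs c ω) :=
  (W.measurable_supportRatio_uncurry T A c).lintegral_prod_right'

lemma lintegral_supportRatio (T A : Finset (Fin n)) (c : Fin n → ℝ) :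
    ∫⁻ ω, W.supportRatio Q T A c (W.sysObs c ω) ∂(W.sysLaw n m) = Q (supportEvent T A) := by
  simp only [supportRatio]
  rw [lintegral_lintegral_swap (W.measurable_supportRatio_uncurry T A c).aemeasurable,
    setLIntegral_congr_fun (g := fun _ => 1) (measurableSet_supportEvent T A), setLIntegral_one]
  rintro d rfl
  have := W.lintegral_sysDens_div (m := m) (T \ T.filter (d · ≠ 0))ᶜ c (d := d) fun i hi => by
    by_contra hdi
    exact hi (by simp_all)
  simpa only [compl_compl] using this

lemma ofReal_exp_log_margDens_sub_le (Q : Measure (Fin n → ℝ)) [IsProbabilityMeasure Q] {ρ : ℝ}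
    (hρ : 0 < ρ) (T : Finset (Fin n)) (c : Fin n → ℝ) {D : ℝ}
    (hD : ∀ A ⊆ T, m * W.expLogOn c (T \ A)ᶜ + A.card * log ρ ≤ D)
    (η : Fin m → (Fin n → ℝ) × ℝ) :
    ENNReal.ofReal (exp (log (W.margDens Q η) - D)) ≤ ∑ A ∈ T.powerset,
      ENNReal.ofReal (ρ ^ A.card)⁻¹ * W.supportRatio Q T A c η
        * ENNReal.ofReal (exp (log (W.sysDens (T \ A)ᶜ c (∑ i ∈ T \ A, c i ^ 2) η)
          - m * W.expLogOn c (T \ A)ᶜ)) := by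
  rw [exp_sub, exp_log (W.margDens_pos Q _), div_eq_mul_inv, ← exp_neg,
    ENNReal.ofReal_mul (W.margDens_pos Q _).le, W.ofReal_margDens_eq_sum Q T c, Finset.sum_mul]
  refine Finset.sum_le_sum fun A hA => ?_
  have dens_pos := W.sysDens_pos (T \ A)ᶜ c (∑ i ∈ T \ A, c i ^ 2) η
  set p := W.sysDens (T \ A)ᶜ c (∑ i ∈ T \ A, c i ^ 2) η
  have weight_le : p * exp (-D) ≤ (ρ ^ A.card)⁻¹ * exp (log p - m * W.expLogOn c (T \ A)ᶜ) := by
    rw [← exp_log (pow_pos hρ A.card), ← exp_neg, log_pow, ← exp_add]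
    nth_rw 1 [← exp_log dens_pos]
    rw [← exp_add]
    exact exp_le_exp.2 (by linarith [hD A (Finset.mem_powerset.1 hA)])
  rw [mul_assoc, mul_comm _ (W.supportRatio _ _ _ _ _), mul_assoc, ← ENNReal.ofReal_mul dens_pos.le,
    ← ENNReal.ofReal_mul (inv_pos.2 (pow_pos hρ _)).le]
  exact mul_le_mul_right (ENNReal.ofReal_le_ofReal weight_le) _

/-- Decompose the prior according to which coordinates of `T` vanish, and compare each part with the
likelihood at `c` after hiding the coordinates it sets to zero. -/
lemma integral_log_margDens_le (Q : Measure (Fin n → ℝ)) [IsProbabilityMeasure Q] {ρ : ℝ}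
    (hρ : 0 < ρ) (T : Finset (Fin n))
    (hQ : ∀ A ⊆ T, Q (supportEvent T A) ≤ ENNReal.ofReal ρ ^ A.card) (c : Fin n → ℝ) {D : ℝ}
    (hD : ∀ A ⊆ T, m * W.expLogOn c (T \ A)ᶜ + A.card * log ρ ≤ D) {s : ℝ} (hs : 0 < s)
    (hsM : s * W.centredSup ≤ 1) :
    ∫ ω, log (W.margDens Q (W.sysObs c ω)) ∂(W.sysLaw n m)
      ≤ D + (1 + s) / s * (T.card * log 2) + m * (s * W.varBound) := by
  have mean_ratio (A) (hA : A ∈ T.powerset) : ∫⁻ ω, ENNReal.ofReal (ρ ^ A.card)⁻¹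
      * W.supportRatio Q T A c (W.sysObs c ω) ∂(W.sysLaw n m) ≤ 1 := by
    rw [lintegral_const_mul _ (W.measurable_supportRatio Q T A c), W.lintegral_supportRatio,
      ENNReal.ofReal_inv_of_pos (pow_pos hρ _), ENNReal.ofReal_pow hρ.le,
      ← ENNReal.inv_mul_cancel (a := ENNReal.ofReal ρ ^ A.card) (by simp [hρ]) (by simp)]
    gcongr
    exact hQ A (Finset.mem_powerset.1 hA)
  have moment (A) (_ : A ∈ T.powerset) : ∫⁻ ω, ENNReal.ofReal (exp
      (log (W.sysDens (T \ A)ᶜ c (∑ i ∈ T \ A, c i ^ 2) (W.sysObs c ω))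
        - m * W.expLogOn c (T \ A)ᶜ)) ^ s ∂(W.sysLaw n m)
      ≤ ENNReal.ofReal (exp (m * (s ^ 2 * W.varBound))) := by
    refine (lintegral_congr fun ω => ?_).trans_le
      (W.lintegral_exp_mul_log_sysDens_sub_le (T \ A)ᶜ c (∑ i ∈ T \ A, c i ^ 2) hs.le hsM)
    rw [ENNReal.ofReal_rpow_of_pos (exp_pos _), ← exp_mul, mul_comm]
    simp only [expLogOn, compl_compl]
  have := integral_le_of_exp_le_sum_mul
    ((W.integrable_log_margDens Q c).sub (integrable_const D)) ⟨∅, by simp⟩ hs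
    (fun A _ => (W.measurable_supportRatio Q T A c).const_mul _)
    (fun A _ => ((W.measurable_sysDens _ _ measurable_const
      (W.measurable_sysObs c)).log.sub_const _).exp.ennreal_ofReal) mean_ratio moment
    fun ω => W.ofReal_exp_log_margDens_sub_le Q hρ T c hD (W.sysObs c ω)
  rw [integral_sub' (W.integrable_log_margDens Q c) (integrable_const D),
    Finset.card_powerset] at this
  have hdiv : m * (s ^ 2 * W.varBound) / s = m * (s * W.varBound) := by field_simp
  simp only [hdiv, integral_const, probReal_univ, one_smul, Nat.cast_pow, Nat.cast_ofNat,
    log_pow] at this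
  linarith

end LowerBound

end Channel

section SparsePrior

variable {ρ : ℝ} {P0 : Measure ℝ}

lemma isProbabilityMeasure_sparsePrior [IsProbabilityMeasure P0] (hρ : ρ ∈ Set.Icc (0 : ℝ) 1) :
    IsProbabilityMeasure (sparsePrior ρ P0) := by
  constructor
  simp only [sparsePrior, Measure.coe_add, Measure.coe_smul, Pi.add_apply, Pi.smul_apply,
    measure_univ, smul_eq_mul, mul_one]
  rw [← ENNReal.ofReal_add (sub_nonneg.2 hρ.2) hρ.1, sub_add_cancel, ENNReal.ofReal_one]

lemma sparsePrior_compl_zero_le [IsProbabilityMeasure P0] :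
    sparsePrior ρ P0 {0}ᶜ ≤ ENNReal.ofReal ρ := by
  simpa [sparsePrior] using mul_le_mul_right (prob_le_one (μ := P0) (s := {0}ᶜ)) (ENNReal.ofReal ρ)

lemma ae_sparsePrior {p : ℝ → Prop} (h0 : p 0) (h : ∀ᵐ x ∂P0, p x) :
    ∀ᵐ x ∂(sparsePrior ρ P0), p x := by
  rw [sparsePrior, ae_add_measure_iff]
  exact ⟨Measure.ae_smul_measure ((ae_dirac_eq (0 : ℝ)).symm ▸ h0) _, Measure.ae_smul_measure h _⟩

lemma ae_iid {P : Measure ℝ} [IsProbabilityMeasure P] {p : ℝ → Prop} (h : ∀ᵐ x ∂P, p x) (n : ℕ) :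
    ∀ᵐ x ∂(iid n P), ∀ i, p (x i) :=
  ae_all_iff.2 fun i =>
    (measurePreserving_eval (fun _ : Fin n => P) i).quasiMeasurePreserving.ae h

lemma integrable_sparsePrior {f : ℝ → ℝ} (hf : Integrable f P0) :
    Integrable f (sparsePrior ρ P0) :=
  ((integrable_dirac (by simp)).smul_measure ENNReal.ofReal_ne_top).add_measure
    (hf.smul_measure ENNReal.ofReal_ne_top)

lemma integral_sparsePrior (hρ : ρ ∈ Set.Icc (0 : ℝ) 1) {f : ℝ → ℝ} (hf : Integrable f P0) :
    ∫ x, f x ∂(sparsePrior ρ P0) = (1 - ρ) * f 0 + ρ * ∫ x, f x ∂P0 := by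
  rw [sparsePrior, integral_add_measure ((integrable_dirac (by simp)).smul_measure
    ENNReal.ofReal_ne_top) (hf.smul_measure ENNReal.ofReal_ne_top), integral_smul_measure,
    integral_smul_measure, integral_dirac, ENNReal.toReal_ofReal (sub_nonneg.2 hρ.2),
    ENNReal.toReal_ofReal hρ.1, smul_eq_mul, smul_eq_mul]

lemma memLp_two_sparsePrior {f : ℝ → ℝ} (hf : MemLp f 2 P0) : MemLp f 2 (sparsePrior ρ P0) :=
  (memLp_two_iff_integrable_sq ((aestronglyMeasurable_dirac.smul_measure _).add_measure
    (hf.1.smul_measure _))).2 (integrable_sparsePrior hf.integrable_sq)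

end SparsePrior

section EmpiricalStatistics

variable {ρ : ℝ} {P P0 : Measure ℝ} {n : ℕ} {f : ℝ → ℝ}

/-- The empirical sum of `f` over the coordinates, normalised by `k`; for a sparse signal `k` is the
expected number of nonzero coordinates. -/
def emp (k : ℝ) (f : ℝ → ℝ) (x : Fin n → ℝ) : ℝ := (∑ i, f (x i)) / k

lemma measurable_emp (hf : Measurable f) (k : ℝ) :
    Measurable (emp k f : (Fin n → ℝ) → ℝ) :=
  (Finset.measurable_sum _ fun i _ => hf.comp (measurable_pi_apply i)).div_const k

lemma memLp_two_emp [IsProbabilityMeasure P] (hf : MemLp f 2 P) (n : ℕ) (k : ℝ) :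
    MemLp (emp k f : (Fin n → ℝ) → ℝ) 2 (iid n P) := by
  have emp_eq : (emp k f : (Fin n → ℝ) → ℝ) = fun x => (∑ i, f (x i)) * k⁻¹ := rfl
  rw [emp_eq]
  exact (memLp_finsetSum _ fun i _ => hf.comp_measurePreserving
    (measurePreserving_eval (fun _ : Fin n => P) i)).mul_const k⁻¹

lemma integral_emp [IsProbabilityMeasure P] (hf : Integrable f P) (n : ℕ) (k : ℝ) :
    ∫ x : Fin n → ℝ, emp k f x ∂(iid n P) = n * (∫ t, f t ∂P) / k := by
  have mean_coord (i : Fin n) : ∫ x : Fin n → ℝ, f (x i) ∂(iid n P) = ∫ t, f t ∂P :=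
    integral_comp_eval (μ := fun _ : Fin n => P) (i := i) hf.1
  have int_coord (i : Fin n) : Integrable (fun x : Fin n → ℝ => f (x i)) (iid n P) :=
    integrable_comp_eval (μ := fun _ : Fin n => P) hf
  simp only [emp]
  rw [integral_div, integral_finsetSum _ fun i _ => int_coord i]
  simp [mean_coord]

lemma variance_emp_le [IsProbabilityMeasure P] (hf : MemLp f 2 P) (n : ℕ) (k : ℝ) :
    variance (emp k f : (Fin n → ℝ) → ℝ) (iid n P) ≤ n * (∫ t, f t ^ 2 ∂P) / k ^ 2 := by
  have variance_sum : variance (fun x : Fin n → ℝ => ∑ i, f (x i)) (iid n P)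
      = n * variance f P := by
    have := variance_sum_pi (μ := fun _ : Fin n => P) (X := fun _ => f) fun _ => hf
    rw [Finset.sum_fn] at this
    simpa [iid] using this
  have emp_eq : (emp k f : (Fin n → ℝ) → ℝ) = fun x => k⁻¹ * ∑ i, f (x i) := by
    ext x; rw [emp, div_eq_inv_mul]
  rw [emp_eq, variance_const_mul, variance_sum, inv_pow, ← div_eq_inv_mul]
  gcongr
  exact variance_le_expectation_sq hf.1

lemma integral_emp_sub_sq_le [IsProbabilityMeasure P0] (hρ : ρ ∈ Set.Ioo (0 : ℝ) 1)
    (hf0 : f 0 = 0) (hf : MemLp f 2 P0) (hn : 0 < n) :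
    ∫ x : Fin n → ℝ, (emp (n * ρ) f x - ∫ t, f t ∂P0) ^ 2 ∂(iid n (sparsePrior ρ P0))
      ≤ (∫ t, f t ^ 2 ∂P0) / (n * ρ) := by
  have hρ' := Set.Ioo_subset_Icc_self hρ
  have := isProbabilityMeasure_sparsePrior (P0 := P0) hρ'
  have hρ0 : 0 < ρ := hρ.1
  have hfP := memLp_two_sparsePrior (ρ := ρ) hf
  have mean : ∫ x : Fin n → ℝ, emp (n * ρ) f x ∂(iid n (sparsePrior ρ P0)) = ∫ t, f t ∂P0 := by
    rw [integral_emp (hfP.integrable one_le_two), integral_sparsePrior hρ'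
      (hf.integrable one_le_two), hf0]
    field_simp
    ring
  rw [← mean, ← variance_eq_integral (memLp_two_emp hfP n _).1.aemeasurable]
  refine (variance_emp_le hfP n _).trans_eq ?_
  rw [integral_sparsePrior hρ' hf.integrable_sq, hf0]
  field_simp
  ring

end EmpiricalStatistics

section Concentration

open Filter Topology

lemma exists_abs_sub_le_add_mul_dist_sq {E : Type*} [PseudoMetricSpace E] {F : E → ℝ} {M : ℝ}
    (hM : ∀ y, |F y| ≤ M) {z : E} (hF : ContinuousAt F z) {ε : ℝ} (hε : 0 < ε) :
    ∃ C, ∀ y, |F y - F z| ≤ ε + C * dist y z ^ 2 := by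
  obtain ⟨δ, hδ, near⟩ := Metric.continuousAt_iff.1 hF ε hε
  have hM0 : 0 ≤ M := (abs_nonneg _).trans (hM z)
  refine ⟨2 * M / δ ^ 2, fun y => ?_⟩
  rcases lt_or_ge (dist y z) δ with hy | hy
  · have : 0 ≤ 2 * M / δ ^ 2 * dist y z ^ 2 := by positivity
    linarith [(Real.dist_eq _ _).symm.trans_lt (near hy)]
  · calc |F y - F z| ≤ 2 * M := by linarith [abs_sub (F y) (F z), hM y, hM z]
      _ = 2 * M / δ ^ 2 * δ ^ 2 := by field_simp
      _ ≤ 2 * M / δ ^ 2 * dist y z ^ 2 := by gcongr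
      _ ≤ ε + 2 * M / δ ^ 2 * dist y z ^ 2 := le_add_of_nonneg_left hε.le

lemma tendsto_integral_comp_of_tendsto_integral_dist_sq {Ω : ℕ → Type*}
    [∀ n, MeasurableSpace (Ω n)] {P : ∀ n, Measure (Ω n)} [∀ n, IsProbabilityMeasure (P n)]
    {E : Type*} [PseudoMetricSpace E] {X : ∀ n, Ω n → E} {z : E} {F : E → ℝ} {M : ℝ}
    (hM : ∀ y, |F y| ≤ M) (hF : ContinuousAt F z)
    (hFX : ∀ n, AEStronglyMeasurable (fun ω => F (X n ω)) (P n))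
    (hint : ∀ n, Integrable (fun ω => dist (X n ω) z ^ 2) (P n))
    (hX : Tendsto (fun n => ∫ ω, dist (X n ω) z ^ 2 ∂(P n)) atTop (𝓝 0)) :
    Tendsto (fun n => ∫ ω, F (X n ω) ∂(P n)) atTop (𝓝 (F z)) := by
  refine Metric.tendsto_atTop'.2 fun ε hε => ?_
  obtain ⟨C, hC⟩ := exists_abs_sub_le_add_mul_dist_sq hM hF (half_pos hε)
  have deviation_le (n) : |∫ ω, F (X n ω) ∂(P n) - F z|
      ≤ ε / 2 + C * ∫ ω, dist (X n ω) z ^ 2 ∂(P n) := by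
    have int_FX : Integrable (fun ω => F (X n ω)) (P n) :=
      .of_bound (hFX n) M (.of_forall fun ω => hM _)
    calc |∫ ω, F (X n ω) ∂(P n) - F z| = |∫ ω, (F (X n ω) - F z) ∂(P n)| := by
          rw [integral_sub int_FX (integrable_const _)]; simp
      _ ≤ ∫ ω, |F (X n ω) - F z| ∂(P n) := abs_integral_le_integral_abs
      _ ≤ ∫ ω, (ε / 2 + C * dist (X n ω) z ^ 2) ∂(P n) :=
          integral_mono (int_FX.sub (integrable_const _)).abs
            ((integrable_const _).add ((hint n).const_mul C)) fun ω => hC _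
      _ = ε / 2 + C * ∫ ω, dist (X n ω) z ^ 2 ∂(P n) := by
          rw [integral_add (integrable_const _) ((hint n).const_mul C), integral_const_mul]; simp
  have small : ∀ᶠ n in atTop, C * ∫ ω, dist (X n ω) z ^ 2 ∂(P n) < ε / 2 :=
    (hX.const_mul C).eventually_lt_const (by simpa using half_pos hε)
  obtain ⟨N, hN⟩ := eventually_atTop.1 small
  refine ⟨N, fun n hn => ?_⟩
  rw [Real.dist_eq]
  linarith [deviation_le n, hN n hn.le]

lemma dist_sq_le_sum_sq_sub {ι : Type*} [Fintype ι] (y z : ι → ℝ) :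
    dist y z ^ 2 ≤ ∑ a, (y a - z a) ^ 2 := by
  have sum_nonneg : 0 ≤ ∑ a, (y a - z a) ^ 2 := Finset.sum_nonneg fun a _ => sq_nonneg _
  refine (Real.le_sqrt dist_nonneg sum_nonneg).1
    ((dist_pi_le_iff (Real.sqrt_nonneg _)).2 fun a => ?_)
  rw [Real.dist_eq]
  exact abs_le_sqrt (Finset.single_le_sum (f := fun a => (y a - z a) ^ 2)
    (fun a _ => sq_nonneg _) (Finset.mem_univ a))

lemma tendsto_integral_comp_emp {P0 : Measure ℝ} [IsProbabilityMeasure P0] {ρ : ℕ → ℝ}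
    (hρ : ∀ n, ρ n ∈ Set.Ioo (0 : ℝ) 1) (hk : Tendsto (fun n => n * ρ n) atTop atTop)
    {ι : Type*} [Finite ι] {f : ι → ℝ → ℝ} (hfm : ∀ a, Measurable (f a)) (hf0 : ∀ a, f a 0 = 0)
    (hf : ∀ a, MemLp (f a) 2 P0) {F : (ι → ℝ) → ℝ} (hF : Continuous F) {M : ℝ}
    (hM : ∀ y, |F y| ≤ M) :
    Tendsto (fun n : ℕ => ∫ x : Fin n → ℝ, F (fun a => emp (n * ρ n) (f a) x)
      ∂(iid n (sparsePrior (ρ n) P0))) atTop (𝓝 (F fun a => ∫ t, f a t ∂P0)) := by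
  have := Fintype.ofFinite ι
  have (n : ℕ) := isProbabilityMeasure_sparsePrior (P0 := P0) (Set.Ioo_subset_Icc_self (hρ n))
  have meas (n : ℕ) : Measurable fun (x : Fin n → ℝ) a => emp (n * ρ n) (f a) x :=
    measurable_pi_iff.2 fun a => measurable_emp (hfm a) _
  have int_sq (n : ℕ) (a) : Integrable (fun x : Fin n → ℝ =>
      (emp (n * ρ n) (f a) x - ∫ t, f a t ∂P0) ^ 2) (iid n (sparsePrior (ρ n) P0)) :=
    ((memLp_two_emp (memLp_two_sparsePrior (hf a)) n _).sub (memLp_const _)).integrable_sq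
  have int_dist (n : ℕ) : Integrable (fun x : Fin n → ℝ => dist (fun a => emp (n * ρ n) (f a) x)
      (fun a => ∫ t, f a t ∂P0) ^ 2) (iid n (sparsePrior (ρ n) P0)) := by
    refine (integrable_finsetSum Finset.univ fun a _ => int_sq n a).mono'
      (((meas n).dist measurable_const).pow_const 2).aestronglyMeasurable (.of_forall fun x => ?_)
    rw [norm_of_nonneg (sq_nonneg _)]
    exact dist_sq_le_sum_sq_sub _ _
  refine tendsto_integral_comp_of_tendsto_integral_dist_sq hM hF.continuousAt
    (fun n => (hF.measurable.comp (meas n)).aestronglyMeasurable) int_dist ?_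
  have bound_tendsto : Tendsto (fun n : ℕ => ∑ a, (∫ t, f a t ^ 2 ∂P0) / (n * ρ n)) atTop (𝓝 0) :=
    by simpa using tendsto_finsetSum Finset.univ fun a _ => hk.const_div_atTop (∫ t, f a t ^ 2 ∂P0)
  refine tendsto_of_tendsto_of_tendsto_of_le_of_le' tendsto_const_nhds bound_tendsto
    (.of_forall fun n => integral_nonneg fun x => sq_nonneg _) ?_
  filter_upwards [eventually_gt_atTop 0] with n hn
  calc ∫ x, dist (fun a => emp (n * ρ n) (f a) x) (fun a => ∫ t, f a t ∂P0) ^ 2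
        ∂(iid n (sparsePrior (ρ n) P0))
      ≤ ∫ x, ∑ a, (emp (n * ρ n) (f a) x - ∫ t, f a t ∂P0) ^ 2 ∂(iid n (sparsePrior (ρ n) P0)) :=
        integral_mono (int_dist n) (integrable_finsetSum _ fun a _ => int_sq n a)
          fun x => dist_sq_le_sum_sq_sub _ _
    _ ≤ ∑ a, (∫ t, f a t ^ 2 ∂P0) / (n * ρ n) := by
        rw [integral_finsetSum _ fun a _ => int_sq n a]
        exact Finset.sum_le_sum fun a _ => integral_emp_sub_sq_le (hρ n) (hf0 a) (hf a) hn

end Concentration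

section UpperSets

variable {ι α : Type*} [DecidableEq ι] [LE α] {T : Finset ι} {w : ι → α} {G : Finset ι → ℝ}

/- Take a maximiser of largest cardinality. If it misses a heavier element, swapping that element in
gives a second maximiser, and by supermodularity the union of the two is a larger one. -/
lemma exists_upperSet_forall_le
    (supermodular : ∀ A ⊆ T, ∀ B ⊆ T, G A + G B ≤ G (A ∪ B) + G (A ∩ B))
    (swap : ∀ A ⊆ T, ∀ i ∈ A, ∀ j ∈ T \ A, w i ≤ w j → G A ≤ G (insert j (A.erase i))) :
    ∃ A ⊆ T, (∀ i ∈ A, ∀ j ∈ T, w i ≤ w j → j ∈ A) ∧ ∀ B ⊆ T, G B ≤ G A := by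
  obtain ⟨A, hAT, hA⟩ := Finset.exists_max_image T.powerset
    (fun A => toLex (G A, A.card)) ⟨∅, Finset.empty_mem_powerset T⟩
  simp only [Finset.mem_powerset, Prod.Lex.toLex_le_toLex] at hAT hA
  have max (B) (hB : B ⊆ T) : G B ≤ G A := (hA B hB).elim le_of_lt fun h => h.1.le
  refine ⟨A, hAT, fun i hi j hj hij => by_contra fun hjA => ?_, max⟩
  have hA' : insert j (A.erase i) ⊆ T :=
    Finset.insert_subset hj ((Finset.erase_subset i A).trans hAT)
  have union_eq : A ∪ insert j (A.erase i) = insert j A := by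
    rw [Finset.union_insert, Finset.union_eq_left.2 (Finset.erase_subset i A)]
  have max_insert : G A ≤ G (insert j A) := by
    linarith [supermodular A hAT _ hA', swap A hAT i hi j (Finset.mem_sdiff.2 ⟨hj, hjA⟩) hij,
      max (A ∩ insert j (A.erase i)) (Finset.inter_subset_left.trans hAT), congrArg G union_eq]
  have card_lt : A.card < (insert j A).card := by rw [Finset.card_insert_of_notMem hjA]; omega
  rcases hA _ (Finset.insert_subset hj hAT) with h | h
  · exact h.not_ge max_insert
  · exact h.2.not_gt card_lt

end UpperSets

namespace Channel

variable {E : Type*} [MeasurableSpace E] (W : Channel E) {n m : ℕ}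

section UpperSets

lemma expLogOn_congr {c : Fin n → ℝ} {S T : Finset (Fin n)}
    (h : ∑ i ∈ S, c i ^ 2 = ∑ i ∈ T, c i ^ 2) : W.expLogOn c S = W.expLogOn c T :=
  (W.expLogOn_le_expLogOn_of_sum_sq_le h.le).antisymm (W.expLogOn_le_expLogOn_of_sum_sq_le h.ge)

lemma expLogOn_add_card_mul_le {T : Finset (Fin n)} {c : Fin n → ℝ} {l D : ℝ}
    (hD : ∀ A ⊆ T, (∀ i ∈ A, ∀ j ∈ T, |c i| ≤ |c j| → j ∈ A) →
      m * W.expLogOn c A + A.card * l ≤ D) {A : Finset (Fin n)} (hA : A ⊆ T) :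
    m * W.expLogOn c A + A.card * l ≤ D := by
  have supermodular (A B : Finset (Fin n)) : m * W.expLogOn c A + A.card * l
      + (m * W.expLogOn c B + B.card * l) ≤ m * W.expLogOn c (A ∪ B) + (A ∪ B).card * l
        + (m * W.expLogOn c (A ∩ B) + (A ∩ B).card * l) := by
    have card : ((A ∪ B).card : ℝ) + (A ∩ B).card = A.card + B.card := mod_cast
      Finset.card_union_add_card_inter A B
    linear_combination (m : ℝ) * W.expLogOn_add_expLogOn_le c A B - l * card
  have swap (A : Finset (Fin n)) (i) (hi : i ∈ A) (j) (hj : j ∈ T \ A) (hij : |c i| ≤ |c j|) :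
      m * W.expLogOn c A + A.card * l
        ≤ m * W.expLogOn c (insert j (A.erase i)) + (insert j (A.erase i)).card * l := by
    have hjA : j ∉ A.erase i := fun h => (Finset.mem_sdiff.1 hj).2 (Finset.mem_of_mem_erase h)
    rw [Finset.card_insert_of_notMem hjA, Finset.card_erase_add_one hi]
    gcongr
    refine W.expLogOn_le_expLogOn_of_sum_sq_le ?_
    rw [Finset.sum_insert hjA, ← Finset.add_sum_erase A _ hi]
    exact add_le_add_left (sq_le_sq.2 hij) _
  obtain ⟨B, hBT, upper, max⟩ := exists_upperSet_forall_le (w := fun i => |c i|)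
    (fun A _ B _ => supermodular A B) fun A _ => swap A
  exact (max A hA).trans (hD B hBT upper)

lemma integral_log_margDens_le_of_upperSet (Q : Measure (Fin n → ℝ)) [IsProbabilityMeasure Q]
    {ρ : ℝ} (hρ : 0 < ρ) {T : Finset (Fin n)}
    (hQ : ∀ A, Q (supportEvent T A) ≤ ENNReal.ofReal ρ ^ A.card) {c : Fin n → ℝ}
    (hT : ∀ i, i ∈ T ↔ c i ≠ 0) {D : ℝ}
    (hD : ∀ A ⊆ T, (∀ i ∈ A, ∀ j ∈ T, |c i| ≤ |c j| → j ∈ A) →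
      m * W.expLogOn c A + A.card * log ρ ≤ D) {s : ℝ} (hs : 0 < s)
    (hsM : s * W.centredSup ≤ 1) :
    ∫ ω, log (W.margDens Q (W.sysObs c ω)) ∂(W.sysLaw n m)
      ≤ D + (1 + s) / s * (T.card * log 2) + m * (s * W.varBound) := by
  refine W.integral_log_margDens_le Q hρ T (fun A _ => hQ A) c (fun A hA => ?_) hs hsM
  rw [W.expLogOn_congr (T := A)]
  · exact W.expLogOn_add_card_mul_le hD hA
  · refine (Finset.sum_subset (fun i hi => ?_) fun i hi hiA => ?_).symm
    · simp [hi]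
    · have : i ∉ T := fun hiT => by simp [hiT, hiA] at hi
      simpa [hT] using this

end UpperSets

end Channel

section LevelSets

variable {n K : ℕ} {v : Fin K → ℝ} {k : ℝ} {x : Fin n → ℝ}

/-- The signal normalised as it enters the observations. -/
def scaled (k : ℝ) (x : Fin n → ℝ) : Fin n → ℝ := fun i => x i / √k

/-- The `j`-th of the level sets `{|t| ≥ v 0}, …, {|t| ≥ v (K - 1)}, ∅`; the last one encodes the
threshold `v_{K+1} = ∞`. -/
def levelSet (v : Fin K → ℝ) (j : Fin (K + 1)) : Set ℝ := {t | ∃ h : (j : ℕ) < K, v ⟨j, h⟩ ≤ |t|}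

@[fun_prop]
lemma measurable_scaled (k : ℝ) : Measurable (scaled k : (Fin n → ℝ) → Fin n → ℝ) := by
  unfold scaled; fun_prop

lemma measurableSet_levelSet (v : Fin K → ℝ) (j : Fin (K + 1)) : MeasurableSet (levelSet v j) := by
  have : levelSet v j = ⋃ h : (j : ℕ) < K, {t | v ⟨j, h⟩ ≤ |t|} := by ext t; simp [levelSet]
  rw [this]
  exact .iUnion fun _ => measurableSet_le measurable_const measurable_id.abs

lemma zero_notMem_levelSet (hv : ∀ j, 0 < v j) (j : Fin (K + 1)) : (0 : ℝ) ∉ levelSet v j :=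
  fun ⟨h, hj⟩ => by simpa using (hv ⟨j, h⟩).trans_le hj

lemma levelSet_last (v : Fin K → ℝ) : levelSet v (Fin.last K) = ∅ := by simp [levelSet]

lemma levelSet_castSucc (v : Fin K → ℝ) (j : Fin K) : levelSet v j.castSucc = {t | v j ≤ |t|} := by
  simp [levelSet]

open scoped Classical in
lemma exists_eq_filter_levelSet (hx : ∀ i, x i = 0 ∨ |x i| ∈ Set.range v)
    {A : Finset (Fin n)} (hA : ∀ i ∈ A, x i ≠ 0)
    (upper : ∀ i ∈ A, ∀ j, x j ≠ 0 → |x i| ≤ |x j| → j ∈ A) :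
    ∃ j, A = Finset.univ.filter (x · ∈ levelSet v j) := by
  rcases A.eq_empty_or_nonempty with rfl | hne
  · exact ⟨Fin.last K, by simp [levelSet_last]⟩
  obtain ⟨i, hi, min⟩ := A.exists_min_image (|x ·|) hne
  obtain ⟨j, hj⟩ := (hx i).resolve_left (hA i hi)
  refine ⟨j.castSucc, Finset.ext fun i' => ?_⟩
  simp only [levelSet_castSucc, Set.mem_ofPred_eq, Finset.mem_filter_univ, hj]
  refine ⟨min i', fun h => upper i hi i' (fun h0 => ?_) h⟩
  simp [h0, hA i hi] at h

lemma sum_filter_scaled_sq (hk : 0 ≤ k) (U : Set ℝ) [DecidablePred (· ∈ U)]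
    (x : Fin n → ℝ) :
    ∑ i with x i ∈ U, scaled k x i ^ 2 = emp k (U.indicator (· ^ 2)) x := by
  simp only [scaled, emp, div_pow, sq_sqrt hk, ← Finset.sum_div, Finset.sum_filter,
    Set.indicator_apply]

lemma sum_scaled_sq (hk : 0 ≤ k) (x : Fin n → ℝ) : ∑ i, scaled k x i ^ 2 = emp k (· ^ 2) x := by
  simp only [scaled, emp, div_pow, sq_sqrt hk, ← Finset.sum_div]

lemma sum_compl_filter_scaled_sq (hk : 0 ≤ k) (U : Set ℝ) [DecidablePred (· ∈ U)]
    (x : Fin n → ℝ) : ∑ i ∈ (Finset.univ.filter (x · ∈ U))ᶜ, scaled k x i ^ 2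
      = emp k (· ^ 2) x - emp k (U.indicator (· ^ 2)) x := by
  rw [← sum_scaled_sq hk, ← sum_filter_scaled_sq hk U x,
    ← Finset.sum_add_sum_compl (Finset.univ.filter (x · ∈ U)), add_sub_cancel_left]

lemma card_filter_mem_eq (hk : k ≠ 0) (U : Set ℝ) [DecidablePred (· ∈ U)]
    (x : Fin n → ℝ) :
    ((Finset.univ.filter (x · ∈ U)).card : ℝ) = k * emp k (U.indicator 1) x := by
  rw [emp, mul_div_cancel₀ _ hk]
  simp [Set.indicator_apply]

/-- The functions whose empirical averages determine the lower bound: the square, and the square and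
the indicator function restricted to each level set. -/
def levelStat (v : Fin K → ℝ) : Option (Fin (K + 1) ⊕ Fin (K + 1)) → ℝ → ℝ
  | none => (· ^ 2)
  | some (.inl j) => (levelSet v j).indicator (· ^ 2)
  | some (.inr j) => (levelSet v j).indicator 1

lemma measurable_levelStat (v : Fin K → ℝ) (a) : Measurable (levelStat v a) := by
  rcases a with - | j | j
  · exact measurable_id.pow_const 2
  · exact (measurable_id.pow_const 2).indicator (measurableSet_levelSet v j)
  · exact measurable_one.indicator (measurableSet_levelSet v j)

lemma levelStat_apply_zero (hv : ∀ j, 0 < v j) (a) : levelStat v a 0 = 0 := by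
  rcases a with - | j | j <;> simp [levelStat, zero_notMem_levelSet hv]

lemma memLp_levelStat {P0 : Measure ℝ} [IsFiniteMeasure P0] {p : ℝ≥0∞}
    (hP0 : MemLp (fun t => t ^ 2) p P0) (a) : MemLp (levelStat v a) p P0 := by
  rcases a with - | j | j
  · exact hP0
  · exact hP0.indicator (measurableSet_levelSet v j)
  · exact (memLp_const (1 : ℝ)).indicator (measurableSet_levelSet v j)

end LevelSets

section SignalLaw

variable {ρ : ℝ} {P0 : Measure ℝ} {n : ℕ}

/-- The law of the normalised sparse signal. -/
def signalLaw (ρ : ℝ) (P0 : Measure ℝ) (n : ℕ) : Measure (Fin n → ℝ) :=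
  (iid n (sparsePrior ρ P0)).map (scaled (n * ρ))

lemma isProbabilityMeasure_signalLaw [IsProbabilityMeasure P0] (hρ : ρ ∈ Set.Icc (0 : ℝ) 1)
    (n : ℕ) : IsProbabilityMeasure (signalLaw ρ P0 n) :=
  have := isProbabilityMeasure_sparsePrior (P0 := P0) hρ
  Measure.isProbabilityMeasure_map (measurable_scaled _).aemeasurable

lemma signalLaw_supportEvent_le [IsProbabilityMeasure P0] (hρ : ρ ∈ Set.Ioo (0 : ℝ) 1)
    (T A : Finset (Fin n)) :
    signalLaw ρ P0 n (supportEvent T A) ≤ ENNReal.ofReal ρ ^ A.card := by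
  have := isProbabilityMeasure_sparsePrior (P0 := P0) (Set.Ioo_subset_Icc_self hρ)
  rw [signalLaw, Measure.map_apply (measurable_scaled _) (measurableSet_supportEvent T A)]
  have preimage : scaled (n * ρ) ⁻¹' supportEvent T A = supportEvent T A := by
    rcases n.eq_zero_or_pos with rfl | hn
    · exact Set.ext fun x => by simp [supportEvent, Subsingleton.elim (scaled _ x) x]
    have : √(n * ρ) ≠ 0 := (sqrt_pos.2 (mul_pos (Nat.cast_pos.2 hn) hρ.1)).ne'
    ext x
    simp only [supportEvent, scaled, Set.mem_preimage, Set.mem_ofPred_eq, ne_eq,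
      div_eq_zero_iff, this, or_false]
  rw [preimage]
  exact measure_supportEvent_le sparsePrior_compl_zero_le T A

end SignalLaw

namespace Channel

variable {E : Type*} [MeasurableSpace E] (W : Channel E) {n m K : ℕ} {v : Fin K → ℝ}

section PointwiseLowerBound

/-- The information carried by one output at input variance `S`, relative to an observer who knows
the part of the input of variance `q` and takes the rest for noise of variance `τ`. -/
def info (S q τ : ℝ) : ℝ := W.expLog S 0 0 - W.expLog q (S - q) τ

lemma abs_info_le (S q τ : ℝ) : |W.info S q τ| ≤ 2 * ∫ e, W.envelope e ∂W.noise := by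
  unfold info
  linarith [abs_sub (W.expLog S 0 0) (W.expLog q (S - q) τ), W.abs_expLog_le S 0 0,
    W.abs_expLog_le q (S - q) τ]

lemma continuous_info : Continuous fun p : ℝ × ℝ × ℝ => W.info p.1 p.2.1 p.2.2 :=
  (W.continuous_expLog.comp
    (by fun_prop : Continuous fun p : ℝ × ℝ × ℝ => (p.1, (0 : ℝ), (0 : ℝ)))).sub
    (W.continuous_expLog.comp
      (by fun_prop : Continuous fun p : ℝ × ℝ × ℝ => (p.2.1, p.1 - p.2.1, p.2.2)))

/-- The least cost of a level as a function of the averages of `levelStat`, the relative size of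
each level being truncated at `1` to make it bounded. -/
def minCost (γ : ℝ) (y : Option (Fin (K + 1) ⊕ Fin (K + 1)) → ℝ) : ℝ :=
  Finset.univ.inf' Finset.univ_nonempty fun j => W.info (y none) (y (some (.inl j)))
    (y none - y (some (.inl j))) + min |y (some (.inr j))| 1 / γ

lemma continuous_minCost (γ : ℝ) : Continuous (W.minCost γ : (Option (Fin (K + 1) ⊕ _) → ℝ) → ℝ) :=
  Continuous.finset_inf'_apply _ fun j _ => (W.continuous_info.comp (by fun_prop :
    Continuous fun y : Option (Fin (K + 1) ⊕ Fin (K + 1)) → ℝ =>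
      (y none, y (some (.inl j)), y none - y (some (.inl j))))).add (by fun_prop)

lemma abs_minCost_le {γ : ℝ} (hγ : 0 < γ) (y : Option (Fin (K + 1) ⊕ Fin (K + 1)) → ℝ) :
    |W.minCost γ y| ≤ 2 * ∫ e, W.envelope e ∂W.noise + 1 / γ := by
  obtain ⟨j, -, hj⟩ := Finset.exists_mem_eq_inf' Finset.univ_nonempty fun j : Fin (K + 1) =>
    W.info (y none) (y (some (.inl j))) (y none - y (some (.inl j))) + min |y (some (.inr j))| 1 / γ
  rw [minCost, hj]
  refine (abs_add_le _ _).trans (add_le_add (W.abs_info_le _ _ _) ?_)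
  rw [abs_of_nonneg (by positivity)]
  gcongr
  exact min_le_right _ _

lemma expLogOn_scaled_filter {k : ℝ} (hk : 0 ≤ k) (U : Set ℝ) [DecidablePred (· ∈ U)]
    (x : Fin n → ℝ) :
    W.expLogOn (scaled k x) (Finset.univ.filter (x · ∈ U))
      = W.expLog (emp k (U.indicator (· ^ 2)) x)
        (emp k (· ^ 2) x - emp k (U.indicator (· ^ 2)) x)
        (emp k (· ^ 2) x - emp k (U.indicator (· ^ 2)) x) := by
  rw [expLogOn, sum_compl_filter_scaled_sq hk U x, sum_filter_scaled_sq hk U x]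

lemma minCost_le (γ : ℝ) (y : Option (Fin (K + 1) ⊕ Fin (K + 1)) → ℝ) (j : Fin (K + 1)) :
    W.minCost γ y ≤ W.info (y none) (y (some (.inl j))) (y none - y (some (.inl j)))
      + min |y (some (.inr j))| 1 / γ :=
  Finset.inf'_le _ (Finset.mem_univ j)

open scoped Classical in
lemma expLogOn_levelSet_add_card_mul_log_le {k ρ γ : ℝ} (hk : 0 < k) (hρ : ρ ∈ Set.Ioo (0 : ℝ) 1)
    (hγ : 0 < γ) (hm : (m : ℝ) = γ * k * |log ρ|) (x : Fin n → ℝ) (j : Fin (K + 1)) :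
    m * W.expLogOn (scaled k x) (Finset.univ.filter (x · ∈ levelSet v j))
        + (Finset.univ.filter (x · ∈ levelSet v j)).card * log ρ
      ≤ m * (W.expLog (emp k (· ^ 2) x) 0 0
        - W.minCost γ fun a => emp k (levelStat v a) x) := by
  set N := emp k ((levelSet v j).indicator 1) x
  have N_nonneg : 0 ≤ N := div_nonneg
    (Finset.sum_nonneg fun i _ => Set.indicator_nonneg (fun _ _ => zero_le_one) _) hk.le
  have min_le : min |N| 1 / γ ≤ N / γ := by
    gcongr
    exact (min_le_left _ _).trans (abs_of_nonneg N_nonneg).le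
  have cost := mul_le_mul_of_nonneg_left ((W.minCost_le γ (fun a => emp k (levelStat v a) x)
    j).trans (add_le_add_right min_le _)) m.cast_nonneg
  have penalty : k * N * log ρ = -(m * (N / γ)) := by
    rw [hm, abs_of_neg (log_neg hρ.1 hρ.2)]
    field_simp
  rw [W.expLogOn_scaled_filter hk.le (levelSet v j) x, card_filter_mem_eq hk.ne' (levelSet v j) x,
    penalty]
  simp only [levelStat, info] at cost
  simp only [levelStat]
  linarith

lemma le_infoAt_scaled {k ρ γ s : ℝ} (hk : 0 < k)
    (hρ : ρ ∈ Set.Ioo (0 : ℝ) 1) (hγ : 0 < γ) (hm : (m : ℝ) = γ * k * |log ρ|)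
    (Q : Measure (Fin n → ℝ)) [IsProbabilityMeasure Q]
    (hQ : ∀ T A, Q (supportEvent T A) ≤ ENNReal.ofReal ρ ^ A.card) {x : Fin n → ℝ}
    (hx : ∀ i, x i = 0 ∨ |x i| ∈ Set.range v) (hs : 0 < s) (hsM : s * W.centredSup ≤ 1) :
    m * W.minCost γ (fun a => emp k (levelStat v a) x)
        - (1 + s) / s * (k * emp k (Set.indicator {0}ᶜ 1) x * log 2) - m * (s * W.varBound)
      ≤ W.infoAt Q m (scaled k x) := by
  classical
  have sqrt_pos : 0 < √k := sqrt_pos.2 hk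
  have := W.integral_log_margDens_le_of_upperSet (m := m) Q hρ.1
    (T := Finset.univ.filter (x · ∈ ({0}ᶜ : Set ℝ))) (hQ _) (c := scaled k x)
    (by simp [scaled, sqrt_pos.ne']) (D := m * (W.expLog (emp k (· ^ 2) x) 0 0
        - W.minCost γ fun a => emp k (levelStat v a) x)) (fun A hA upper => ?_) hs hsM
  · rw [card_filter_mem_eq hk.ne' {0}ᶜ x] at this
    rw [W.infoAt_eq, sum_scaled_sq hk.le]
    linarith
  · obtain ⟨j, rfl⟩ := exists_eq_filter_levelSet hx
      (fun i hi => by simpa using hA hi) fun i hi j hj hij => upper i hi j (by simpa using hj) (by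
        simp only [scaled, abs_div]
        gcongr)
    exact W.expLogOn_levelSet_add_card_mul_log_le hk hρ hγ hm x j

end PointwiseLowerBound

end Channel

section MutualInfo

variable {ρ : ℝ} {P0 : Measure ℝ} {n : ℕ}

namespace Channel

variable {E : Type*} [MeasurableSpace E] (W : Channel E) {m K : ℕ} {v : Fin K → ℝ}

/-- The cost of a level: the information lost by ignoring the coordinates outside it, plus the
entropy of its location. -/
def levelCost (γ : ℝ) (P0 : Measure ℝ) (U : Set ℝ) : ℝ :=
  W.info (∫ t, t ^ 2 ∂P0) (∫ t in U, t ^ 2 ∂P0) (∫ t, t ^ 2 ∂P0 - ∫ t in U, t ^ 2 ∂P0)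
    + P0.real U / γ

lemma minCost_integral_levelStat [IsProbabilityMeasure P0] (γ : ℝ) :
    W.minCost γ (fun a => ∫ t, levelStat v a t ∂P0) = ⨅ j, W.levelCost γ P0 (levelSet v j) := by
  rw [minCost, Finset.inf'_univ_eq_ciInf]
  refine iInf_congr fun j => ?_
  have size : ∫ t, (levelSet v j).indicator 1 t ∂P0 = P0.real (levelSet v j) :=
    integral_indicator_one (measurableSet_levelSet v j)
  simp only [levelStat, levelCost, size, integral_indicator (measurableSet_levelSet v j),
    abs_of_nonneg measureReal_nonneg, min_eq_left measureReal_le_one]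

lemma integral_emp_compl_zero_le [IsProbabilityMeasure P0] (hρ : ρ ∈ Set.Ioo (0 : ℝ) 1)
    (hn : 0 < n) : ∫ x : Fin n → ℝ, emp (n * ρ) (Set.indicator {0}ᶜ 1) x
      ∂(iid n (sparsePrior ρ P0)) ≤ 1 := by
  have hρ' := Set.Ioo_subset_Icc_self hρ
  have := isProbabilityMeasure_sparsePrior (P0 := P0) hρ'
  have meas : MeasurableSet ({0}ᶜ : Set ℝ) := (measurableSet_singleton 0).compl
  have int_P0 : Integrable (Set.indicator {0}ᶜ 1 : ℝ → ℝ) P0 := (integrable_const 1).indicator meas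
  have k_pos : (0 : ℝ) < n * ρ := mul_pos (Nat.cast_pos.2 hn) hρ.1
  rw [integral_emp (integrable_sparsePrior int_P0), integral_sparsePrior hρ' int_P0,
    integral_indicator_one meas, Set.indicator_of_notMem (by simp), mul_zero, zero_add,
    div_le_one k_pos, ← mul_assoc]
  exact mul_le_of_le_one_right k_pos.le measureReal_le_one

lemma integrable_minCost_emp {P : Measure ℝ} [IsProbabilityMeasure P] {γ : ℝ} (hγ : 0 < γ)
    (k : ℝ) (v : Fin K → ℝ) :
    Integrable (fun x : Fin n → ℝ => W.minCost γ fun a => emp k (levelStat v a) x) (iid n P) :=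
  .of_bound ((W.continuous_minCost γ).measurable.comp (measurable_pi_lambda _ fun a =>
    measurable_emp (measurable_levelStat v a) k)).aestronglyMeasurable _
    (.of_forall fun _ => W.abs_minCost_le hγ _)

lemma le_mutualInfo_div [IsProbabilityMeasure P0] (hρ : ρ ∈ Set.Ioo (0 : ℝ) 1) (hn : 0 < n)
    {γ s : ℝ} (hγ : 0 < γ) (hm : (m : ℝ) = γ * (n * ρ) * |log ρ|)
    (hv : ∀ᵐ t ∂P0, |t| ∈ Set.range v) (hs : 0 < s) (hsM : s * W.centredSup ≤ 1) :
    ∫ x : Fin n → ℝ, W.minCost γ (fun a => emp (n * ρ) (levelStat v a) x)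
        ∂(iid n (sparsePrior ρ P0)) - (1 + s) / s * (log 2 / (γ * |log ρ|)) - s * W.varBound
      ≤ W.mutualInfo (signalLaw ρ P0 n) m / m := by
  have hρ' := Set.Ioo_subset_Icc_self hρ
  have := isProbabilityMeasure_sparsePrior (P0 := P0) hρ'
  have := isProbabilityMeasure_signalLaw (P0 := P0) hρ' n
  have k_pos : (0 : ℝ) < n * ρ := mul_pos (Nat.cast_pos.2 hn) hρ.1
  have log_pos : 0 < |log ρ| := abs_pos.2 (log_neg hρ.1 hρ.2).ne
  have m_pos : (0 : ℝ) < m := by rw [hm]; positivity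
  have support : ∀ᵐ x ∂(iid n (sparsePrior ρ P0)), ∀ i, x i = 0 ∨ |x i| ∈ Set.range v :=
    ae_iid (ae_sparsePrior (p := fun t => t = 0 ∨ |t| ∈ Set.range v) (.inl rfl)
      (hv.mono fun _ => .inr)) n
  have int_cost :=
    (W.integrable_minCost_emp (n := n) (P := sparsePrior ρ P0) hγ (n * ρ) v).const_mul (m : ℝ)
  have int_size : Integrable (emp (n * ρ) (Set.indicator {0}ᶜ 1) : (Fin n → ℝ) → ℝ)
      (iid n (sparsePrior ρ P0)) :=
    (memLp_two_emp ((memLp_const (1 : ℝ)).indicator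
      (measurableSet_singleton 0).compl) n _).integrable one_le_two
  have int_penalty := ((int_size.const_mul (n * ρ)).mul_const (log 2)).const_mul ((1 + s) / s)
  have averaged := integral_mono_ae ((int_cost.sub int_penalty).sub (integrable_const _))
    ((W.integrable_infoAt (signalLaw ρ P0 n) m).comp_measurable (measurable_scaled (n * ρ)))
    (support.mono fun x hx => W.le_infoAt_scaled k_pos hρ hγ hm (signalLaw ρ P0 n)
      (signalLaw_supportEvent_le hρ) hx hs hsM)
  rw [integral_sub' (int_cost.sub int_penalty) (integrable_const _),
    integral_sub' int_cost int_penalty, integral_const_mul, integral_const_mul, integral_mul_const,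
    integral_const_mul, integral_const] at averaged
  rw [le_div_iff₀ m_pos, signalLaw, W.mutualInfo_map (measurable_scaled _), ← signalLaw]
  have penalty : (1 + s) / s * (n * ρ * (∫ x : Fin n → ℝ, emp (n * ρ) (Set.indicator {0}ᶜ 1) x
      ∂(iid n (sparsePrior ρ P0))) * log 2) ≤ (1 + s) / s * (log 2 / (γ * |log ρ|)) * m := by
    have : (1 + s) / s * (log 2 / (γ * |log ρ|)) * m = (1 + s) / s * (n * ρ * 1 * log 2) := by
      rw [hm]; field_simp
    rw [this]
    gcongr
    exact integral_emp_compl_zero_le hρ hn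
  simp only [probReal_univ, one_smul, Function.comp_apply] at averaged
  linarith

end Channel

end MutualInfo

section Mixtures

lemma lintegral_mixture_div_mixture_mul_le {X Y : Type*} [MeasurableSpace X] [MeasurableSpace Y]
    {P : Measure X} {ν : Measure Y} [SFinite P] [SFinite ν] {D D' : X → Y → ℝ≥0∞}
    (hD : Measurable (Function.uncurry D)) (hD' : Measurable (Function.uncurry D')) :
    ∫⁻ x, ∫⁻ y, (∫⁻ x', D' x' y ∂P) / (∫⁻ x', D x' y ∂P) * D x y ∂ν ∂P
      ≤ ∫⁻ x, ∫⁻ y, D' x y ∂ν ∂P := by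
  have mixture {D : X → Y → ℝ≥0∞} (hD : Measurable (Function.uncurry D)) :
      Measurable fun y => ∫⁻ x, D x y ∂P := hD.lintegral_prod_left'
  rw [lintegral_lintegral_swap
      ((((mixture hD').div (mixture hD)).comp measurable_snd).mul hD).aemeasurable,
    lintegral_lintegral_swap hD'.aemeasurable]
  refine lintegral_mono fun y => ?_
  rw [lintegral_const_mul _ hD.of_uncurry_right, mul_comm]
  exact ENNReal.mul_div_le

lemma ofReal_mul_le_lintegral_of_le_measure_fiber {X C : Type*} [MeasurableSpace X]
    {P : Measure X} {g : X → C} {f : C → ℝ≥0∞} (hfg : Measurable fun x => f (g x)) {w : ℝ} {x : X}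
    (hw : ENNReal.ofReal w ≤ P {x' | g x' = g x}) :
    ENNReal.ofReal w * f (g x) ≤ ∫⁻ x', f (g x') ∂P :=
  calc ENNReal.ofReal w * f (g x) ≤ f (g x) * P {x' | f (g x) ≤ f (g x')} := by
        rw [mul_comm]
        exact mul_le_mul_right (hw.trans (measure_mono fun x' hx' => (congrArg f hx').ge)) _
    _ ≤ ∫⁻ x', f (g x') ∂P := mul_meas_ge_le_lintegral hfg _

end Mixtures

namespace Channel

variable {E : Type*} [MeasurableSpace E] (W : Channel E) {n m : ℕ}

section ChangeOfMeasure

/-- The reference measure for a row and its output: Gaussian and Lebesgue respectively. -/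
def refRow (n : ℕ) : Measure ((Fin n → ℝ) × ℝ) := (iid n stdG).prod volume

instance (n : ℕ) : SigmaFinite (refRow n) := by unfold refRow; infer_instance

/-- The reference measure for the data, with respect to which `sysDens` is a density. -/
def refLaw (n m : ℕ) : Measure (Fin m → (Fin n → ℝ) × ℝ) := Measure.pi fun _ => refRow n

instance (n m : ℕ) : SigmaFinite (refLaw n m) := by unfold refLaw; infer_instance

lemma map_rowObs (c : Fin n → ℝ) : (W.rowLaw n).map (W.rowObs c)
    = (refRow n).withDensity fun p => ENNReal.ofReal (W.rowDens Finset.univ c 0 p.2 p.1) := by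
  have meas : Measurable fun p : (Fin n → ℝ) × ℝ =>
      ENNReal.ofReal (W.rowDens Finset.univ c 0 p.2 p.1) :=
    (W.measurable_rowDens _ _ measurable_const measurable_snd measurable_fst).ennreal_ofReal
  refine Measure.ext_of_lintegral _ fun f hf => ?_
  rw [lintegral_map hf (W.measurable_rowObs c), lintegral_withDensity_eq_lintegral_mul _ meas hf,
    refRow, lintegral_prod _ (meas.mul hf).aemeasurable]
  refine (W.lintegral_rowLaw_comp_rowOut c (f := fun r y => f (r, y)) hf).trans ?_
  simp only [Pi.mul_apply, mul_comm]

lemma map_sysObs (c : Fin n → ℝ) : (W.sysLaw n m).map (W.sysObs c)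
    = (refLaw n m).withDensity fun η => ENNReal.ofReal (W.sysDens Finset.univ c 0 η) := by
  have meas : Measurable fun p : (Fin n → ℝ) × ℝ =>
      ENNReal.ofReal (W.rowDens Finset.univ c 0 p.2 p.1) :=
    (W.measurable_rowDens _ _ measurable_const measurable_snd measurable_fst).ennreal_ofReal
  have prob := Measure.isProbabilityMeasure_map (μ := W.rowLaw n)
    (W.measurable_rowObs c).aemeasurable
  have map_pi : (W.sysLaw n m).map (W.sysObs c)
      = Measure.pi fun _ => (W.rowLaw n).map (W.rowObs c) :=
    Measure.pi_map_pi fun _ => (W.measurable_rowObs c).aemeasurable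
  rw [W.map_rowObs] at prob map_pi
  rw [map_pi, pi_withDensity_eq_withDensity_prod fun _ => meas, refLaw]
  simp only [sysDens, ENNReal.ofReal_prod_of_nonneg fun _ _ => (W.rowDens_pos _ _ _ _ _).le]

lemma lintegral_comp_sysObs (c : Fin n → ℝ) {f : (Fin m → (Fin n → ℝ) × ℝ) → ℝ≥0∞}
    (hf : Measurable f) : ∫⁻ ω, f (W.sysObs c ω) ∂(W.sysLaw n m)
      = ∫⁻ η, f η * ENNReal.ofReal (W.sysDens Finset.univ c 0 η) ∂(refLaw n m) := by
  have meas : Measurable fun η : Fin m → (Fin n → ℝ) × ℝ =>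
      ENNReal.ofReal (W.sysDens Finset.univ c 0 η) :=
    (W.measurable_sysDens _ _ measurable_const measurable_id).ennreal_ofReal
  rw [← lintegral_map hf (W.measurable_sysObs c), W.map_sysObs,
    lintegral_withDensity_eq_lintegral_mul _ meas hf]
  simp only [Pi.mul_apply, mul_comm]

lemma lintegral_sysDens_refLaw (S : Finset (Fin n)) (c : Fin n → ℝ) (τ : ℝ) :
    ∫⁻ η, ENNReal.ofReal (W.sysDens S c τ η) ∂(refLaw n m) = 1 := by
  have meas : Measurable fun p : (Fin n → ℝ) × ℝ => ENNReal.ofReal (W.rowDens S c τ p.2 p.1) :=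
    (W.measurable_rowDens _ _ measurable_const measurable_snd measurable_fst).ennreal_ofReal
  simp only [sysDens, ENNReal.ofReal_prod_of_nonneg fun _ _ => (W.rowDens_pos _ _ _ _ _).le, refLaw]
  rw [lintegral_fin_prod_eq_prod (μ := fun _ : Fin m => refRow n) fun _ => meas, refRow,
    lintegral_prod _ meas.aemeasurable]
  simp [rowDens, W.lintegral_ofReal_smoothDens]

end ChangeOfMeasure

section UpperBound

variable {X : Type*} [MeasurableSpace X] {P : Measure X} [IsProbabilityMeasure P]
  {σ g : X → Fin n → ℝ} {w : X → ℝ}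

lemma ofReal_margDens_map (hσ : Measurable σ) (η : Fin m → (Fin n → ℝ) × ℝ) :
    ENNReal.ofReal (W.margDens (P.map σ) η)
      = ∫⁻ x, ENNReal.ofReal (W.sysDens Finset.univ (σ x) 0 η) ∂P :=
  have := Measure.isProbabilityMeasure_map (μ := P) hσ.aemeasurable
  (W.ofReal_margDens _ η).trans (lintegral_map
    (W.measurable_sysDens _ _ measurable_id measurable_const).ennreal_ofReal hσ)

lemma lintegral_mul_sysDens_div_margDens_le (hσ : Measurable σ) (hg : Measurable g) (τ : ℝ)
    (hw : ∀ x, 0 < w x)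
    (hfib : ∀ᵐ x ∂P, ENNReal.ofReal (w x) ≤ P {x' | g x' = g x}) :
    ∫⁻ x, ∫⁻ ω, ENNReal.ofReal (w x * W.sysDens Finset.univ (g x) τ (W.sysObs (σ x) ω)
      / W.margDens (P.map σ) (W.sysObs (σ x) ω)) ∂(W.sysLaw n m) ∂P ≤ 1 := by
  have := Measure.isProbabilityMeasure_map (μ := P) hσ.aemeasurable
  let D (x : X) (η : Fin m → (Fin n → ℝ) × ℝ) := ENNReal.ofReal (W.sysDens Finset.univ (σ x) 0 η)
  let D' (x : X) (η : Fin m → (Fin n → ℝ) × ℝ) := ENNReal.ofReal (W.sysDens Finset.univ (g x) τ η)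
  have meas_D : Measurable (Function.uncurry D) :=
    (W.measurable_sysDens _ _ (hσ.comp measurable_fst) measurable_snd).ennreal_ofReal
  have meas_D' : Measurable (Function.uncurry D') :=
    (W.measurable_sysDens _ _ (hg.comp measurable_fst) measurable_snd).ennreal_ofReal
  have meas_ratio : Measurable fun η => (∫⁻ x', D' x' η ∂P) / (∫⁻ x', D x' η ∂P) :=
    meas_D'.lintegral_prod_left'.div meas_D.lintegral_prod_left'
  calc _ ≤ ∫⁻ x, ∫⁻ ω, (∫⁻ x', D' x' (W.sysObs (σ x) ω) ∂P)
          / (∫⁻ x', D x' (W.sysObs (σ x) ω) ∂P) ∂(W.sysLaw n m) ∂P := by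
        refine lintegral_mono_ae (hfib.mono fun x hx => lintegral_mono fun ω => ?_)
        rw [ENNReal.ofReal_div_of_pos (W.margDens_pos _ _), W.ofReal_margDens_map hσ,
          ENNReal.ofReal_mul (hw x).le]
        exact ENNReal.div_le_div_right (ofReal_mul_le_lintegral_of_le_measure_fiber
          (f := fun c => ENNReal.ofReal (W.sysDens Finset.univ c τ (W.sysObs (σ x) ω)))
          (meas_D'.of_uncurry_right) hx) _
    _ = ∫⁻ x, ∫⁻ η, (∫⁻ x', D' x' η ∂P) / (∫⁻ x', D x' η ∂P) * D x η ∂(refLaw n m) ∂P :=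
        lintegral_congr fun x => W.lintegral_comp_sysObs (σ x) meas_ratio
    _ ≤ ∫⁻ x, ∫⁻ η, D' x η ∂(refLaw n m) ∂P := lintegral_mixture_div_mixture_mul_le meas_D meas_D'
    _ = 1 := by simp [D', W.lintegral_sysDens_refLaw]

lemma integrable_log_margDens_sysObs_prod (hσ : Measurable σ) (Q : Measure (Fin n → ℝ))
    [IsProbabilityMeasure Q] :
    Integrable (fun p => log (W.margDens Q (W.sysObs (σ p.1) p.2))) (P.prod (W.sysLaw n m)) :=
  (W.integrable_sum_envelope.comp_snd P).mono'
    ((W.measurable_margDens Q).comp (W.measurable_uncurry_sysObs.comp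
      (hσ.prodMap measurable_id))).log.aestronglyMeasurable
    (.of_forall fun p => W.abs_log_le_sum_envelope
      (W.exp_neg_sum_envelope_le_margDens Q (σ p.1) p.2) (W.margDens_le Q _))

lemma integrable_log_sysDens_sysObs_prod (hσ : Measurable σ) (hg : Measurable g) (τ : ℝ) :
    Integrable (fun p => log (W.sysDens Finset.univ (g p.1) τ (W.sysObs (σ p.1) p.2)))
      (P.prod (W.sysLaw n m)) :=
  (W.integrable_sum_envelope.comp_snd P).mono'
    (W.measurable_sysDens _ τ (hg.comp measurable_fst) (W.measurable_uncurry_sysObs.comp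
      (hσ.prodMap measurable_id))).log.aestronglyMeasurable
    (.of_forall fun p => W.abs_log_le_sum_envelope
      (W.exp_neg_sum_envelope_le_sysDens Finset.univ (g p.1) (σ p.1) τ p.2)
      (W.sysDens_le _ _ _ _))

lemma integral_log_sysDens_le_integral_log_margDens (hσ : Measurable σ) (hg : Measurable g) (τ : ℝ)
    (hw : ∀ x, 0 < w x) (hlog : Integrable (fun x => log (w x)) P)
    (hfib : ∀ᵐ x ∂P, ENNReal.ofReal (w x) ≤ P {x' | g x' = g x}) :
    ∫ x, log (w x) ∂P
        + ∫ x, ∫ ω, log (W.sysDens Finset.univ (g x) τ (W.sysObs (σ x) ω)) ∂(W.sysLaw n m) ∂P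
      ≤ ∫ x, ∫ ω, log (W.margDens (P.map σ) (W.sysObs (σ x) ω)) ∂(W.sysLaw n m) ∂P := by
  have := Measure.isProbabilityMeasure_map (μ := P) hσ.aemeasurable
  have int_sys := W.integrable_log_sysDens_sysObs_prod (m := m) (P := P) hσ hg τ
  have int_marg := W.integrable_log_margDens_sysObs_prod (m := m) (P := P) hσ (P.map σ)
  have int_w := hlog.comp_fst (W.sysLaw n m)
  have exp_le : ∫⁻ p, ENNReal.ofReal (exp (log (w p.1)
      + log (W.sysDens Finset.univ (g p.1) τ (W.sysObs (σ p.1) p.2))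
      - log (W.margDens (P.map σ) (W.sysObs (σ p.1) p.2)))) ∂(P.prod (W.sysLaw n m))
      ≤ ENNReal.ofReal 1 := by
    refine (lintegral_prod_le _).trans ?_
    rw [ENNReal.ofReal_one]
    simp only [exp_sub, exp_add, exp_log (hw _), exp_log (W.sysDens_pos _ _ _ _),
      exp_log (W.margDens_pos _ _)]
    exact W.lintegral_mul_sysDens_div_margDens_le hσ hg τ hw hfib
  have jensen :=
    integral_le_log_of_lintegral_exp_le ((int_w.add int_sys).sub int_marg) one_pos exp_le
  rw [integral_sub' (int_w.add int_sys) int_marg, integral_add' int_w int_sys,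
    integral_prod _ int_sys, integral_prod _ int_marg, integral_fun_fst fun x => log (w x),
    log_one] at jensen
  simp only [probReal_univ, one_smul] at jensen
  linarith

/-- The signal is recovered from `g` at the price `-log w`, and what `g` does not see of it is
replaced by Gaussian noise of variance `τ`. -/
lemma mutualInfo_map_le (hσ : Measurable σ) (hg : Measurable g) (τ : ℝ) (hw : ∀ x, 0 < w x)
    (hlog : Integrable (fun x => log (w x)) P)
    (hfib : ∀ᵐ x ∂P, ENNReal.ofReal (w x) ≤ P {x' | g x' = g x}) :
    W.mutualInfo (P.map σ) m ≤ ∫ x, (m * W.expLog (∑ i, σ x i ^ 2) 0 0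
      - ∫ ω, log (W.sysDens Finset.univ (g x) τ (W.sysObs (σ x) ω)) ∂(W.sysLaw n m)) ∂P
      - ∫ x, log (w x) ∂P := by
  have := Measure.isProbabilityMeasure_map (μ := P) hσ.aemeasurable
  let L (x : X) := ∫ ω, log (W.sysDens Finset.univ (g x) τ (W.sysObs (σ x) ω)) ∂(W.sysLaw n m)
  let M (x : X) := ∫ ω, log (W.margDens (P.map σ) (W.sysObs (σ x) ω)) ∂(W.sysLaw n m)
  have int_L : Integrable L P := (W.integrable_log_sysDens_sysObs_prod hσ hg τ).integral_prod_left
  have int_M : Integrable M P :=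
    (W.integrable_log_margDens_sysObs_prod hσ (P.map σ)).integral_prod_left
  have int_info : Integrable (fun x => W.infoAt (P.map σ) m (σ x)) P :=
    (W.integrable_infoAt (P.map σ) m (P := P.map σ)).comp_measurable hσ
  have gibbs : ∫ x, log (w x) ∂P + ∫ x, L x ∂P ≤ ∫ x, M x ∂P :=
    W.integral_log_sysDens_le_integral_log_margDens hσ hg τ hw hlog hfib
  have split (x : X) : m * W.expLog (∑ i, σ x i ^ 2) 0 0 - L x
      = W.infoAt (P.map σ) m (σ x) + (M x - L x) := by
    rw [W.infoAt_eq]; ring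
  have int_diff : Integrable (fun x => M x - L x) P := int_M.sub int_L
  calc W.mutualInfo (P.map σ) m = ∫ x, W.infoAt (P.map σ) m (σ x) ∂P := W.mutualInfo_map hσ m
    _ ≤ ∫ x, W.infoAt (P.map σ) m (σ x) ∂P + (∫ x, M x ∂P - ∫ x, L x ∂P)
        - ∫ x, log (w x) ∂P := by linarith
    _ = _ := by
        rw [integral_congr_ae (.of_forall split), integral_add int_info int_diff,
          integral_sub int_M int_L]

end UpperBound

end Channel

section FiberWeight

variable {ρ c : ℝ} {U : Set ℝ} {P P0 : Measure ℝ} {n : ℕ}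

lemma exists_le_measure_singleton {α : Type*} [MeasurableSpace α] {P : Measure α}
    [IsFiniteMeasure P] {F : Finset α} (hF : ∀ᵐ t ∂P, t ∈ F) :
    ∃ c : ℝ, 0 < c ∧ ∀ᵐ t ∂P, ENNReal.ofReal c ≤ P {t} := by
  have small : ∀ᶠ c in nhdsWithin (0 : ℝ) (Set.Ioi 0),
      ∀ t ∈ F, P {t} ≠ 0 → ENNReal.ofReal c ≤ P {t} := by
    refine F.eventually_all.2 fun t _ => ?_
    by_cases ht : P {t} = 0
    · simp [ht]
    · filter_upwards [Ioc_mem_nhdsGT (ENNReal.toReal_pos ht (measure_ne_top _ _))] with c hc _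
      exact ENNReal.ofReal_le_of_le_toReal hc.2
  obtain ⟨c, hc, hc0⟩ := (small.and self_mem_nhdsWithin).exists
  have null : P (⋃ t ∈ {t | t ∈ F ∧ P {t} = 0}, {t}) = 0 :=
    (measure_biUnion_null_iff (F.countable_toSet.mono fun t ht => ht.1)).2 fun t ht => ht.2
  refine ⟨c, hc0, ?_⟩
  filter_upwards [hF, measure_eq_zero_iff_ae_notMem.1 null] with t htF ht
  exact hc t htF fun h => ht (Set.mem_biUnion (Set.mem_ofPred.2 ⟨htF, h⟩) rfl)

lemma ofReal_prod_le_iid_fiber [IsProbabilityMeasure P] {f w : ℝ → ℝ} (hw : ∀ t, 0 ≤ w t)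
    {x : Fin n → ℝ} (hx : ∀ i, ENNReal.ofReal (w (x i)) ≤ P {t | f t = f (x i)}) :
    ENNReal.ofReal (∏ i, w (x i)) ≤ iid n P {x' | ∀ i, f (x' i) = f (x i)} := by
  have : {x' : Fin n → ℝ | ∀ i, f (x' i) = f (x i)}
      = Set.univ.pi fun i => {t | f t = f (x i)} := by ext; simp
  rw [this, iid, Measure.pi_pi, ENNReal.ofReal_prod_of_nonneg fun _ _ => hw _]
  exact Finset.prod_le_prod' fun i _ => hx i

open scoped Classical in
/-- A lower bound for the probability of the fibre through `t` of the function that erases the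
values outside `U`, when the atoms of the prior have mass at least `c`. -/
def fiberWeight (ρ c : ℝ) (U : Set ℝ) (t : ℝ) : ℝ := if t ∈ U then ρ * c else 1 - ρ

lemma fiberWeight_pos (hρ : ρ ∈ Set.Ioo (0 : ℝ) 1) (hc : 0 < c) (U : Set ℝ) (t : ℝ) :
    0 < fiberWeight ρ c U t := by
  unfold fiberWeight
  split_ifs
  exacts [mul_pos hρ.1 hc, sub_pos.2 hρ.2]

lemma log_prod_fiberWeight (hρ : ρ ∈ Set.Ioo (0 : ℝ) 1) (hc : 0 < c) (U : Set ℝ)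
    (x : Fin n → ℝ) : log (∏ i, fiberWeight ρ c U (x i))
      = emp 1 (fun t => log (fiberWeight ρ c U t)) x := by
  rw [Real.log_prod fun i _ => (fiberWeight_pos hρ hc U _).ne', emp, div_one]

lemma fiberWeight_le_sparsePrior (hρ : 0 ≤ ρ) (hU0 : (0 : ℝ) ∉ U)
    (hc : ∀ᵐ t ∂P0, ENNReal.ofReal c ≤ P0 {t}) :
    ∀ᵐ t ∂(sparsePrior ρ P0), ENNReal.ofReal (fiberWeight ρ c U t)
      ≤ sparsePrior ρ P0 {t' | U.indicator id t' = U.indicator id t} := by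
  have outside {t : ℝ} (ht : t ∉ U) : ENNReal.ofReal (fiberWeight ρ c U t)
      ≤ sparsePrior ρ P0 {t' | U.indicator id t' = U.indicator id t} := by
    refine le_trans ?_ (Measure.le_add_right le_rfl _)
    simp [fiberWeight, ht, hU0]
  refine ae_sparsePrior (outside hU0) (hc.mono fun t ht => ?_)
  by_cases htU : t ∈ U
  · refine le_trans ?_ (Measure.le_add_left le_rfl _)
    rw [fiberWeight, if_pos htU, ENNReal.ofReal_mul hρ, Measure.smul_apply, smul_eq_mul]
    gcongr
    refine ht.trans (measure_mono ?_)
    rintro t' rfl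
    rfl
  · exact outside htU

lemma log_fiberWeight (t : ℝ) : log (fiberWeight ρ c U t)
    = log (1 - ρ) + U.indicator (fun _ => log (ρ * c) - log (1 - ρ)) t := by
  by_cases ht : t ∈ U <;> simp [fiberWeight, ht]

lemma memLp_log_fiberWeight [IsFiniteMeasure P] (hU : MeasurableSet U) (p : ℝ≥0∞) :
    MemLp (fun t => log (fiberWeight ρ c U t)) p P := by
  simp only [log_fiberWeight]
  exact (memLp_const (log (1 - ρ))).add
    ((memLp_const (log (ρ * c) - log (1 - ρ))).indicator hU)

lemma neg_integral_log_fiberWeight_le [IsProbabilityMeasure P0] (hρ : ρ ∈ Set.Ioo (0 : ℝ) 1)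
    (hU : MeasurableSet U) (hU0 : (0 : ℝ) ∉ U) (hc : 0 < c) :
    -∫ t, log (fiberWeight ρ c U t) ∂(sparsePrior ρ P0)
      ≤ ρ * (P0.real U * |log ρ| + ((1 - ρ)⁻¹ - P0.real U * log c)) := by
  have log_le : -log (1 - ρ) ≤ ρ * (1 - ρ)⁻¹ := by
    have pos : 0 < 1 - ρ := sub_pos.2 hρ.2
    have := log_le_sub_one_of_pos (inv_pos.2 pos)
    rw [log_inv] at this
    have e : ρ * (1 - ρ)⁻¹ = (1 - ρ)⁻¹ - 1 := by field_simp; ring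
    rwa [e]
  have nonpos : log (1 - ρ) ≤ 0 := log_nonpos (sub_nonneg.2 hρ.2.le) (by linarith [hρ.1])
  have mean : ∫ t, log (fiberWeight ρ c U t) ∂P0
      = log (1 - ρ) + P0.real U * (log ρ + log c - log (1 - ρ)) := by
    simp only [log_fiberWeight]
    rw [integral_add (integrable_const _) ((integrable_const _).indicator hU),
      integral_indicator_const _ hU, log_mul hρ.1.ne' hc.ne']
    simp
  rw [integral_sparsePrior (Set.Ioo_subset_Icc_self hρ)
      (memLp_one_iff_integrable.1 (memLp_log_fiberWeight hU 1)), mean,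
    fiberWeight, if_neg hU0, abs_of_neg (log_neg hρ.1 hρ.2)]
  have := mul_nonneg hρ.1.le (measureReal_nonneg (μ := P0) (s := U))
  nlinarith

end FiberWeight

namespace Channel

variable {E : Type*} [MeasurableSpace E] (W : Channel E) {n m : ℕ}

section RevealedPart

lemma sysDens_univ_indicator (S : Finset (Fin n)) (c : Fin n → ℝ) (τ : ℝ)
    (η : Fin m → (Fin n → ℝ) × ℝ) :
    W.sysDens Finset.univ (Set.indicator S c) τ η = W.sysDens S c τ η := by
  have restrict (r : Fin n → ℝ) : linOn Finset.univ (Set.indicator S c) r = linOn S c r :=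
    Finset.sum_indicator_subset_of_eq_zero c (fun i a => a * r i) S.subset_univ
      fun i => zero_mul (r i)
  simp only [sysDens, rowDens, restrict]

variable {ρ γ c : ℝ} {P0 : Measure ℝ} [IsProbabilityMeasure P0] {U : Set ℝ}

lemma integral_log_sysDens_scaled_indicator {k : ℝ} (hk : 0 ≤ k) (U : Set ℝ) (x : Fin n → ℝ)
    (τ : ℝ) :
    ∫ ω, log (W.sysDens Finset.univ (scaled k fun i => U.indicator id (x i)) τ
      (W.sysObs (scaled k x) ω)) ∂(W.sysLaw n m)
      = m * W.expLog (emp k (U.indicator (· ^ 2)) x)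
        (emp k (· ^ 2) x - emp k (U.indicator (· ^ 2)) x) τ := by
  classical
  have revealed : (scaled k fun i => U.indicator id (x i))
      = Set.indicator (Finset.univ.filter (x · ∈ U)) (scaled k x) := by
    ext i
    by_cases hi : x i ∈ U <;> simp [scaled, hi]
  simp only [revealed, W.sysDens_univ_indicator]
  rw [W.integral_log_sysDens, sum_filter_scaled_sq hk U x, sum_compl_filter_scaled_sq hk U x]

lemma mutualInfo_signalLaw_le (hρ : ρ ∈ Set.Ioo (0 : ℝ) 1)
    (hU : MeasurableSet U) (hU0 : (0 : ℝ) ∉ U) (hc : 0 < c)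
    (hcP : ∀ᵐ t ∂P0, ENNReal.ofReal c ≤ P0 {t}) (m : ℕ) (τ : ℝ) :
    W.mutualInfo (signalLaw ρ P0 n) m
      ≤ m * ∫ x : Fin n → ℝ, W.info (emp (n * ρ) (· ^ 2) x) (emp (n * ρ) (U.indicator (· ^ 2)) x) τ
          ∂(iid n (sparsePrior ρ P0))
        - n * ∫ t, log (fiberWeight ρ c U t) ∂(sparsePrior ρ P0) := by
  have := isProbabilityMeasure_sparsePrior (P0 := P0) (Set.Ioo_subset_Icc_self hρ)
  have k_nonneg : (0 : ℝ) ≤ n * ρ := mul_nonneg n.cast_nonneg hρ.1.le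
  let g (x : Fin n → ℝ) : Fin n → ℝ := scaled (n * ρ) fun i => U.indicator id (x i)
  let w (x : Fin n → ℝ) : ℝ := ∏ i, fiberWeight ρ c U (x i)
  have measurable_g : Measurable g := (measurable_scaled _).comp (measurable_pi_lambda _ fun i =>
    (measurable_id.indicator hU).comp (measurable_pi_apply i))
  have memLp_log : MemLp (fun t => log (fiberWeight ρ c U t)) 2 (sparsePrior ρ P0) :=
    memLp_log_fiberWeight hU 2
  have log_w (x : Fin n → ℝ) : log (w x) = emp 1 (fun t => log (fiberWeight ρ c U t)) x :=
    log_prod_fiberWeight hρ hc U x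
  have integrable_log_w : Integrable (fun x => log (w x)) (iid n (sparsePrior ρ P0)) := by
    simp only [log_w]
    exact (memLp_two_emp memLp_log n 1).integrable one_le_two
  have w_le_fiber : ∀ᵐ x ∂(iid n (sparsePrior ρ P0)),
      ENNReal.ofReal (w x) ≤ iid n (sparsePrior ρ P0) {x' | g x' = g x} :=
    (ae_iid (fiberWeight_le_sparsePrior hρ.1.le hU0 hcP) n).mono fun x hx =>
      (ofReal_prod_le_iid_fiber (fun t => (fiberWeight_pos hρ hc U t).le) hx).trans
        (measure_mono fun x' hx' => congrArg (scaled (n * ρ)) (funext hx'))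
  have mean_log_w : ∫ x, log (w x) ∂(iid n (sparsePrior ρ P0))
      = n * ∫ t, log (fiberWeight ρ c U t) ∂(sparsePrior ρ P0) := by
    simp only [log_w]
    rw [integral_emp (memLp_log.integrable one_le_two), div_one]
  refine (W.mutualInfo_map_le (measurable_scaled (n * ρ)) measurable_g τ
    (fun x => Finset.prod_pos fun i _ => fiberWeight_pos hρ hc U (x i)) integrable_log_w
    w_le_fiber).trans_eq ?_
  rw [mean_log_w]
  simp only [g, W.integral_log_sysDens_scaled_indicator k_nonneg, sum_scaled_sq k_nonneg,
    ← mul_sub, integral_const_mul, info]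

lemma mutualInfo_div_le (hρ : ρ ∈ Set.Ioo (0 : ℝ) 1) (hn : 0 < n) (hγ : 0 < γ)
    (hm : (m : ℝ) = γ * (n * ρ) * |log ρ|) (hU : MeasurableSet U) (hU0 : (0 : ℝ) ∉ U)
    (hc : 0 < c) (hcP : ∀ᵐ t ∂P0, ENNReal.ofReal c ≤ P0 {t}) (τ : ℝ) :
    W.mutualInfo (signalLaw ρ P0 n) m / m
      ≤ ∫ x : Fin n → ℝ, W.info (emp (n * ρ) (· ^ 2) x) (emp (n * ρ) (U.indicator (· ^ 2)) x) τ
          ∂(iid n (sparsePrior ρ P0))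
        + (P0.real U / γ + ((1 - ρ)⁻¹ - P0.real U * log c) / (γ * |log ρ|)) := by
  have log_pos : 0 < |log ρ| := abs_pos.2 (log_neg hρ.1 hρ.2).ne
  have m_pos : (0 : ℝ) < m := by
    have := hρ.1
    rw [hm]; positivity
  have price := mul_le_mul_of_nonneg_left (neg_integral_log_fiberWeight_le (P0 := P0) hρ hU hU0 hc)
    (n.cast_nonneg (α := ℝ))
  have price_eq : (n : ℝ) * (ρ * (P0.real U * |log ρ| + ((1 - ρ)⁻¹ - P0.real U * log c)))
      = (P0.real U / γ + ((1 - ρ)⁻¹ - P0.real U * log c) / (γ * |log ρ|)) * m := by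
    rw [hm]; field_simp
  rw [div_le_iff₀ m_pos]
  linarith [W.mutualInfo_signalLaw_le (P0 := P0) (n := n) hρ hU hU0 hc hcP m τ]

end RevealedPart

end Channel

section DiscretePrior

variable {P0 : Measure ℝ} {K : ℕ} {v : Fin K → ℝ}

lemma memLp_sq_of_abs_mem_range [IsFiniteMeasure P0] (hP0 : ∀ᵐ t ∂P0, |t| ∈ Set.range v)
    (p : ℝ≥0∞) : MemLp (fun t => t ^ 2) p P0 := by
  refine MemLp.of_bound (by fun_prop) (∑ j, v j ^ 2) (hP0.mono ?_)
  rintro t ⟨j, hj⟩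
  rw [norm_of_nonneg (sq_nonneg t), ← sq_abs, ← hj]
  exact Finset.single_le_sum (f := fun j => v j ^ 2) (fun i _ => sq_nonneg _) (Finset.mem_univ j)

lemma exists_le_measure_singleton_of_abs_mem_range [IsFiniteMeasure P0]
    (hP0 : ∀ᵐ t ∂P0, |t| ∈ Set.range v) :
    ∃ c : ℝ, 0 < c ∧ ∀ᵐ t ∂P0, ENNReal.ofReal c ≤ P0 {t} := by
  refine exists_le_measure_singleton (F := Finset.univ.image v ∪ Finset.univ.image (-v))
    (hP0.mono ?_)
  rintro t ⟨j, hj⟩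
  rcases abs_choice t with h | h
  · exact Finset.mem_union_left _ (Finset.mem_image.2 ⟨j, Finset.mem_univ j, hj.trans h⟩)
  · exact Finset.mem_union_right _ (Finset.mem_image.2
      ⟨j, Finset.mem_univ j, by rw [Pi.neg_apply, hj, h, neg_neg]⟩)

end DiscretePrior

section Limit

open Filter Topology

variable {ρ : ℕ → ℝ} {P0 : Measure ℝ} [IsProbabilityMeasure P0]

lemma tendsto_abs_log_atTop (hρ : ∀ n, 0 < ρ n) (hρ0 : Tendsto ρ atTop (𝓝 0)) :
    Tendsto (fun n => |log (ρ n)|) atTop atTop :=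
  tendsto_abs_atBot_atTop.comp
    (tendsto_log_nhdsGT_zero.comp (tendsto_nhdsWithin_iff.2 ⟨hρ0, .of_forall hρ⟩))

namespace Channel

variable {E : Type*} [MeasurableSpace E] (W : Channel E) {m : ℕ → ℕ} {γ : ℝ} {K : ℕ}
  {v : Fin K → ℝ} {U : Set ℝ}

lemma tendsto_integral_info_emp (hρ : ∀ n, ρ n ∈ Set.Ioo (0 : ℝ) 1)
    (hk : Tendsto (fun n => n * ρ n) atTop atTop) (hU : MeasurableSet U)
    (hP0 : MemLp (fun t => t ^ 2) 2 P0) (τ : ℝ) :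
    Tendsto (fun n : ℕ => ∫ x : Fin n → ℝ, W.info (emp (n * ρ n) (· ^ 2) x)
        (emp (n * ρ n) (U.indicator (· ^ 2)) x) τ ∂(iid n (sparsePrior (ρ n) P0))) atTop
      (𝓝 (W.info (∫ t, t ^ 2 ∂P0) (∫ t in U, t ^ 2 ∂P0) τ)) := by
  rw [← integral_indicator hU]
  have meas : Measurable fun t : ℝ => t ^ 2 := by fun_prop
  have cont : Continuous fun y : Bool → ℝ => W.info (y true) (y false) τ :=
    W.continuous_info.comp (by fun_prop : Continuous fun y : Bool → ℝ => (y true, y false, τ))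
  exact tendsto_integral_comp_emp (f := fun b => cond b (· ^ 2) (U.indicator (· ^ 2))) hρ hk
    (Bool.forall_bool.2 ⟨meas.indicator hU, meas⟩)
    (Bool.forall_bool.2 ⟨by simp, by simp⟩)
    (Bool.forall_bool.2 ⟨hP0.indicator hU, hP0⟩) cont fun _ => W.abs_info_le _ _ _

lemma exists_tendsto_levelCost_mutualInfo_div_le (hρ : ∀ n, ρ n ∈ Set.Ioo (0 : ℝ) 1)
    (hρ0 : Tendsto ρ atTop (𝓝 0)) (hk : Tendsto (fun n => n * ρ n) atTop atTop) (hγ : 0 < γ)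
    (hm : ∀ n, (m n : ℝ) = γ * (n * ρ n) * |log (ρ n)|) (hU : MeasurableSet U)
    (hU0 : (0 : ℝ) ∉ U) (hP0 : ∀ᵐ t ∂P0, |t| ∈ Set.range v) :
    ∃ b : ℕ → ℝ, Tendsto b atTop (𝓝 (W.levelCost γ P0 U))
      ∧ ∀ᶠ n in atTop, W.mutualInfo (signalLaw (ρ n) P0 n) (m n) / m n ≤ b n := by
  obtain ⟨c, c_pos, hc⟩ := exists_le_measure_singleton_of_abs_mem_range hP0
  refine ⟨_, ?_, (eventually_gt_atTop 0).mono fun n hn => W.mutualInfo_div_le (hρ n) hn hγ (hm n)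
    hU hU0 c_pos hc (∫ t, t ^ 2 ∂P0 - ∫ t in U, t ^ 2 ∂P0)⟩
  refine (W.tendsto_integral_info_emp hρ hk hU (memLp_sq_of_abs_mem_range hP0 2) _).add ?_
  have log_tendsto := (tendsto_abs_log_atTop (fun n => (hρ n).1) hρ0).const_mul_atTop hγ
  have inv_tendsto : Tendsto (fun n => (1 - ρ n)⁻¹) atTop (𝓝 (1 - 0)⁻¹) :=
    (hρ0.const_sub 1).inv₀ (by simp)
  simpa only [add_zero] using
    ((inv_tendsto.sub_const _).div_atTop log_tendsto).const_add (P0.real U / γ)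

lemma exists_tendsto_iInf_levelCost_le_mutualInfo_div (hρ : ∀ n, ρ n ∈ Set.Ioo (0 : ℝ) 1)
    (hρ0 : Tendsto ρ atTop (𝓝 0)) (hk : Tendsto (fun n => n * ρ n) atTop atTop) (hγ : 0 < γ)
    (hm : ∀ n, (m n : ℝ) = γ * (n * ρ n) * |log (ρ n)|) (hv : ∀ j, 0 < v j)
    (hP0 : ∀ᵐ t ∂P0, |t| ∈ Set.range v) :
    ∃ b : ℕ → ℝ, Tendsto b atTop (𝓝 (⨅ j, W.levelCost γ P0 (levelSet v j)))
      ∧ ∀ᶠ n in atTop, b n ≤ W.mutualInfo (signalLaw (ρ n) P0 n) (m n) / m n := by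
  have log_tendsto := tendsto_abs_log_atTop (fun n => (hρ n).1) hρ0
  have log_pos (n : ℕ) : 0 < |log (ρ n)| := abs_pos.2 (log_neg (hρ n).1 (hρ n).2).ne
  have sqrt_tendsto : Tendsto (fun n => √|log (ρ n)|) atTop atTop :=
    tendsto_sqrt_atTop.comp log_tendsto
  -- This temperature tends to zero so slowly that `(1 + s) / s` is negligible against `|log ρ|`.
  let s (n : ℕ) : ℝ := (√|log (ρ n)|)⁻¹
  have s_pos (n : ℕ) : 0 < s n := inv_pos.2 (sqrt_pos.2 (log_pos n))
  have s_tendsto : Tendsto s atTop (𝓝 0) := sqrt_tendsto.inv_tendsto_atTop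
  have sM_le : ∀ᶠ n in atTop, s n * W.centredSup ≤ 1 :=
    (s_tendsto.mul_const _).eventually_le_const (by simp)
  refine ⟨_, ?_, ((eventually_gt_atTop 0).and sM_le).mono fun n hn =>
    W.le_mutualInfo_div (hρ n) hn.1 hγ (hm n) hP0 (s_pos n) hn.2⟩
  have entropy_eq (n : ℕ) : (1 + s n) / s n * (log 2 / (γ * |log (ρ n)|))
      = (s n + s n ^ 2) * (log 2 / γ) := by
    have := s_pos n
    have log_eq : |log (ρ n)| = (s n ^ 2)⁻¹ := by
      rw [inv_pow, inv_inv, sq_sqrt (log_pos n).le]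
    rw [log_eq]
    field_simp
  simp only [entropy_eq]
  rw [← W.minCost_integral_levelStat]
  have cost_tendsto := tendsto_integral_comp_emp hρ hk (measurable_levelStat v)
    (levelStat_apply_zero hv) (memLp_levelStat (memLp_sq_of_abs_mem_range hP0 2))
    (W.continuous_minCost γ) (W.abs_minCost_le hγ)
  simpa using (cost_tendsto.sub ((s_tendsto.add (s_tendsto.pow 2)).mul_const (log 2 / γ))).sub
    (s_tendsto.mul_const W.varBound)

lemma tendsto_mutualInfo_div (hρ : ∀ n, ρ n ∈ Set.Ioo (0 : ℝ) 1)
    (hρ0 : Tendsto ρ atTop (𝓝 0)) (hk : Tendsto (fun n => n * ρ n) atTop atTop) (hγ : 0 < γ)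
    (hm : ∀ n, (m n : ℝ) = γ * (n * ρ n) * |log (ρ n)|) (hv : ∀ j, 0 < v j)
    (hP0 : ∀ᵐ t ∂P0, |t| ∈ Set.range v) :
    Tendsto (fun n => W.mutualInfo (signalLaw (ρ n) P0 n) (m n) / m n) atTop
      (𝓝 (⨅ j, W.levelCost γ P0 (levelSet v j))) := by
  obtain ⟨lower, lower_tendsto, lower_le⟩ :=
    W.exists_tendsto_iInf_levelCost_le_mutualInfo_div hρ hρ0 hk hγ hm hv hP0
  obtain ⟨j, hj⟩ := exists_eq_ciInf_of_finite (f := fun j => W.levelCost γ P0 (levelSet v j))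
  obtain ⟨upper, upper_tendsto, le_upper⟩ :=
    W.exists_tendsto_levelCost_mutualInfo_div_le hρ hρ0 hk hγ hm (measurableSet_levelSet v j)
      (zero_notMem_levelSet hv j) hP0
  exact tendsto_of_tendsto_of_tendsto_of_le_of_le' lower_tendsto (hj ▸ upper_tendsto) lower_le
    le_upper

end Channel

end Limit

section GaussianNoise

variable {Δ B : ℝ} {kA : ℕ} {PA : Measure (Fin kA → ℝ)} {φ : ℝ → (Fin kA → ℝ) → ℝ}

lemma exp_neg_sq_div_le_one (hΔ : 0 < Δ) (t : ℝ) : exp (-t ^ 2 / (2 * Δ)) ≤ 1 :=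
  exp_le_one_iff.2 (div_nonpos_of_nonpos_of_nonneg (neg_nonpos.2 (sq_nonneg t)) (by positivity))

lemma integrable_exp_neg_sq_div [IsFiniteMeasure PA] (hΔ : 0 < Δ)
    (hφ : Measurable fun p : ℝ × (Fin kA → ℝ) => φ p.1 p.2) (y x : ℝ) :
    Integrable (fun a => exp (-(y - φ x a) ^ 2 / (2 * Δ))) PA := by
  have : Measurable (φ x) := hφ.comp measurable_prodMk_left
  refine .of_bound (C := 1) (by fun_prop) (.of_forall fun a => ?_)
  rw [norm_of_nonneg (exp_pos _).le]
  exact exp_neg_sq_div_le_one hΔ _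

lemma memLp_two_sq_stdG : MemLp (fun z => z ^ 2) 2 stdG := by
  have memLp_four : MemLp id 4 stdG := memLp_id_gaussianReal 4
  have : ENNReal.HolderTriple 4 4 2 := ⟨by
    rw [← two_mul, show (4 : ℝ≥0∞) = 2 * 2 by norm_num, ENNReal.mul_inv (by simp) (by simp),
      ← mul_assoc, ENNReal.mul_inv_cancel (by simp) (by simp), one_mul]⟩
  simpa only [sq, id] using! memLp_four.mul memLp_four (r := 2)

lemma memLp_two_const_add_sq_snd {α : Type*} [MeasurableSpace α] (P : Measure α)
    [IsFiniteMeasure P] (c : ℝ) : MemLp (fun e : α × ℝ => c + e.2 ^ 2) 2 (P.prod stdG) :=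
  have sq_snd : MemLp (fun e : α × ℝ => e.2 ^ 2) 2 (P.prod stdG) := memLp_two_sq_stdG.comp_snd P
  (memLp_const c).add sq_snd

lemma Pout_pos [IsProbabilityMeasure PA] (hΔ : 0 < Δ)
    (hφ : Measurable fun p : ℝ × (Fin kA → ℝ) => φ p.1 p.2) (y x : ℝ) : 0 < Pout Δ PA φ y x :=
  mul_pos (by positivity) (integral_exp_pos (integrable_exp_neg_sq_div hΔ hφ y x))

lemma Pout_le [IsProbabilityMeasure PA] (hΔ : 0 < Δ)
    (hφ : Measurable fun p : ℝ × (Fin kA → ℝ) => φ p.1 p.2) (y x : ℝ) :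
    Pout Δ PA φ y x ≤ (√(2 * π * Δ))⁻¹ := by
  refine mul_le_of_le_one_right (by positivity) ?_
  simpa using integral_mono (integrable_exp_neg_sq_div (PA := PA) hΔ hφ y x)
    (integrable_const 1) fun a => exp_neg_sq_div_le_one hΔ _

lemma continuous_Pout [IsProbabilityMeasure PA] (hΔ : 0 < Δ)
    (hφ : Measurable fun p : ℝ × (Fin kA → ℝ) => φ p.1 p.2)
    (hφc : ∀ a, Continuous fun x => φ x a) : Continuous fun p : ℝ × ℝ => Pout Δ PA φ p.1 p.2 := by
  refine continuous_const.mul (continuous_of_dominated (bound := fun _ => 1)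
    (fun p => (integrable_exp_neg_sq_div hΔ hφ p.1 p.2).aestronglyMeasurable)
    (fun p => .of_forall fun a => ?_) (integrable_const _) (.of_forall fun a => ?_))
  · rw [norm_of_nonneg (exp_pos _).le]
    exact exp_neg_sq_div_le_one hΔ _
  · have := hφc a
    fun_prop

lemma le_Pout_add_sqrt_mul [IsProbabilityMeasure PA] (hΔ : 0 < Δ)
    (hφ : Measurable fun p : ℝ × (Fin kA → ℝ) => φ p.1 p.2) (hB : ∀ x a, |φ x a| ≤ B)
    (s : ℝ) (a : Fin kA → ℝ) (z x : ℝ) :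
    (√(2 * π * Δ))⁻¹ * exp (-(4 * B ^ 2 / Δ + z ^ 2)) ≤ Pout Δ PA φ (φ s a + √Δ * z) x := by
  refine mul_le_mul_of_nonneg_left ?_ (by positivity)
  have exponent_le (a' : Fin kA → ℝ) :
      (φ s a + √Δ * z - φ x a') ^ 2 / (2 * Δ) ≤ 4 * B ^ 2 / Δ + z ^ 2 := by
    have gap : (φ s a - φ x a') ^ 2 ≤ (B + B) ^ 2 :=
      sq_le_sq' (by linarith [abs_le.1 (hB s a), abs_le.1 (hB x a')])
        (by linarith [abs_le.1 (hB s a), abs_le.1 (hB x a')])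
    have noise : (√Δ * z) ^ 2 = Δ * z ^ 2 := by rw [mul_pow, sq_sqrt hΔ.le]
    rw [div_add' _ _ _ hΔ.ne', div_le_div_iff₀ (by positivity) hΔ]
    nlinarith [sq_nonneg (φ s a - φ x a' - √Δ * z)]
  simpa using integral_mono (integrable_const _)
    (integrable_exp_neg_sq_div (PA := PA) hΔ hφ (φ s a + √Δ * z) x) fun a' =>
      exp_le_exp.2 ((neg_le_neg (exponent_le a')).trans_eq (neg_div _ _).symm)

lemma lintegral_add_sqrt_mul (hΔ : 0 < Δ) (b : ℝ) {f : ℝ → ℝ≥0∞} (hf : Measurable f) :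
    ∫⁻ z, f (b + √Δ * z) ∂stdG
      = ∫⁻ y, ENNReal.ofReal ((√(2 * π * Δ))⁻¹ * exp (-(y - b) ^ 2 / (2 * Δ))) * f y := by
  have law : stdG.map (fun z => b + √Δ * z) = gaussianReal b Δ.toNNReal := by
    rw [← Function.comp_def (b + ·), ← Measure.map_map (by fun_prop) (by fun_prop), stdG,
      gaussianReal_map_const_mul, gaussianReal_map_const_add]
    congr 1
    · simp
    · ext; simp [sq_sqrt hΔ.le, hΔ.le]
  rw [← lintegral_map hf (by fun_prop), law,
    gaussianReal_of_var_ne_zero _ (Real.toNNReal_pos.2 hΔ).ne',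
    lintegral_withDensity_eq_lintegral_mul _ (measurable_gaussianPDF _ _) hf]
  simp only [Pi.mul_apply, gaussianPDF, gaussianPDFReal, Real.coe_toNNReal _ hΔ.le]

lemma lintegral_observation [IsProbabilityMeasure PA] (hΔ : 0 < Δ)
    (hφ : Measurable fun p : ℝ × (Fin kA → ℝ) => φ p.1 p.2) (s : ℝ) {f : ℝ → ℝ≥0∞}
    (hf : Measurable f) :
    ∫⁻ e, f (φ s e.1 + √Δ * e.2) ∂(PA.prod stdG)
      = ∫⁻ y, f y * ENNReal.ofReal (Pout Δ PA φ y s) := by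
  have hφs : Measurable (φ s) := hφ.comp measurable_prodMk_left
  rw [lintegral_prod _ (by fun_prop)]
  simp only [lintegral_add_sqrt_mul hΔ _ hf]
  rw [lintegral_lintegral_swap (by fun_prop)]
  refine lintegral_congr fun y => ?_
  rw [lintegral_mul_const _ (by fun_prop), mul_comm, Pout, ← integral_const_mul,
    ofReal_integral_eq_lintegral_ofReal ((integrable_exp_neg_sq_div hΔ hφ y s).const_mul _)
      (.of_forall fun a => by positivity)]

/-- The channel with output `φ(s, a) + √Δ z` at input `s`, for `a` of law `PA` and a standard
Gaussian `z`. -/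
def gaussianChannel (PA : Measure (Fin kA → ℝ)) [IsProbabilityMeasure PA] (hΔ : 0 < Δ)
    (hφ : Measurable fun p : ℝ × (Fin kA → ℝ) => φ p.1 p.2) (hφc : ∀ a, Continuous fun x => φ x a)
    (hB : ∀ x a, |φ x a| ≤ B) : Channel ((Fin kA → ℝ) × ℝ) where
  noise := PA.prod stdG
  out s e := φ s e.1 + √Δ * e.2
  dens := Pout Δ PA φ
  logSup := log (√(2 * π * Δ))⁻¹
  envelope e := |log (√(2 * π * Δ))⁻¹| + 4 * B ^ 2 / Δ + e.2 ^ 2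
  isProbabilityMeasure_noise := inferInstance
  measurable_out := (hφ.comp (measurable_fst.prodMk measurable_snd.fst)).add
    (measurable_snd.snd.const_mul _)
  continuous_out e := (hφc e.1).add continuous_const
  continuous_dens := continuous_Pout hΔ hφ hφc
  dens_pos := Pout_pos hΔ hφ
  lintegral_out := lintegral_observation hΔ hφ
  dens_le y s := (Pout_le hΔ hφ y s).trans_eq (exp_log (by positivity)).symm
  exp_neg_envelope_le s e x := by
    refine le_trans ?_ (le_Pout_add_sqrt_mul hΔ hφ hB s e.1 e.2 x)
    rw [add_assoc, neg_add, exp_add]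
    gcongr
    refine (exp_le_exp.2 (neg_abs_le _)).trans_eq (exp_log (by positivity))
  logSup_le_envelope e := by
    linarith [le_abs_self (log (√(2 * π * Δ))⁻¹), sq_nonneg e.2,
      show 0 ≤ 4 * B ^ 2 / Δ by positivity]
  memLp_envelope := memLp_two_const_add_sq_snd PA _

end GaussianNoise

section IteratedIntegrals

variable {α β γ δ : Type*} [MeasurableSpace α] [MeasurableSpace β] [MeasurableSpace γ]
  [MeasurableSpace δ] {μ : Measure α} {ν : Measure β} {κ : Measure γ} {η : Measure δ}
  [SFinite μ] [SFinite ν] [SFinite κ] [SFinite η]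

lemma integral_prod_prod_right {f : α × β × γ → ℝ} (hf : Integrable f (μ.prod (ν.prod κ))) :
    ∫ p, f p ∂(μ.prod (ν.prod κ)) = ∫ a, ∫ b, ∫ c, f (a, b, c) ∂κ ∂ν ∂μ := by
  rw [integral_prod _ hf]
  exact integral_congr_ae (hf.prod_right_ae.mono fun a ha => integral_prod _ ha)

lemma integral_prod_prod_prod {f : (α × β) × γ × δ → ℝ}
    (hf : Integrable f ((μ.prod ν).prod (κ.prod η))) :
    ∫ p, f p ∂((μ.prod ν).prod (κ.prod η))
      = ∫ a, ∫ b, ∫ c, ∫ d, f ((a, b), c, d) ∂η ∂κ ∂ν ∂μ := by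
  rw [integral_prod_prod_right hf]
  exact integral_prod _ (hf.integral_prod_left.congr
    (hf.prod_right_ae.mono fun p hp => integral_prod _ hp))

lemma measurePreserving_zip {ι : Type*} [Fintype ι] (P : Measure α) (Q : Measure β) (R : Measure γ)
    [SigmaFinite P] [SigmaFinite Q] [SigmaFinite R] :
    MeasurePreserving
      (fun (p : (ι → α) × (ι → β) × (ι → γ)) i => (p.1 i, p.2.1 i, p.2.2 i))
      ((Measure.pi fun _ => P).prod ((Measure.pi fun _ => Q).prod (Measure.pi fun _ => R)))
      (Measure.pi fun _ => P.prod (Q.prod R)) :=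
  have zip_right :=
    (measurePreserving_arrowProdEquivProdArrow β γ ι (fun _ => Q) (fun _ => R)).symm
  have zip_left :=
    (measurePreserving_arrowProdEquivProdArrow α (β × γ) ι (fun _ => P) fun _ => Q.prod R).symm
  zip_left.comp ((MeasurePreserving.id (Measure.pi fun _ : ι => P)).prod zip_right)

lemma integral_pi_prod_prod {ι : Type*} [Fintype ι] {P : Measure α} {Q : Measure β} {R : Measure γ}
    [SigmaFinite P] [SigmaFinite Q] [SigmaFinite R] {f : (ι → α × β × γ) → ℝ}
    (hf : Integrable f (Measure.pi fun _ => P.prod (Q.prod R))) :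
    ∫ ω, f ω ∂(Measure.pi fun _ => P.prod (Q.prod R))
      = ∫ a, ∫ b, ∫ c, f (fun i => (a i, b i, c i)) ∂(Measure.pi fun _ => R)
          ∂(Measure.pi fun _ => Q) ∂(Measure.pi fun _ => P) := by
  have zip := measurePreserving_zip (ι := ι) P Q R
  refine .trans ?_ (integral_prod_prod_right (zip.integrable_comp_of_integrable hf))
  rw [← zip.map_eq] at hf ⊢
  exact integral_map zip.aemeasurable hf.1

end IteratedIntegrals

section GaussianChannel

variable {Δ B : ℝ} {kA : ℕ} (PA : Measure (Fin kA → ℝ)) [IsProbabilityMeasure PA]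
  {φ : ℝ → (Fin kA → ℝ) → ℝ} (hΔ : 0 < Δ) (hφ : Measurable fun p : ℝ × (Fin kA → ℝ) => φ p.1 p.2)
  (hφc : ∀ a, Continuous fun x => φ x a) (hB : ∀ x a, |φ x a| ≤ B)

lemma expLog_gaussianChannel (q τ τ' : ℝ) :
    (gaussianChannel PA hΔ hφ hφc hB).expLog q τ τ'
      = ∫ v, ∫ w, ∫ a, ∫ z, log (∫ w', Pout Δ PA φ (φ (√q * v + √τ * w) a + √Δ * z)
          (√q * v + √τ' * w') ∂stdG) ∂stdG ∂PA ∂stdG ∂stdG :=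
  integral_prod_prod_prod ((gaussianChannel PA hΔ hφ hφc hB).integrable_log_smoothDens_out
    (P := stdG.prod stdG) (V := fun p => √q * p.1 + √τ * p.2) (U := fun p => √q * p.1)
    (by fun_prop) (by fun_prop) τ')

lemma IPout_eq_info (q S : ℝ) :
    IPout Δ PA φ q S = (gaussianChannel PA hΔ hφ hφc hB).info S q (S - q) := by
  simp only [IPout, Channel.info, expLog_gaussianChannel, sqrt_zero, zero_mul, add_zero,
    integral_const, probReal_univ, one_smul]

variable {n m : ℕ} {ρ : ℝ} {P0 : Measure ℝ}

lemma linOn_univ_scaled (k : ℝ) (x r : Fin n → ℝ) :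
    linOn Finset.univ (scaled k x) r = (∑ i, r i * x i) / √k := by
  rw [linOn, Finset.sum_div]
  exact Finset.sum_congr rfl fun i _ => by rw [scaled]; ring

lemma sysDens_scaled_eq_pCond (k : ℝ) (Φ : Fin m → Fin n → ℝ) (x : Fin n → ℝ) (y : Fin m → ℝ) :
    (gaussianChannel PA hΔ hφ hφc hB).sysDens Finset.univ (scaled k x) 0 (fun μ => (Φ μ, y μ))
      = pCond Δ PA φ n m k Φ x y := by
  simp only [Channel.sysDens, Channel.rowDens, Channel.smoothDens_zero, linOn_univ_scaled]
  rfl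

lemma margDens_signalLaw_eq_pMarg (Φ : Fin m → Fin n → ℝ) (y : Fin m → ℝ) :
    (gaussianChannel PA hΔ hφ hφc hB).margDens (signalLaw ρ P0 n) (fun μ => (Φ μ, y μ))
      = pMarg Δ PA φ n m (sparsePrior ρ P0) (n * ρ) Φ y := by
  have meas : Measurable fun c : Fin n → ℝ =>
      (gaussianChannel PA hΔ hφ hφc hB).sysDens Finset.univ c 0 (fun μ => (Φ μ, y μ)) :=
    Channel.measurable_sysDens _ _ _ measurable_id measurable_const
  rw [Channel.margDens, signalLaw,
    integral_map (measurable_scaled _).aemeasurable meas.aestronglyMeasurable]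
  simp only [sysDens_scaled_eq_pCond]
  rfl

lemma sysObs_scaled_eq_Yobs (k : ℝ) (x : Fin n → ℝ) (Φ : Fin m → Fin n → ℝ)
    (a : Fin m → Fin kA → ℝ) (z : Fin m → ℝ) :
    (gaussianChannel PA hΔ hφ hφc hB).sysObs (scaled k x) (fun μ => (Φ μ, a μ, z μ))
      = fun μ => (Φ μ, Yobs Δ φ n m k Φ x a z μ) := by
  funext μ
  rw [Yobs, ← linOn_univ_scaled]
  rfl

lemma MI_eq_mutualInfo [IsProbabilityMeasure P0] (hρ : ρ ∈ Set.Icc (0 : ℝ) 1) (n m : ℕ) :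
    MI Δ PA φ P0 ρ n m
      = (gaussianChannel PA hΔ hφ hφc hB).mutualInfo (signalLaw ρ P0 n) m := by
  set W := gaussianChannel PA hΔ hφ hφc hB
  have := isProbabilityMeasure_sparsePrior (P0 := P0) hρ
  have := isProbabilityMeasure_signalLaw (P0 := P0) hρ n
  refine .trans ?_ (W.mutualInfo_map (measurable_scaled (n * ρ)) m).symm
  refine integral_congr_ae (.of_forall fun x => ?_)
  refine .trans ?_ (integral_pi_prod_prod
    (W.integrable_log_sysDens_div_margDens (signalLaw ρ P0 n) (scaled (n * ρ) x))).symm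
  simp only [W, sysObs_scaled_eq_Yobs, sysDens_scaled_eq_pCond, margDens_signalLaw_eq_pMarg]
  rfl

lemma levelCost_gaussianChannel {K : ℕ} (γ : ℝ) (v : Fin K → ℝ) (j : Fin (K + 1)) :
    (gaussianChannel PA hΔ hφ hφc hB).levelCost γ P0 (levelSet v j)
      = if h : (j : ℕ) < K then
          IPout Δ PA φ (truncSMge P0 (v ⟨j, h⟩)) (secondMoment P0) + tailProb P0 (v ⟨j, h⟩) / γ
        else IPout Δ PA φ 0 (secondMoment P0) := by
  rw [Channel.levelCost, ← integral_indicator (measurableSet_levelSet v j),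
    ← IPout_eq_info PA hΔ hφ hφc hB]
  split_ifs with h
  · have : levelSet v j = {t | v ⟨j, h⟩ ≤ |t|} := levelSet_castSucc v ⟨j, h⟩
    simp only [this, truncSMge, Set.indicator_apply, Set.mem_ofPred_eq]
    rfl
  · have : j = Fin.last K := Fin.ext (by simp; omega)
    simp [this, levelSet_last, secondMoment]

end GaussianChannel

section SparsityRates

open Filter Topology

variable {ρ : ℕ → ℝ} {lam c : ℝ}

lemma tendsto_zero_of_le_rpow (hlam : 0 < lam) (h0 : ∀ n, 0 ≤ ρ n)
    (h : ∀ n : ℕ, 1 ≤ n → ρ n ≤ c * (n : ℝ) ^ (-lam)) : Tendsto ρ atTop (𝓝 0) := by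
  have rpow_tendsto : Tendsto (fun n : ℕ => c * (n : ℝ) ^ (-lam)) atTop (𝓝 0) := by
    simpa using ((tendsto_rpow_neg_atTop hlam).comp tendsto_natCast_atTop_atTop).const_mul c
  exact squeeze_zero' (.of_forall h0) ((eventually_ge_atTop 1).mono h) rpow_tendsto

lemma tendsto_natCast_mul_atTop_of_rpow_le (hlam : lam < 1) (hc : 0 < c)
    (h : ∀ n : ℕ, 1 ≤ n → c * (n : ℝ) ^ (-lam) ≤ ρ n) :
    Tendsto (fun n : ℕ => n * ρ n) atTop atTop := by
  have rpow_tendsto : Tendsto (fun n : ℕ => c * (n : ℝ) ^ (1 - lam)) atTop atTop :=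
    ((tendsto_rpow_atTop (sub_pos.2 hlam)).comp tendsto_natCast_atTop_atTop).const_mul_atTop hc
  refine tendsto_atTop_mono' _ ((eventually_ge_atTop 1).mono fun n hn => ?_) rpow_tendsto
  have n_pos : (0 : ℝ) < n := Nat.cast_pos.2 hn
  calc c * (n : ℝ) ^ (1 - lam) = n * (c * (n : ℝ) ^ (-lam)) := by
        rw [sub_eq_add_neg, rpow_add n_pos, rpow_one, mul_left_comm]
    _ ≤ n * ρ n := mul_le_mul_of_nonneg_left (h n hn) n_pos.le

end SparsityRates

theorem limit_MI_discrete_prior_general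
    {Δ : ℝ} (hΔ : 0 < Δ) {kA : ℕ} (PA : Measure (Fin kA → ℝ)) [IsProbabilityMeasure PA]
    {φ : ℝ → (Fin kA → ℝ) → ℝ} (hφ : Measurable fun p : ℝ × (Fin kA → ℝ) => φ p.1 p.2)
    (hφbd : ∃ B, ∀ x a, |φ x a| ≤ B) (hφc : ∀ a, Continuous fun x => φ x a)
    {K : ℕ} {v : Fin K → ℝ} (hv : ∀ j, 0 < v j)
    {P0 : Measure ℝ} [IsProbabilityMeasure P0] (hP0 : ∀ᵐ x ∂P0, |x| ∈ Set.range v)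
    {ρ : ℕ → ℝ} (hρ : ∀ n, ρ n ∈ Set.Ioo (0 : ℝ) 1)
    (hρ0 : Filter.Tendsto ρ Filter.atTop (nhds 0))
    (hk : Filter.Tendsto (fun n => n * ρ n) Filter.atTop Filter.atTop)
    {γ : ℝ} (hγ : 0 < γ) {m : ℕ → ℕ} (hm : ∀ n, (m n : ℝ) = γ * (n * ρ n) * |log (ρ n)|) :
    Filter.Tendsto (fun n => MI Δ PA φ P0 (ρ n) n (m n) / m n) Filter.atTop
      (nhds (⨅ k : Fin (K + 1),
        if h : (k : ℕ) < K then
          IPout Δ PA φ (truncSMge P0 (v ⟨k, h⟩)) (secondMoment P0)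
            + tailProb P0 (v ⟨k, h⟩) / γ
        else IPout Δ PA φ 0 (secondMoment P0))) := by
  obtain ⟨B, hB⟩ := hφbd
  simpa only [levelCost_gaussianChannel,
    ← MI_eq_mutualInfo PA hΔ hφ hφc hB (Set.Ioo_subset_Icc_self (hρ _))] using
    (gaussianChannel PA hΔ hφ hφc hB).tendsto_mutualInfo_div hρ hρ0 hk hγ hm hv hP0

/-- Theorem 2 of the paper: the limit of the mutual information per sample
for a discrete prior with finite support. The minimum runs over k in {1,...,K+1}, the term
k = K+1 (index K below) being I_Pout(0, E X^2). -/
theorem limit_MI_discrete_prior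
    (Δ : ℝ) (hΔ : 0 < Δ)
    (kA : ℕ) (PA : Measure (Fin kA → ℝ)) [IsProbabilityMeasure PA]
    (φ φ' φ'' : ℝ → (Fin kA → ℝ) → ℝ)
    -- (H2)
    (hφmeas : Measurable fun p : ℝ × (Fin kA → ℝ) => φ p.1 p.2)
    (hφbd : ∃ B, ∀ x a, |φ x a| ≤ B)
    (hd1 : ∀ a x, HasDerivAt (fun t => φ t a) (φ' x a) x)
    (hd2 : ∀ a x, HasDerivAt (fun t => φ' t a) (φ'' x a) x)
    (hφ'bd : ∃ B, ∀ x a, |φ' x a| ≤ B)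
    (hφ''bd : ∃ B, ∀ x a, |φ'' x a| ≤ B)
    (hφ'cont : ∀ a, Continuous fun x => φ' x a)
    (hφ''cont : ∀ a, Continuous fun x => φ'' x a)
    -- discrete prior with finite support, 0 < v 0 < ... < v (K-1)
    (K : ℕ) (hK : 0 < K) (v : Fin K → ℝ) (hvpos : 0 < v ⟨0, hK⟩) (hvmono : StrictMono v)
    (P0 : Measure ℝ) [IsProbabilityMeasure P0]
    (hsupp : ∀ᵐ x ∂P0, ∃ k : Fin K, x = v k ∨ x = -(v k))
    -- sparsity and sampling rate
    (lam : ℝ) (hlam0 : 0 < lam) (hlam1 : lam < 1 / 9)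
    (ρ : ℕ → ℝ) (hρ : ∀ n, 0 < ρ n ∧ ρ n < 1)
    (c1 c2 : ℝ) (hc1 : 0 < c1) (hc12 : c1 ≤ c2)
    (hΘ : ∀ n : ℕ, 1 ≤ n →
      c1 * (n : ℝ) ^ (-lam) ≤ ρ n ∧ ρ n ≤ c2 * (n : ℝ) ^ (-lam))
    (γ : ℝ) (hγ : 0 < γ)
    (α : ℕ → ℝ) (hα : ∀ n, α n = γ * ρ n * |Real.log (ρ n)|)
    (m : ℕ → ℕ) (hm : ∀ n, (m n : ℝ) = α n * n) :
    Filter.Tendsto (fun n : ℕ => MI Δ PA φ P0 (ρ n) n (m n) / (m n : ℝ)) Filter.atTop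
      (nhds (⨅ k : Fin (K + 1),
        if h : (k : ℕ) < K then
          IPout Δ PA φ (truncSMge P0 (v ⟨k, h⟩)) (secondMoment P0)
            + tailProb P0 (v ⟨k, h⟩) / γ
        else IPout Δ PA φ 0 (secondMoment P0))) := by
  have v_pos (j : Fin K) : 0 < v j :=
    hvpos.trans_le (hvmono.monotone (Fin.mk_le_of_le_val (Nat.zero_le _)))
  refine limit_MI_discrete_prior_general hΔ PA hφmeas hφbd
    (fun a => continuous_iff_continuousAt.2 fun x => (hd1 a x).continuousAt) v_pos
    (hsupp.mono ?_) hρ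
    (tendsto_zero_of_le_rpow hlam0 (fun n => (hρ n).1.le) fun n hn => (hΘ n hn).2)
    (tendsto_natCast_mul_atTop_of_rpow_le (by linarith) hc1 fun n hn => (hΘ n hn).1) hγ
    fun n => by rw [hm, hα]; ring
  rintro x ⟨j, rfl | rfl⟩ <;> exact ⟨j, by simp [abs_of_pos (v_pos j)]⟩

end GLM
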